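/- Assume condition (Cond1) and additionally that b, ω ∈ W^{1,2}_loc(ℝ). Let u_τ ∈ H with u_τ ≥ 0 and ‖u_τ‖ > 0. Then the unique non-negative strong solution u to problem (Incl) satisfies u ∈ C((τ,∞),H³(0,1)) ∩ C¹((τ,∞),V), d²u/dt² ∈ L²_loc(τ+ε,∞;H) for every ε > 0, and the partial derivatives u_t, u_xx exist in the classical sense and are continuous on (τ,∞)×[0,1]. If moreover b, ω ∈ W^{k+1,2}_loc(ℝ) for some k ∈ ℕ, then u ∈ C^{k+1}((τ,∞),V), u ∈ ⋂_{j=0}^{k} C^j((τ,∞),H^{2(k−j)+3}(0,1)), d^{k+2}u/dt^{k+2} ∈ L²_loc(τ+ε,∞;H) for every ε > 0, and u ∈ C^{k+1}((τ,∞)×[0,1]). -/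

import Mathlib

open MeasureTheory Set

noncomputable section

/-- Lebesgue measure restricted to the spatial interval `(0,1)`. -/
def μ01 : Measure ℝ := volume.restrict (Ioo (0:ℝ) 1)

/-- `H = L²(0,1)`. -/
abbrev Hsp : Type := Lp ℝ 2 μ01

/-- The Heaviside multifunction. -/
def heaviside (s : ℝ) : Set ℝ :=
  if s < 0 then {-1} else if s = 0 then Icc (-1) 1 else {1}

/-- Condition (Cond1). -/
structure Cond1 (b ω : ℝ → ℝ) (b0 b1 ω0 ω1 : ℝ) : Prop where
  contb : Continuous b
  contω : Continuous ω
  b0pos : 0 < b0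
  blb : ∀ t, b0 ≤ b t
  bub : ∀ t, b t ≤ b1
  ω0nonneg : 0 ≤ ω0
  ωlb : ∀ t, ω0 ≤ ω t
  ωub : ∀ t, ω t ≤ ω1

/-- `v ∈ H²(0,1) ∩ H¹₀(0,1)` with (weak) second derivative `w ∈ L²(0,1)`:
`v` has a representative that is continuous on `[0,1]`, vanishes at the boundary,
is differentiable on `(0,1)` and whose derivative is an antiderivative of `w`. -/
def InDomainA (v w : Hsp) : Prop :=
  ∃ vt : ℝ → ℝ, ContinuousOn vt (Icc 0 1) ∧ vt 0 = 0 ∧ vt 1 = 0 ∧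
    (∀ᵐ x ∂μ01, vt x = v x) ∧
    ∃ g : ℝ → ℝ,
      (∀ x ∈ Ioo (0:ℝ) 1, HasDerivAt vt (g x) x) ∧
      ∀ x ∈ Ioo (0:ℝ) 1, ∀ y ∈ Ioo (0:ℝ) 1, g x - g y = ∫ z in y..x, w z

/-- A strong solution of the inclusion on `[τ,∞)`, with explicit data:
`r` is the `L²`-selection, `u'` the time derivative, `uxx` the second spatial derivative. -/
structure IsStrongSolutionWith (b ω : ℝ → ℝ) (τ : ℝ) (u r u' uxx : ℝ → Hsp) : Prop where
  cont : ContinuousOn u (Ici τ)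
  rmem : ∀ T, τ < T → MemLp r 2 (volume.restrict (Ioo τ T))
  sel : ∀ᵐ t ∂(volume.restrict (Ioi τ)), ∀ᵐ x ∂μ01,
      ∃ h ∈ heaviside (u t x), r t x = b t * h + ω t * u t x
  dom : ∀ᵐ t ∂(volume.restrict (Ioi τ)), InDomainA (u t) (uxx t)
  eq : ∀ᵐ t ∂(volume.restrict (Ioi τ)), u' t = r t + uxx t
  fund : ∀ T1 T2 : ℝ, τ < T1 → T1 < T2 →
      IntervalIntegrable u' volume T1 T2 ∧
      ∀ t ∈ Icc T1 T2, u t = u T1 + ∫ s in T1..t, u' s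

/-- A strong solution of the inclusion on `[τ,∞)`. -/
def IsStrongSolution (b ω : ℝ → ℝ) (τ : ℝ) (u : ℝ → Hsp) : Prop :=
  ∃ r u' uxx, IsStrongSolutionWith b ω τ u r u' uxx

/-- The solution is non-negative on `[τ,∞)`. -/
def NonnegOn (u : ℝ → Hsp) (τ : ℝ) : Prop :=
  ∀ t, τ ≤ t → ∀ᵐ x ∂μ01, 0 ≤ u t x

/-- `v` is positive: it has a continuous representative on `[0,1]`
which is strictly positive on `(0,1)`. -/
def IsPositive (v : Hsp) : Prop :=
  ∃ vt : ℝ → ℝ, ContinuousOn vt (Icc 0 1) ∧ (∀ᵐ x ∂μ01, vt x = v x) ∧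
    ∀ x ∈ Ioo (0:ℝ) 1, 0 < vt x


/-- `f'` is the weak derivative of `f : ℝ → E` on the open set `S ⊆ ℝ`. -/
def HasWeakDerivOn {E : Type*} [NormedAddCommGroup E] [NormedSpace ℝ E]
    (f f' : ℝ → E) (S : Set ℝ) : Prop :=
  ∀ φ : ℝ → ℝ, ContDiff ℝ (⊤ : ℕ∞) φ → HasCompactSupport φ → tsupport φ ⊆ S →
    ∫ t in S, deriv φ t • f t = - ∫ t in S, φ t • f' t

/-- `f ∈ W^{k,2}_loc(ℝ)`. -/
def Wkloc (k : ℕ) (f : ℝ → ℝ) : Prop :=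
  ∀ T1 T2 : ℝ, T1 < T2 →
    ∃ D : ℕ → ℝ → ℝ, D 0 = f ∧
      (∀ j < k, HasWeakDerivOn (D j) (D (j + 1)) (Ioo T1 T2)) ∧
      ∀ j ≤ k, MemLp (D j) 2 (volume.restrict (Ioo T1 T2))

/-- `w` is the spatial weak derivative of `v` on `(0,1)`. -/
def IsSpatialWeakDeriv (v w : Hsp) : Prop :=
  ∀ φ : ℝ → ℝ, ContDiff ℝ (⊤ : ℕ∞) φ → HasCompactSupport φ → tsupport φ ⊆ Ioo (0:ℝ) 1 →
    ∫ x in Ioo (0:ℝ) 1, deriv φ x * v x = - ∫ x in Ioo (0:ℝ) 1, φ x * w x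

/-- `v : s → H` is of class `C^m` (in the `L²(0,1)` norm). -/
def TimeCk (m : ℕ) (v : ℝ → Hsp) (s : Set ℝ) : Prop :=
  ∃ Dt : ℕ → ℝ → Hsp, Dt 0 = v ∧
    (∀ j < m, ∀ t ∈ s, HasDerivAt (Dt j) (Dt (j + 1) t) t) ∧
    ∀ j ≤ m, ContinuousOn (Dt j) s

/-- `v : s → V = H¹₀(0,1)` is of class `C^m`: both `v` and its spatial derivative
are `C^m` into `L²(0,1)`. -/
def CkIntoV (m : ℕ) (v : ℝ → Hsp) (s : Set ℝ) : Prop :=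
  TimeCk m v s ∧
  ∃ d1 : ℝ → Hsp, (∀ t ∈ s, IsSpatialWeakDeriv (v t) (d1 t)) ∧ TimeCk m d1 s

/-- `v : s → H^m(0,1)` is of class `C^j`: all spatial weak derivatives up to
order `m` exist and are `C^j` in time into `L²(0,1)`. -/
def CjIntoHm (j m : ℕ) (v : ℝ → Hsp) (s : Set ℝ) : Prop :=
  ∃ Dx : ℕ → ℝ → Hsp, Dx 0 = v ∧
    (∀ i < m, ∀ t ∈ s, IsSpatialWeakDeriv (Dx i t) (Dx (i + 1) t)) ∧
    ∀ i ≤ m, TimeCk j (Dx i) s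

/-- `d^m v/dt^m ∈ L²_loc(τ+ε,∞;H)` for every `ε > 0`. -/
def HasL2locTimeDerivChain (m : ℕ) (v : ℝ → Hsp) (τ : ℝ) : Prop :=
  ∃ Dt : ℕ → ℝ → Hsp, Dt 0 = v ∧
    ∀ ε > (0:ℝ), ∀ T, τ + ε < T →
      (∀ j < m, HasWeakDerivOn (Dt j) (Dt (j + 1)) (Ioo (τ + ε) T)) ∧
      MemLp (Dt m) 2 (volume.restrict (Ioo (τ + ε) T))

/-- The partial derivatives `u_t`, `u_xx` exist in the classical sense
and are continuous on `(τ,∞)×[0,1]`. -/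
def ClassicalUtUxx (τ : ℝ) (u : ℝ → Hsp) : Prop :=
  ∃ F Fx ut uxx : ℝ → ℝ → ℝ,
    (∀ t ∈ Ioi τ, ∀ᵐ x ∂μ01, F t x = u t x) ∧
    (∀ t ∈ Ioi τ, ∀ x ∈ Icc (0:ℝ) 1, HasDerivAt (fun s => F s x) (ut t x) t) ∧
    (∀ t ∈ Ioi τ, ∀ x ∈ Icc (0:ℝ) 1, HasDerivWithinAt (F t) (Fx t x) (Icc 0 1) x) ∧
    (∀ t ∈ Ioi τ, ∀ x ∈ Icc (0:ℝ) 1, HasDerivWithinAt (Fx t) (uxx t x) (Icc 0 1) x) ∧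
    ContinuousOn (fun p : ℝ × ℝ => ut p.1 p.2) (Ioi τ ×ˢ Icc 0 1) ∧
    ContinuousOn (fun p : ℝ × ℝ => uxx p.1 p.2) (Ioi τ ×ˢ Icc 0 1)

/-!
For `t > τ` the solution is positive almost everywhere. Its selection `r` is nonnegative, so `u`
dominates a heat flow started from a nonnegative, nonzero `u t₀` with `t₀ > τ`. That flow is
nonnegative by the minimum principle and real-analytic in `x`, hence vanishes only on a null
set. Therefore `r = b + ω u`, and the Heaviside nonlinearity has become the constant source `b`.

With `e t = exp (∫ ω)`, the function `e⁻¹ u` solves the linear heat equation with the spatially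
constant source `β = e⁻¹ b`. If `c n` are the sine coefficients of the constant function `1`, those
of `e⁻¹ u` satisfy `a n' = -λ n * a n + c n * β`, and each time derivative obeys the same equation
with `β` replaced by its derivative. Energy estimates for the successive time derivatives make their
coefficients decay locally uniformly in `t`, fast enough to sum the sine and cosine series in `H`
and uniformly in `x`; space derivatives from the second on are traded for time derivatives through
the equation.
-/

/-! ### Local Sobolev functions of time -/

section LocallySquareIntegrable

variable {E : Type*} [NormedAddCommGroup E] {S : Set ℝ}

/-- `f ∈ L²_loc(S; E)`, for an order-connected set `S` of times. -/
def MemL2LocOn (f : ℝ → E) (S : Set ℝ) : Prop :=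
  ∀ a ∈ S, ∀ c ∈ S, MemLp f 2 (volume.restrict (Icc a c))

theorem memLp_of_continuousOn_of_isCompact {p : ENNReal} {K : Set ℝ} {f : ℝ → E}
    (hK : IsCompact K) (hf : ContinuousOn f K) : MemLp f p (volume.restrict K) := by
  have : IsFiniteMeasure (volume.restrict K) := ⟨by simpa using hK.measure_lt_top⟩
  obtain ⟨C, hC⟩ := hK.exists_bound_of_continuousOn hf
  exact MemLp.of_bound (hf.aestronglyMeasurable_of_isCompact hK hK.measurableSet) C
    ((ae_restrict_iff' hK.measurableSet).2 (.of_forall hC))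

namespace MemL2LocOn

variable {g : ℝ → E}

theorem of_continuousOn [S.OrdConnected] (hg : ContinuousOn g S) : MemL2LocOn g S :=
  fun _ ha _ hc => memLp_of_continuousOn_of_isCompact isCompact_Icc
    (hg.mono (OrdConnected.out ‹_› ha hc))

theorem intervalIntegrable (hg : MemL2LocOn g S) {a c : ℝ} (ha : a ∈ S) (hc : c ∈ S) :
    IntervalIntegrable g volume a c :=
  ⟨((hg a ha c hc).integrable one_le_two).mono_measure
      (Measure.restrict_mono Ioc_subset_Icc_self le_rfl),
    ((hg c hc a ha).integrable one_le_two).mono_measure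
      (Measure.restrict_mono Ioc_subset_Icc_self le_rfl)⟩

theorem mono {T : Set ℝ} (hg : MemL2LocOn g S) (hT : T ⊆ S) : MemL2LocOn g T :=
  fun a ha c hc => hg a (hT ha) c (hT hc)

end MemL2LocOn

end LocallySquareIntegrable

section Primitives

variable {E : Type*} [NormedAddCommGroup E] [NormedSpace ℝ E]
  {G : Type*} [NormedAddCommGroup G] [NormedSpace ℝ G] {S : Set ℝ}

/-- `f` is a locally absolutely continuous primitive of `f'` on `S`: increments of `f` between
points of `S` are integrals of `f'`. This is the form in which every weak time derivative of the
proof is used. -/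
def IsPrimitiveOn (f f' : ℝ → E) (S : Set ℝ) : Prop :=
  ∀ a ∈ S, ∀ c ∈ S, IntervalIntegrable f' volume a c ∧ f c - f a = ∫ s in a..c, f' s

theorem exists_lt_lt_of_isOpen (hO : IsOpen S) {x : ℝ} (hx : x ∈ S) :
    ∃ a ∈ S, ∃ c ∈ S, a < x ∧ x < c := by
  obtain ⟨l, u, hxlu, hlu⟩ := mem_nhds_iff_exists_Ioo_subset.1 (hO.mem_nhds hx)
  obtain ⟨a, hla, hax⟩ := exists_between hxlu.1
  obtain ⟨c, hxc, hcu⟩ := exists_between hxlu.2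
  exact ⟨a, hlu ⟨hla, hax.trans hxlu.2⟩, c, hlu ⟨hxlu.1.trans hxc, hcu⟩, hax, hxc⟩

theorem exists_subset_Ioo_of_isCompact (hO : IsOpen S) {K : Set ℝ} (hK : IsCompact K)
    (hne : K.Nonempty) (hKS : K ⊆ S) : ∃ a ∈ S, ∃ c ∈ S, K ⊆ Ioo a c := by
  obtain ⟨p, hpK, hp⟩ := hK.exists_isLeast hne
  obtain ⟨q, hqK, hq⟩ := hK.exists_isGreatest hne
  obtain ⟨a, ha, -, -, hap, -⟩ := exists_lt_lt_of_isOpen hO (hKS hpK)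
  obtain ⟨-, -, c, hc, -, hqc⟩ := exists_lt_lt_of_isOpen hO (hKS hqK)
  exact ⟨a, ha, c, hc, fun x hx => ⟨hap.trans_le (hp hx), (hq hx).trans_lt hqc⟩⟩

namespace IsPrimitiveOn

variable {f f' g g' : ℝ → E}

theorem mono {T : Set ℝ} (h : IsPrimitiveOn f f' S) (hT : T ⊆ S) : IsPrimitiveOn f f' T :=
  fun a ha c hc => h a (hT ha) c (hT hc)

theorem eq_add_integral (h : IsPrimitiveOn f f' S) {a t : ℝ} (ha : a ∈ S) (ht : t ∈ S) :
    f t = f a + ∫ s in a..t, f' s := by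
  rw [← (h a ha t ht).2, add_sub_cancel]

theorem continuousOn_uIcc [S.OrdConnected] (h : IsPrimitiveOn f f' S) {a c : ℝ} (ha : a ∈ S)
    (hc : c ∈ S) : ContinuousOn f (uIcc a c) := by
  have hint := intervalIntegral.continuousOn_primitive_interval' (h a ha c hc).1 left_mem_uIcc
  exact (hint.const_add (f a)).congr fun x hx =>
    h.eq_add_integral ha (OrdConnected.uIcc_subset ‹_› ha hc hx)

theorem continuousOn [S.OrdConnected] (h : IsPrimitiveOn f f' S) (hO : IsOpen S) :
    ContinuousOn f S := by
  intro x hx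
  obtain ⟨a, ha, c, hc, hax, hxc⟩ := exists_lt_lt_of_isOpen hO hx
  have hcont := h.continuousOn_uIcc ha hc
  rw [uIcc_of_le (hax.trans hxc).le] at hcont
  exact (hcont.continuousAt (Icc_mem_nhds hax hxc)).continuousWithinAt

theorem add (hf : IsPrimitiveOn f f' S) (hg : IsPrimitiveOn g g' S) :
    IsPrimitiveOn (fun t => f t + g t) (fun t => f' t + g' t) S := fun a ha c hc => by
  obtain ⟨if', ef⟩ := hf a ha c hc
  obtain ⟨ig', eg⟩ := hg a ha c hc
  exact ⟨if'.add ig', by rw [intervalIntegral.integral_add if' ig', ← ef, ← eg, add_sub_add_comm]⟩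

theorem continuousLinearMap_comp [CompleteSpace E] [CompleteSpace G] (h : IsPrimitiveOn f f' S)
    (L : E →L[ℝ] G) : IsPrimitiveOn (fun t => L (f t)) (fun t => L (f' t)) S := fun a ha c hc => by
  obtain ⟨if', ef⟩ := h a ha c hc
  refine ⟨⟨L.integrable_comp if'.1, L.integrable_comp if'.2⟩, ?_⟩
  rw [L.intervalIntegral_comp_comm if', ← ef, map_sub]

theorem congr_ae [S.OrdConnected] (h : IsPrimitiveOn f f' S) (hg : ∀ᵐ t, t ∈ S → f' t = g' t) :
    IsPrimitiveOn f g' S := fun a ha c hc => by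
  obtain ⟨if', ef⟩ := h a ha c hc
  have heq : ∀ᵐ t, t ∈ uIoc a c → f' t = g' t := by
    filter_upwards [hg] with t ht htac
    exact ht (OrdConnected.uIcc_subset ‹_› ha hc (uIoc_subset_uIcc htac))
  exact ⟨if'.congr_ae ((ae_restrict_iff' measurableSet_uIoc).2 heq),
    ef.trans (intervalIntegral.integral_congr_ae heq)⟩

theorem congr_left (h : IsPrimitiveOn f f' S) (hg : ∀ t ∈ S, f t = g t) :
    IsPrimitiveOn g f' S := fun a ha c hc => by
  rw [← hg a ha, ← hg c hc]; exact h a ha c hc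

theorem of_hasDerivAt [CompleteSpace E] [S.OrdConnected] (h : ∀ t ∈ S, HasDerivAt f (f' t) t)
    (hf' : ContinuousOn f' S) : IsPrimitiveOn f f' S := fun a ha c hc => by
  have hsub := OrdConnected.uIcc_subset ‹_› ha hc
  have hint : IntervalIntegrable f' volume a c := (hf'.mono hsub).intervalIntegrable
  exact ⟨hint, (intervalIntegral.integral_eq_sub_of_hasDerivAt
    (fun x hx => h x (hsub hx)) hint).symm⟩

theorem hasDerivAt [CompleteSpace E] (h : IsPrimitiveOn f f' S) (hO : IsOpen S)
    (hf' : ContinuousOn f' S) {t : ℝ} (ht : t ∈ S) : HasDerivAt f (f' t) t := by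
  have hint : HasDerivAt (fun x => ∫ s in t..x, f' s) (f' t) t :=
    intervalIntegral.integral_hasDerivAt_right IntervalIntegrable.refl
      (hf'.stronglyMeasurableAtFilter hO t ht) (hf'.continuousAt (hO.mem_nhds ht))
  refine (hint.const_add (f t)).congr_of_eventuallyEq ?_
  filter_upwards [hO.mem_nhds ht] with x hx using h.eq_add_integral ht hx

theorem ae_hasDerivAt_of_mem_Ioo [CompleteSpace E] [S.OrdConnected] (h : IsPrimitiveOn f f' S)
    {a c : ℝ} (ha : a ∈ S) (hc : c ∈ S) : ∀ᵐ t, t ∈ Ioo a c → HasDerivAt f (f' t) t := by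
  filter_upwards [(h a ha c hc).1.ae_hasDerivAt_integral] with t ht htac
  have hmem : t ∈ uIcc a c := Icc_subset_uIcc (Ioo_subset_Icc_self htac)
  refine ((ht hmem a left_mem_uIcc).const_add (f a)).congr_of_eventuallyEq ?_
  filter_upwards [Ioo_mem_nhds htac.1 htac.2] with x hx
  exact h.eq_add_integral ha (OrdConnected.out ‹_› ha hc (Ioo_subset_Icc_self hx))

theorem ae_hasDerivAt [CompleteSpace E] [S.OrdConnected] (h : IsPrimitiveOn f f' S)
    (hO : IsOpen S) : ∀ᵐ t, t ∈ S → HasDerivAt f (f' t) t := by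
  refine measure_null_of_locally_null _ fun t ht => ?_
  have htS : t ∈ S := (Classical.not_imp.1 ht).1
  obtain ⟨a, ha, c, hc, hat, htc⟩ := exists_lt_lt_of_isOpen hO htS
  refine ⟨{x | ¬(x ∈ S → HasDerivAt f (f' x) x)} ∩ Ioo a c,
    inter_mem_nhdsWithin _ (Ioo_mem_nhds hat htc), ?_⟩
  refine measure_mono_null ?_ (h.ae_hasDerivAt_of_mem_Ioo ha hc)
  exact fun x hx hd => hx.1 fun _ => hd hx.2

theorem ae_uIoc_deriv_eq [CompleteSpace E] [S.OrdConnected] (h : IsPrimitiveOn f f' S)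
    {a c : ℝ} (ha : a ∈ S) (hc : c ∈ S) : ∀ᵐ t, t ∈ uIoc a c → deriv f t = f' t := by
  wlog hac : a ≤ c generalizing a c
  · simpa only [uIoc_comm a c] using this hc ha (le_of_not_ge hac)
  filter_upwards [h.ae_hasDerivAt_of_mem_Ioo ha hc, compl_mem_ae_iff.2 (measure_singleton c)]
    with t ht htc htac
  rw [uIoc_of_le hac] at htac
  exact (ht ⟨htac.1, lt_of_le_of_ne htac.2 htc⟩).deriv

theorem absolutelyContinuousOnInterval [S.OrdConnected] {f f' : ℝ → ℝ} (h : IsPrimitiveOn f f' S)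
    {a c : ℝ} (ha : a ∈ S) (hc : c ∈ S) : AbsolutelyContinuousOnInterval f a c := by
  have hac := (h a ha c hc).1.absolutelyContinuousOnInterval_intervalIntegral left_mem_uIcc
  rw [absolutelyContinuousOnInterval_iff] at hac ⊢
  intro ε hε
  obtain ⟨δ, hδ, hI⟩ := hac ε hε
  refine ⟨δ, hδ, fun I hImem hIδ => ?_⟩
  convert hI I hImem hIδ using 2 with i hi
  have hmem := hImem.1 i hi
  have hsub := OrdConnected.uIcc_subset ‹_› ha hc
  rw [h.eq_add_integral ha (hsub hmem.1), h.eq_add_integral ha (hsub hmem.2), dist_add_left]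

theorem mul [S.OrdConnected] {f f' g g' : ℝ → ℝ} (hf : IsPrimitiveOn f f' S)
    (hg : IsPrimitiveOn g g' S) :
    IsPrimitiveOn (fun t => f t * g t) (fun t => f' t * g t + f t * g' t) S := fun a ha c hc => by
  refine ⟨((hf a ha c hc).1.mul_continuousOn (hg.continuousOn_uIcc ha hc)).add
    ((hg a ha c hc).1.continuousOn_mul (hf.continuousOn_uIcc ha hc)), ?_⟩
  rw [← (hf.absolutelyContinuousOnInterval ha hc).integral_deriv_mul_eq_sub
    (hg.absolutelyContinuousOnInterval ha hc)]
  refine intervalIntegral.integral_congr_ae ?_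
  filter_upwards [hf.ae_uIoc_deriv_eq ha hc, hg.ae_uIoc_deriv_eq ha hc] with t htf htg ht
  rw [htf ht, htg ht]

theorem smul [CompleteSpace E] [S.OrdConnected] {f f' : ℝ → ℝ} (hf : IsPrimitiveOn f f' S)
    (hg : IsPrimitiveOn g g' S) :
    IsPrimitiveOn (fun t => f t • g t) (fun t => f' t • g t + f t • g' t) S := fun a ha c hc => by
  have hint : IntervalIntegrable (fun t => f' t • g t + f t • g' t) volume a c :=
    ((hf a ha c hc).1.smul_continuousOn (hg.continuousOn_uIcc ha hc)).add
      ((hg a ha c hc).1.continuousOn_smul (hf.continuousOn_uIcc ha hc))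
  refine ⟨hint, (SeparatingDual.eq_iff_forall_dual_eq (R := ℝ)).2 fun L => ?_⟩
  rw [← L.intervalIntegral_comp_comm hint]
  simpa using ((hf.mul (hg.continuousLinearMap_comp L)) a ha c hc).2

theorem const_mul {f f' : ℝ → ℝ} (h : IsPrimitiveOn f f' S) (r : ℝ) :
    IsPrimitiveOn (fun t => r * f t) (fun t => r * f' t) S :=
  h.continuousLinearMap_comp (r • ContinuousLinearMap.id ℝ ℝ)

theorem hasWeakDerivOn [CompleteSpace E] [S.OrdConnected] (h : IsPrimitiveOn f f' S)
    (hO : IsOpen S) : HasWeakDerivOn f f' S := by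
  intro φ hφ hcompact hsub
  rcases (tsupport φ).eq_empty_or_nonempty with hempty | hne
  · simp [tsupport_eq_empty_iff.1 hempty]
  obtain ⟨a, ha, c, hc, hac⟩ := exists_subset_Ioo_of_isCompact hO hcompact hne hsub
  have hφ' : Continuous (deriv φ) := hφ.continuous_deriv (by simp)
  have hprim : IsPrimitiveOn φ (deriv φ) S := .of_hasDerivAt
    (fun t _ => (hφ.differentiable (by simp)).differentiableAt.hasDerivAt) hφ'.continuousOn
  have integral_eq {ψ : ℝ → ℝ} (w : ℝ → E) (hψ : tsupport ψ ⊆ tsupport φ) :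
      ∫ t in S, ψ t • w t = ∫ t in a..c, ψ t • w t := by
    have hzero (t : ℝ) (ht : t ∉ tsupport φ) : ψ t • w t = 0 := by
      rw [image_eq_zero_of_notMem_tsupport fun h => ht (hψ h), zero_smul]
    rw [setIntegral_eq_integral_of_forall_compl_eq_zero fun t ht => hzero t fun h => ht (hsub h),
      intervalIntegral.integral_eq_integral_of_support_subset]
    exact fun t ht => Ioo_subset_Ioc_self (hac (not_imp_comm.1 (hzero t) ht))
  have hφa : φ a = 0 := image_eq_zero_of_notMem_tsupport fun h => (hac h).1.false
  have hφc : φ c = 0 := image_eq_zero_of_notMem_tsupport fun h => (hac h).2.false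
  have hbdry := (hprim.smul h a ha c hc).2
  beta_reduce at hbdry
  have hint : IntervalIntegrable (fun t => deriv φ t • f t) volume a c :=
    (hφ'.continuousOn.smul (h.continuousOn_uIcc ha hc)).intervalIntegrable
  rw [hφa, hφc, zero_smul, zero_smul, sub_zero, intervalIntegral.integral_add hint
    ((h a ha c hc).1.continuousOn_smul hφ.continuous.continuousOn)] at hbdry
  rw [integral_eq f (tsupport_deriv_subset), integral_eq f' subset_rfl]
  exact eq_neg_of_add_eq_zero_left hbdry.symm

end IsPrimitiveOn

namespace MemL2LocOn

variable {f : ℝ → ℝ} {g : ℝ → E}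

theorem continuousOn_smul [S.OrdConnected] (hg : MemL2LocOn g S) (hf : ContinuousOn f S) :
    MemL2LocOn (fun t => f t • g t) S := fun a ha c hc =>
  (hg a ha c hc).smul (memLp_of_continuousOn_of_isCompact (p := ⊤) isCompact_Icc
    (hf.mono (OrdConnected.out ‹_› ha hc)))

theorem smul_continuousOn [S.OrdConnected] (hf : MemL2LocOn f S) (hg : ContinuousOn g S) :
    MemL2LocOn (fun t => f t • g t) S := fun a ha c hc =>
  (memLp_of_continuousOn_of_isCompact (p := ⊤) isCompact_Icc
    (hg.mono (OrdConnected.out ‹_› ha hc))).smul (hf a ha c hc)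

end MemL2LocOn

/-- `f ∈ W^{m,2}_loc(S; E)`, for an order-connected set `S` of times: `f` is an `m`-fold iterated
primitive of an `L²_loc` function. -/
def MemSobolevLocOn : ℕ → (ℝ → E) → Set ℝ → Prop
  | 0, f, S => MemL2LocOn f S
  | m + 1, f, S => ∃ f', MemSobolevLocOn m f' S ∧ IsPrimitiveOn f f' S

namespace MemSobolevLocOn

variable {m n : ℕ} {f g : ℝ → E}

theorem continuousOn [S.OrdConnected] (h : MemSobolevLocOn (m + 1) f S) (hO : IsOpen S) :
    ContinuousOn f S :=
  h.elim fun _ h => h.2.continuousOn hO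

theorem of_succ [S.OrdConnected] (h : MemSobolevLocOn (m + 1) f S) (hO : IsOpen S) :
    MemSobolevLocOn m f S := by
  induction m generalizing f with
  | zero => exact MemL2LocOn.of_continuousOn (h.continuousOn hO)
  | succ m ih =>
    obtain ⟨f', hf', hprim⟩ := h
    exact ⟨f', ih hf', hprim⟩

theorem of_le [S.OrdConnected] (h : MemSobolevLocOn n f S) (hO : IsOpen S) (hmn : m ≤ n) :
    MemSobolevLocOn m f S := by
  induction hmn with
  | refl => exact h
  | step _ ih => exact ih (h.of_succ hO)

theorem mono {T : Set ℝ} (h : MemSobolevLocOn m f S) (hT : T ⊆ S) : MemSobolevLocOn m f T := by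
  induction m generalizing f with
  | zero => exact MemL2LocOn.mono h hT
  | succ m ih =>
    obtain ⟨f', hf', hprim⟩ := h
    exact ⟨f', ih hf', hprim.mono hT⟩

theorem congr (h : MemSobolevLocOn (m + 1) f S) (hfg : ∀ t ∈ S, f t = g t) :
    MemSobolevLocOn (m + 1) g S := by
  obtain ⟨f', hf', hprim⟩ := h
  exact ⟨f', hf', hprim.congr_left hfg⟩

theorem contDiffOn [CompleteSpace E] [S.OrdConnected] (h : MemSobolevLocOn (m + 1) f S)
    (hO : IsOpen S) : ContDiffOn ℝ m f S := by
  induction m generalizing f with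
  | zero => simpa using h.continuousOn hO
  | succ m ih =>
    obtain ⟨f', hf', hprim⟩ := h
    have hderiv (t) (ht : t ∈ S) : HasDerivAt f (f' t) t :=
      hprim.hasDerivAt hO (hf'.continuousOn hO) ht
    rw [Nat.cast_succ, contDiffOn_succ_iff_deriv_of_isOpen hO]
    exact ⟨fun t ht => (hderiv t ht).differentiableAt.differentiableWithinAt, by simp,
      (ih hf').congr fun t ht => (hderiv t ht).deriv⟩

theorem add (hf : MemSobolevLocOn m f S) (hg : MemSobolevLocOn m g S) :
    MemSobolevLocOn m (fun t => f t + g t) S := by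
  induction m generalizing f g with
  | zero => exact fun a ha c hc => (hf a ha c hc).add (hg a ha c hc)
  | succ m ih =>
    obtain ⟨f', hf', hfprim⟩ := hf
    obtain ⟨g', hg', hgprim⟩ := hg
    exact ⟨_, ih hf' hg', hfprim.add hgprim⟩

theorem continuousLinearMap_comp [CompleteSpace E] [CompleteSpace G] (h : MemSobolevLocOn m f S)
    (L : E →L[ℝ] G) : MemSobolevLocOn m (fun t => L (f t)) S := by
  induction m generalizing f with
  | zero => exact fun a ha c hc => L.comp_memLp' (h a ha c hc)
  | succ m ih =>
    obtain ⟨f', hf', hprim⟩ := h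
    exact ⟨_, ih hf', hprim.continuousLinearMap_comp L⟩

theorem smul_and_smul_of_succ [CompleteSpace E] [S.OrdConnected] (hO : IsOpen S) {f : ℝ → ℝ} :
    (MemSobolevLocOn (m + 1) f S → MemSobolevLocOn m g S →
      MemSobolevLocOn m (fun t => f t • g t) S) ∧
    (MemSobolevLocOn m f S → MemSobolevLocOn (m + 1) g S →
      MemSobolevLocOn m (fun t => f t • g t) S) := by
  induction m generalizing f g with
  | zero => exact ⟨fun hf hg => MemL2LocOn.continuousOn_smul hg (hf.continuousOn hO),
      fun hf hg => MemL2LocOn.smul_continuousOn hf (hg.continuousOn hO)⟩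
  | succ m ih =>
    have smul_succ (hf : MemSobolevLocOn (m + 1) f S) (hg : MemSobolevLocOn (m + 1) g S) :
        MemSobolevLocOn (m + 1) (fun t => f t • g t) S := by
      obtain ⟨f', hf', hfprim⟩ := id hf
      obtain ⟨g', hg', hgprim⟩ := id hg
      exact ⟨_, (ih.2 hf' hg).add (ih.1 hf hg'), hfprim.smul hgprim⟩
    exact ⟨fun hf hg => smul_succ (hf.of_succ hO) hg, fun hf hg => smul_succ hf (hg.of_succ hO)⟩

theorem smul [CompleteSpace E] [S.OrdConnected] (hO : IsOpen S) {f : ℝ → ℝ}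
    (hf : MemSobolevLocOn (m + 1) f S) (hg : MemSobolevLocOn (m + 1) g S) :
    MemSobolevLocOn (m + 1) (fun t => f t • g t) S := by
  obtain ⟨f', hf', hfprim⟩ := id hf
  obtain ⟨g', hg', hgprim⟩ := id hg
  exact ⟨_, ((smul_and_smul_of_succ hO).2 hf' hg).add ((smul_and_smul_of_succ hO).1 hf hg'),
    hfprim.smul hgprim⟩

theorem of_hasDerivAt_mul_self [S.OrdConnected] (hO : IsOpen S) {w e : ℝ → ℝ}
    (hw : MemSobolevLocOn (m + 1) w S) (he : ∀ t ∈ S, HasDerivAt e (w t * e t) t) :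
    MemSobolevLocOn (m + 2) e S := by
  have hcont : ContinuousOn (fun t => w t * e t) S :=
    (hw.continuousOn hO).mul fun t ht => (he t ht).continuousAt.continuousWithinAt
  have hprim : IsPrimitiveOn e (fun t => w t * e t) S := .of_hasDerivAt he hcont
  have bootstrap (j : ℕ) (hj : j ≤ m + 1) : MemSobolevLocOn (j + 1) e S := by
    induction j with
    | zero => exact ⟨_, MemL2LocOn.of_continuousOn hcont, hprim⟩
    | succ j ih => exact ⟨_, (hw.of_le hO hj).smul hO (ih (by omega)), hprim⟩
  exact bootstrap (m + 1) le_rfl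

theorem exists_chain (h : MemSobolevLocOn m f S) :
    ∃ D : ℕ → ℝ → E, D 0 = f ∧ (∀ j < m, IsPrimitiveOn (D j) (D (j + 1)) S) ∧
      MemL2LocOn (D m) S := by
  induction m generalizing f with
  | zero => exact ⟨fun _ => f, rfl, by simp, h⟩
  | succ m ih =>
    obtain ⟨f', hf', hprim⟩ := h
    obtain ⟨D, rfl, hD, hDmem⟩ := ih hf'
    refine ⟨fun j => Nat.casesOn j f D, rfl, fun j hj => ?_, hDmem⟩
    cases j with
    | zero => exact hprim
    | succ j => exact hD j (by omega)

theorem of_chain {D : ℕ → ℝ → E} (hD : ∀ j < m, IsPrimitiveOn (D j) (D (j + 1)) S)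
    (hm : MemL2LocOn (D m) S) : MemSobolevLocOn m (D 0) S := by
  induction m generalizing D with
  | zero => exact hm
  | succ m ih => exact ⟨D 1, ih (D := fun j => D (j + 1)) (fun j hj => hD (j + 1) (by omega)) hm,
      hD 0 m.succ_pos⟩

theorem hasL2locTimeDerivChain {v : ℝ → Hsp} {τ : ℝ} (h : MemSobolevLocOn m v (Ioi τ)) :
    HasL2locTimeDerivChain m v τ := by
  obtain ⟨D, hD0, hD, hDmem⟩ := h.exists_chain
  refine ⟨D, hD0, fun ε hε T hT => ⟨fun j hj => ?_, ?_⟩⟩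
  · exact ((hD j hj).mono fun t ht => (lt_add_of_pos_right τ hε).trans ht.1).hasWeakDerivOn
      isOpen_Ioo
  · have hτε : τ < τ + ε := lt_add_of_pos_right τ hε
    exact (hDmem (τ + ε) hτε T (hτε.trans hT)).mono_measure
      (Measure.restrict_mono Ioo_subset_Icc_self le_rfl)

end MemSobolevLocOn

theorem timeCk_of_contDiffOn {m : ℕ} {v : ℝ → Hsp} (hO : IsOpen S) (h : ContDiffOn ℝ m v S) :
    TimeCk m v S := by
  have hcongr (j : ℕ) : EqOn (iteratedDeriv j v) (iteratedDerivWithin j v S) S :=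
    fun t ht => (iteratedDerivWithin_of_isOpen hO ht).symm
  refine ⟨fun j => iteratedDeriv j v, iteratedDeriv_zero, fun j hj t ht => ?_, fun j hj => ?_⟩
  · have hdiff := (h.differentiableOn_iteratedDerivWithin (m := j) (by exact_mod_cast hj)
      hO.uniqueDiffOn).congr (hcongr j)
    simpa only [iteratedDeriv_succ] using (hdiff.differentiableAt (hO.mem_nhds ht)).hasDerivAt
  · exact (h.continuousOn_iteratedDerivWithin (m := j) (by exact_mod_cast hj)
      hO.uniqueDiffOn).congr (hcongr j)

theorem contDiffOn_of_hasDerivAt_chain {m : ℕ} {D : ℕ → ℝ → E} (hO : IsOpen S)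
    (hD : ∀ j < m, ∀ t ∈ S, HasDerivAt (D j) (D (j + 1) t) t) (hm : ContinuousOn (D m) S) :
    ContDiffOn ℝ m (D 0) S := by
  induction m generalizing D with
  | zero => simpa using hm
  | succ m ih =>
    rw [Nat.cast_succ, contDiffOn_succ_iff_deriv_of_isOpen hO]
    refine ⟨fun t ht => (hD 0 m.succ_pos t ht).differentiableAt.differentiableWithinAt, by simp, ?_⟩
    exact (ih (D := fun j => D (j + 1)) (fun j hj => hD (j + 1) (by omega)) hm).congr
      fun t ht => (hD 0 m.succ_pos t ht).deriv

end Primitives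

section WeakDerivatives

variable {E : Type*} [NormedAddCommGroup E] [NormedSpace ℝ E] {S : Set ℝ}

theorem integrable_smul_of_tsupport_subset {f : ℝ → E} {φ : ℝ → ℝ} (hφ : Continuous φ)
    (hcompact : HasCompactSupport φ) (hsub : tsupport φ ⊆ S) (hf : LocallyIntegrableOn f S) :
    Integrable fun t => φ t • f t := by
  refine (integrableOn_iff_integrable_of_support_subset
    ((Function.support_smul_subset_left φ f).trans (subset_tsupport φ))).1 ?_
  exact (hf.integrableOn_compact_subset hsub hcompact).continuousOn_smul hφ.continuousOn hcompact

theorem setIntegral_smul_eq_of_tsupport_subset {φ : ℝ → ℝ} (hsub : tsupport φ ⊆ S) (f : ℝ → E) :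
    ∫ t in S, φ t • f t = ∫ t, φ t • f t :=
  setIntegral_eq_integral_of_forall_compl_eq_zero fun t ht => by
    rw [image_eq_zero_of_notMem_tsupport fun h => ht (hsub h), zero_smul]

theorem exists_contDiff_tsupport_subset_integral_eq_one (hO : IsOpen S) (hne : S.Nonempty) :
    ∃ φ : ℝ → ℝ, ContDiff ℝ (⊤ : ℕ∞) φ ∧ HasCompactSupport φ ∧ tsupport φ ⊆ S ∧
      ∫ t, φ t = 1 := by
  obtain ⟨x, hx⟩ := hne
  obtain ⟨ε, hε, hball⟩ := Metric.nhds_basis_closedBall.mem_iff.1 (hO.mem_nhds hx)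
  let B : ContDiffBump x := ⟨ε / 2, ε, half_pos hε, half_lt_self hε⟩
  exact ⟨B.normed volume, B.contDiff_normed, B.hasCompactSupport_normed,
    by rwa [B.tsupport_normed_eq], B.integral_normed⟩

theorem exists_contDiff_deriv_eq_of_integral_eq_zero [S.OrdConnected] (hO : IsOpen S)
    (hne : S.Nonempty) {χ : ℝ → ℝ} (hχ : ContDiff ℝ (⊤ : ℕ∞) χ) (hcompact : HasCompactSupport χ)
    (hsub : tsupport χ ⊆ S) (hzero : ∫ t, χ t = 0) :
    ∃ Φ : ℝ → ℝ, ContDiff ℝ (⊤ : ℕ∞) Φ ∧ HasCompactSupport Φ ∧ tsupport Φ ⊆ S ∧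
      deriv Φ = χ := by
  obtain ⟨x, hx⟩ := hne
  obtain ⟨a, ha, c, hc, hac⟩ := exists_subset_Ioo_of_isCompact hO (hcompact.isCompact.insert x)
    (insert_nonempty x _) (insert_subset hx hsub)
  have hχac (t : ℝ) (ht : t ∉ Ioo a c) : χ t = 0 :=
    image_eq_zero_of_notMem_tsupport fun h => ht (hac (mem_insert_of_mem x h))
  let Φ : ℝ → ℝ := fun t => ∫ s in a..t, χ s
  have hderiv (t : ℝ) : HasDerivAt Φ (χ t) t :=
    (hχ.continuous.integral_hasStrictDerivAt a t).hasDerivAt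
  have hΦac (t : ℝ) (ht : t ∉ Icc a c) : Φ t = 0 := by
    rcases lt_or_ge t a with hta | hat
    · refine intervalIntegral.integral_zero_ae (.of_forall fun s hs => hχac s fun h => ?_)
      rw [uIoc_of_ge hta.le] at hs
      exact h.1.not_ge hs.2
    · have hct : c < t := not_le.1 fun htc => ht ⟨hat, htc⟩
      change ∫ s in a..t, χ s = 0
      rw [intervalIntegral.integral_eq_integral_of_support_subset, hzero]
      exact fun s hs => ⟨(not_imp_comm.1 (hχac s) hs).1,
        ((not_imp_comm.1 (hχac s) hs).2.trans hct).le⟩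
  have htsupport : tsupport Φ ⊆ Icc a c :=
    closure_minimal (fun t ht => not_imp_comm.1 (hΦac t) ht) isClosed_Icc
  have hderiv_eq : deriv Φ = χ := funext fun t => (hderiv t).deriv
  refine ⟨Φ, contDiff_infty_iff_deriv.2 ⟨fun t => (hderiv t).differentiableAt, ?_⟩,
    .intro isCompact_Icc hΦac, htsupport.trans (OrdConnected.out ‹_› ha hc), hderiv_eq⟩
  rwa [hderiv_eq]

variable [CompleteSpace E]

/-- Subtracting from a test function its integral times a fixed bump leaves a derivative of a test
function, so `f` minus its mean against the bump annihilates every test function. -/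
theorem HasWeakDerivOn.ae_eq_const [S.OrdConnected] (hO : IsOpen S) (hne : S.Nonempty)
    {f : ℝ → E} (hf : LocallyIntegrableOn f S) (hweak : HasWeakDerivOn f (fun _ => 0) S) :
    ∃ c, ∀ᵐ t, t ∈ S → f t = c := by
  obtain ⟨ρ, hρ, hρcompact, hρS, hρone⟩ := exists_contDiff_tsupport_subset_integral_eq_one hO hne
  refine ⟨∫ t, ρ t • f t, ?_⟩
  have hortho (φ : ℝ → ℝ) (hφ : ContDiff ℝ (⊤ : ℕ∞) φ) (hφcompact : HasCompactSupport φ)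
      (hφS : tsupport φ ⊆ S) : ∫ t, φ t • (f t - ∫ s, ρ s • f s) = 0 := by
    have hφint : Integrable φ := hφ.continuous.integrable_of_hasCompactSupport hφcompact
    have hρint : Integrable ρ := hρ.continuous.integrable_of_hasCompactSupport hρcompact
    have hφf := integrable_smul_of_tsupport_subset hφ.continuous hφcompact hφS hf
    have hρf := integrable_smul_of_tsupport_subset hρ.continuous hρcompact hρS hf
    have hmean : ∫ t, (φ t - (∫ s, φ s) * ρ t) = 0 := by
      rw [integral_sub hφint (hρint.const_mul _), integral_const_mul, hρone, mul_one, sub_self]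
    have hsub : tsupport (fun t => φ t - (∫ s, φ s) * ρ t) ⊆ S :=
      (tsupport_sub φ fun t => (∫ s, φ s) * ρ t).trans
        (union_subset hφS ((tsupport_mul_subset_right (f := fun _ => ∫ s, φ s)).trans hρS))
    obtain ⟨Φ, hΦ, hΦcompact, hΦS, hderiv⟩ := exists_contDiff_deriv_eq_of_integral_eq_zero hO hne
      (hφ.sub (contDiff_const.mul hρ)) (hφcompact.sub hρcompact.mul_left) hsub hmean
    have htest := hweak Φ hΦ hΦcompact hΦS
    rw [hderiv, setIntegral_smul_eq_of_tsupport_subset hsub] at htest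
    simp only [sub_smul, mul_smul, smul_zero, integral_zero, neg_zero] at htest
    have hρf' : Integrable fun t => (∫ s, φ s) • ρ t • f t := hρf.smul _
    rw [integral_sub hφf hρf', integral_smul] at htest
    simp only [smul_sub]
    rwa [integral_sub hφf (hφint.smul_const _), integral_smul_const]
  have hzero := hO.ae_eq_zero_of_integral_contDiff_smul_eq_zero
    (hf.sub (locallyIntegrableOn_const (∫ t, ρ t • f t))) hortho
  filter_upwards [hzero] with t ht htS using sub_eq_zero.1 (ht htS)

theorem HasWeakDerivOn.exists_isPrimitiveOn [S.OrdConnected] (hO : IsOpen S) (hne : S.Nonempty)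
    {f f' : ℝ → E} (hf : LocallyIntegrableOn f S) (hf' : LocallyIntegrableOn f' S)
    (hweak : HasWeakDerivOn f f' S) : ∃ F, IsPrimitiveOn F f' S ∧ ∀ᵐ t, t ∈ S → f t = F t := by
  obtain ⟨a, ha⟩ := id hne
  have hint {x y : ℝ} (hx : x ∈ S) (hy : y ∈ S) : IntervalIntegrable f' volume x y :=
    (hf'.integrableOn_compact_subset (OrdConnected.uIcc_subset ‹_› hx hy)
      isCompact_uIcc).intervalIntegrable
  let G : ℝ → E := fun t => ∫ s in a..t, f' s
  have hG : IsPrimitiveOn G f' S := fun x hx y hy =>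
    ⟨hint hx hy, intervalIntegral.integral_interval_sub_left (hint ha hy) (hint ha hx)⟩
  have hGloc : LocallyIntegrableOn G S := (hG.continuousOn hO).locallyIntegrableOn hO.measurableSet
  have hdiff : HasWeakDerivOn (fun t => f t - G t) (fun _ => 0) S := by
    intro φ hφ hcompact hsub
    have hφ' : Continuous (deriv φ) := hφ.continuous_deriv (by simp)
    have hint' {h : ℝ → E} (hh : LocallyIntegrableOn h S) :=
      (integrable_smul_of_tsupport_subset hφ' hcompact.deriv
        (tsupport_deriv_subset.trans hsub) hh).integrableOn (s := S)
    simp only [smul_sub, smul_zero, integral_zero, neg_zero]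
    rw [integral_sub (hint' hf) (hint' hGloc), hweak φ hφ hcompact hsub,
      hG.hasWeakDerivOn hO φ hφ hcompact hsub, sub_self]
  obtain ⟨c, hc⟩ := hdiff.ae_eq_const hO hne (hf.sub hGloc)
  refine ⟨fun t => G t + c, fun x hx y hy => ⟨hint hx hy, ?_⟩, ?_⟩
  · rw [add_sub_add_right_eq_sub, (hG x hx y hy).2]
  · filter_upwards [hc] with t ht htS using sub_eq_iff_eq_add'.1 (ht htS)

theorem MemSobolevLocOn.succ_iff_deriv [S.OrdConnected] (hO : IsOpen S) {m : ℕ} {f : ℝ → E} :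
    MemSobolevLocOn (m + 1) f S ↔ MemSobolevLocOn m (deriv f) S ∧ IsPrimitiveOn f (deriv f) S := by
  refine ⟨fun ⟨f', hf', hprim⟩ => ?_, fun h => ⟨deriv f, h⟩⟩
  have hae : ∀ᵐ t, t ∈ S → f' t = deriv f t := by
    filter_upwards [hprim.ae_hasDerivAt hO] with t ht htS using (ht htS).deriv.symm
  refine ⟨?_, hprim.congr_ae hae⟩
  cases m with
  | zero =>
    refine fun a ha c hc => (memLp_congr_ae ?_).1 (hf' a ha c hc)
    refine (ae_restrict_iff' measurableSet_Icc).2 ?_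
    filter_upwards [hae] with t ht htac using ht (OrdConnected.out ‹_› ha hc htac)
  | succ m =>
    exact hf'.congr fun t ht => (hprim.hasDerivAt hO (hf'.continuousOn hO) ht).deriv.symm

theorem MemSobolevLocOn.of_forall_Ioo {m : ℕ} {f : ℝ → E}
    (h : ∀ T₁ T₂ : ℝ, T₁ < T₂ → MemSobolevLocOn m f (Ioo T₁ T₂)) : MemSobolevLocOn m f univ := by
  have mem_Ioo {a c : ℝ} : a ∈ Ioo (min a c - 1) (max a c + 1) ∧
      c ∈ Ioo (min a c - 1) (max a c + 1) := by
    constructor <;> constructor <;> linarith [min_le_left a c, min_le_right a c,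
      le_max_left a c, le_max_right a c]
  have lt {a c : ℝ} : min a c - 1 < max a c + 1 := mem_Ioo.1.1.trans mem_Ioo.1.2
  induction m generalizing f with
  | zero => exact fun a _ c _ => h _ _ lt a mem_Ioo.1 c mem_Ioo.2
  | succ m ih => exact ⟨deriv f,
      ih fun T₁ T₂ hT => ((succ_iff_deriv isOpen_Ioo).1 (h T₁ T₂ hT)).1,
      fun a _ c _ => ((succ_iff_deriv isOpen_Ioo).1 (h _ _ lt)).2 a mem_Ioo.1 c mem_Ioo.2⟩

theorem MemSobolevLocOn.exists_of_weakDeriv_chain {T₁ T₂ : ℝ} (hT : T₁ < T₂) {m : ℕ}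
    {D : ℕ → ℝ → E} (hD : ∀ j < m, HasWeakDerivOn (D j) (D (j + 1)) (Ioo T₁ T₂))
    (hDmem : ∀ j ≤ m, MemLp (D j) 2 (volume.restrict (Ioo T₁ T₂))) :
    ∃ f, MemSobolevLocOn m f (Ioo T₁ T₂) ∧ ∀ᵐ t, t ∈ Ioo T₁ T₂ → D 0 t = f t := by
  induction m generalizing D with
  | zero => exact ⟨D 0, fun a ha c hc => (hDmem 0 le_rfl).mono_measure
      (Measure.restrict_mono (OrdConnected.out ordConnected_Ioo ha hc) le_rfl),
      .of_forall fun _ _ => rfl⟩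
  | succ m ih =>
    obtain ⟨f', hf', hae⟩ := ih (D := fun j => D (j + 1)) (fun j hj => hD (j + 1) (by omega))
      fun j hj => hDmem (j + 1) (by omega)
    have hloc (j : ℕ) (hj : j ≤ m + 1) : LocallyIntegrableOn (D j) (Ioo T₁ T₂) :=
      IntegrableOn.locallyIntegrableOn ((hDmem j hj).integrable one_le_two)
    obtain ⟨f, hprim, hf⟩ := (hD 0 m.succ_pos).exists_isPrimitiveOn isOpen_Ioo
      (nonempty_Ioo.2 hT) (hloc 0 (by omega)) (hloc 1 (by omega))
    exact ⟨f, ⟨f', hf', hprim.congr_ae hae⟩, hf⟩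

theorem Wkloc.memSobolevLocOn {m : ℕ} {b : ℝ → ℝ} (h : Wkloc (m + 1) b) (hb : Continuous b) :
    MemSobolevLocOn (m + 1) b univ := by
  refine .of_forall_Ioo fun T₁ T₂ hT => ?_
  obtain ⟨D, rfl, hD, hDmem⟩ := h T₁ T₂ hT
  obtain ⟨f, hf, hae⟩ := MemSobolevLocOn.exists_of_weakDeriv_chain hT hD hDmem
  have heq : f =ᵐ[volume.restrict (Ioo T₁ T₂)] D 0 := by
    refine (ae_restrict_iff' measurableSet_Ioo).2 ?_
    filter_upwards [hae] with t ht htT using (ht htT).symm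
  exact hf.congr (Measure.eqOn_open_of_ae_eq heq isOpen_Ioo (hf.continuousOn isOpen_Ioo)
    hb.continuousOn)

end WeakDerivatives

open scoped BoundedContinuousFunction InnerProductSpace

section LpTest

variable {X : Type*} [TopologicalSpace X] [MeasurableSpace X] [BorelSpace X] {μ : Measure X}
  [IsFiniteMeasure μ]

theorem inner_toLp (f : Lp ℝ 2 μ) [SecondCountableTopologyEither X ℝ] (g : X →ᵇ ℝ) :
    ⟪f, g.toLp 2 μ ℝ⟫_ℝ = ∫ x, f x * g x ∂μ := by
  rw [L2.inner_def]
  refine integral_congr_ae ?_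
  filter_upwards [g.coeFn_toLp 2 μ ℝ] with x hx
  rw [hx, real_inner_eq_re_inner, RCLike.inner_apply, conj_trivial, mul_comm]
  rfl

theorem inner_toLp_toLp [SecondCountableTopologyEither X ℝ] (f g : X →ᵇ ℝ) :
    ⟪f.toLp 2 μ ℝ, g.toLp 2 μ ℝ⟫_ℝ = ∫ x, f x * g x ∂μ := by
  rw [inner_toLp]
  refine integral_congr_ae ?_
  filter_upwards [f.coeFn_toLp 2 μ ℝ] with x hx
  rw [hx]

theorem Lp_nonneg_of_inner_toLp_nonneg [NormalSpace X] [SecondCountableTopologyEither X ℝ]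
    [μ.WeaklyRegular] {f : Lp ℝ 2 μ}
    (hf : ∀ g : X →ᵇ ℝ, 0 ≤ g → 0 ≤ ⟪f, g.toLp 2 μ ℝ⟫_ℝ) : 0 ≤ f := by
  have hpos : ∀ g : Lp ℝ 2 μ, 0 ≤ ⟪f, Lp.posPart g⟫_ℝ := by
    intro g
    refine (BoundedContinuousFunction.toLp_denseRange ℝ μ ℝ (by norm_num)).induction_on g
      (isClosed_le continuous_const (continuous_const.inner Lp.continuous_posPart)) fun g => ?_
    suffices Lp.posPart (g.toLp 2 μ ℝ) = (g ⊔ 0).toLp 2 μ ℝ from this ▸ hf _ le_sup_right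
    refine Lp.ext ?_
    filter_upwards [Lp.coeFn_posPart (g.toLp 2 μ ℝ), g.coeFn_toLp 2 μ ℝ,
      (g ⊔ 0).coeFn_toLp 2 μ ℝ] with x h1 h2 h3
    rw [h1, h2, h3]; rfl
  have hneg : ⟪f, Lp.posPart (-f)⟫_ℝ = -⟪Lp.posPart (-f), Lp.posPart (-f)⟫_ℝ := by
    rw [L2.inner_def, L2.inner_def, ← integral_neg]
    refine integral_congr_ae ?_
    filter_upwards [Lp.coeFn_posPart (-f), Lp.coeFn_neg f] with x h1 h2
    rw [h1, h2, Pi.neg_apply]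
    rcases le_total 0 (f x) with h | h
    · rw [max_eq_right (by linarith)]; simp
    · rw [max_eq_left (by linarith), inner_neg_left, neg_neg]
  have hzero : Lp.posPart (-f) = 0 :=
    real_inner_self_nonpos.1 (by linarith [hpos (-f)])
  refine (Lp.coeFn_nonneg f).1 ?_
  filter_upwards [Lp.coeFn_posPart (-f), Lp.coeFn_neg f, Lp.coeFn_zero ℝ 2 μ] with x h1 h2 h3
  rw [hzero, h3, h2, Pi.neg_apply] at h1
  simpa using (le_max_left (-f x) 0).trans_eq h1.symm

end LpTest

instance : IsFiniteMeasure μ01 := by unfold μ01; infer_instance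

theorem ae_μ01_mem_Ioo : ∀ᵐ x ∂μ01, x ∈ Ioo (0 : ℝ) 1 :=
  ae_restrict_mem measurableSet_Ioo

theorem integral_μ01 (f : ℝ → ℝ) : ∫ x, f x ∂μ01 = ∫ x in (0 : ℝ)..1, f x := by
  rw [intervalIntegral.integral_of_le zero_le_one, integral_Ioc_eq_integral_Ioo]; rfl

theorem Hsp_integrable (f : Hsp) : Integrable f μ01 :=
  (Lp.memLp f).integrable (by norm_num)

theorem Hsp_intervalIntegrable_mul (f : Hsp) {g : ℝ → ℝ} (hg : ContinuousOn g (Icc 0 1)) :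
    IntervalIntegrable (fun x => f x * g x) volume 0 1 := by
  have hf : IntervalIntegrable f volume 0 1 :=
    (intervalIntegrable_iff_integrableOn_Ioo_of_le zero_le_one).2 (Hsp_integrable f)
  exact hf.mul_continuousOn (by rwa [uIcc_of_le zero_le_one])

/-- The map sending a bounded continuous function to its class in `H`. -/
abbrev toHsp : (ℝ →ᵇ ℝ) →L[ℝ] Hsp := BoundedContinuousFunction.toLp 2 μ01 ℝ

theorem coeFn_toHsp (f : ℝ →ᵇ ℝ) : toHsp f =ᵐ[μ01] f :=
  f.coeFn_toLp 2 μ01 ℝ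

/-! ### Sine and cosine modes -/

/-- The `n`-th Dirichlet frequency `(n + 1)π`; modes are numbered from `0`. -/
def freq (n : ℕ) : ℝ := (n + 1) * Real.pi

/-- The `n`-th Dirichlet eigenvalue of `-∂²/∂x²` on `(0,1)`. -/
def eigval (n : ℕ) : ℝ := freq n ^ 2

theorem freq_pos (n : ℕ) : 0 < freq n := by unfold freq; positivity

theorem eigval_pos (n : ℕ) : 0 < eigval n := pow_pos (freq_pos n) 2

theorem succ_le_freq (n : ℕ) : (n : ℝ) + 1 ≤ freq n := by
  unfold freq; nlinarith [Real.pi_gt_three, (Nat.cast_nonneg n : (0 : ℝ) ≤ n)]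

theorem sin_freq (n : ℕ) : Real.sin (freq n) = 0 := by
  simpa [freq] using Real.sin_nat_mul_pi (n + 1)

theorem sin_pi_mul_pos {x : ℝ} (hx : x ∈ Ioo (0 : ℝ) 1) : 0 < Real.sin (Real.pi * x) :=
  Real.sin_pos_of_pos_of_lt_pi (mul_pos Real.pi_pos hx.1) (by nlinarith [hx.2, Real.pi_pos])

/-- The normalized sine mode `√2 sin((n + 1)πx)`. -/
def sineMode (n : ℕ) : ℝ →ᵇ ℝ :=
  .ofNormedAddCommGroup (fun x => √2 * Real.sin (freq n * x)) (by fun_prop) √2 fun x => by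
    simpa [abs_of_nonneg] using
      mul_le_mul_of_nonneg_left (Real.abs_sin_le_one _) (Real.sqrt_nonneg 2)

/-- The normalized cosine mode `√2 cos((n + 1)πx)`. -/
def cosineMode (n : ℕ) : ℝ →ᵇ ℝ :=
  .ofNormedAddCommGroup (fun x => √2 * Real.cos (freq n * x)) (by fun_prop) √2 fun x => by
    simpa [abs_of_nonneg] using
      mul_le_mul_of_nonneg_left (Real.abs_cos_le_one _) (Real.sqrt_nonneg 2)

@[simp]
theorem sineMode_apply (n : ℕ) (x : ℝ) : sineMode n x = √2 * Real.sin (freq n * x) := rfl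

@[simp]
theorem cosineMode_apply (n : ℕ) (x : ℝ) : cosineMode n x = √2 * Real.cos (freq n * x) := rfl

theorem norm_sineMode_le (n : ℕ) : ‖sineMode n‖ ≤ √2 :=
  BoundedContinuousFunction.norm_ofNormedAddCommGroup_le _ (Real.sqrt_nonneg 2) _

theorem norm_cosineMode_le (n : ℕ) : ‖cosineMode n‖ ≤ √2 :=
  BoundedContinuousFunction.norm_ofNormedAddCommGroup_le _ (Real.sqrt_nonneg 2) _

theorem integral_cos_int_mul_pi {m : ℤ} (hm : m ≠ 0) :
    ∫ x in (0 : ℝ)..1, Real.cos (m * Real.pi * x) = 0 := by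
  have hm' : (m : ℝ) * Real.pi ≠ 0 := mul_ne_zero (mod_cast hm) Real.pi_ne_zero
  rw [intervalIntegral.integral_comp_mul_left _ hm', integral_cos]
  simp [Real.sin_int_mul_pi]

theorem integral_cos_freq_sub (n m : ℕ) :
    ∫ x in (0 : ℝ)..1, Real.cos (freq n * x - freq m * x) = if n = m then 1 else 0 := by
  split_ifs with h
  · simp [h]
  · have hfreq : ∀ x, freq n * x - freq m * x = ((n - m : ℤ) : ℝ) * Real.pi * x := fun x => by
      unfold freq; push_cast; ring
    simpa only [hfreq] using integral_cos_int_mul_pi (m := (n : ℤ) - m) (by lia)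

theorem integral_cos_freq_add (n m : ℕ) :
    ∫ x in (0 : ℝ)..1, Real.cos (freq n * x + freq m * x) = 0 := by
  have hfreq : ∀ x, freq n * x + freq m * x = ((n + m + 2 : ℤ) : ℝ) * Real.pi * x := fun x => by
    unfold freq; push_cast; ring
  simpa only [hfreq] using integral_cos_int_mul_pi (m := (n : ℤ) + m + 2) (by lia)

theorem orthonormal_sineMode : Orthonormal ℝ fun n => toHsp (sineMode n) := by
  rw [orthonormal_iff_ite]
  intro n m
  have hprod : ∀ x, sineMode n x * sineMode m x =
      Real.cos (freq n * x - freq m * x) - Real.cos (freq n * x + freq m * x) := fun x => by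
    rw [← Real.two_mul_sin_mul_sin, sineMode_apply, sineMode_apply]
    linear_combination (Real.sin (freq n * x) * Real.sin (freq m * x)) *
      Real.mul_self_sqrt (zero_le_two (α := ℝ))
  simp only [inner_toLp_toLp, integral_μ01, hprod]
  rw [intervalIntegral.integral_sub, integral_cos_freq_sub, integral_cos_freq_add, sub_zero]
  all_goals exact Continuous.intervalIntegrable (by fun_prop) _ _

theorem orthonormal_cosineMode : Orthonormal ℝ fun n => toHsp (cosineMode n) := by
  rw [orthonormal_iff_ite]
  intro n m
  have hprod : ∀ x, cosineMode n x * cosineMode m x =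
      Real.cos (freq n * x - freq m * x) + Real.cos (freq n * x + freq m * x) := fun x => by
    rw [← Real.two_mul_cos_mul_cos, cosineMode_apply, cosineMode_apply]
    linear_combination (Real.cos (freq n * x) * Real.cos (freq m * x)) *
      Real.mul_self_sqrt (zero_le_two (α := ℝ))
  simp only [inner_toLp_toLp, integral_μ01, hprod]
  rw [intervalIntegral.integral_add, integral_cos_freq_sub, integral_cos_freq_add, add_zero]
  all_goals exact Continuous.intervalIntegrable (by fun_prop) _ _

/-- The solution at time `t` of the heat equation with Dirichlet boundary conditions and initial
value the finite sine sum with coefficients `a`. -/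
def heatSum (a : ℕ →₀ ℝ) (t : ℝ) : ℝ →ᵇ ℝ :=
  a.sum fun n c => (c * Real.exp (-eigval n * t)) • sineMode n

theorem heatSum_apply (a : ℕ →₀ ℝ) (t x : ℝ) :
    heatSum a t x = ∑ n ∈ a.support, a n * Real.exp (-eigval n * t) * sineMode n x := by
  simp [heatSum, Finsupp.sum]

theorem inner_toHsp_heatSum (f : Hsp) (a : ℕ →₀ ℝ) (t : ℝ) :
    ⟪f, toHsp (heatSum a t)⟫_ℝ =
      ∑ n ∈ a.support, a n * (Real.exp (-eigval n * t) * ⟪f, toHsp (sineMode n)⟫_ℝ) := by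
  simp only [heatSum, Finsupp.sum, map_sum, map_smul, inner_sum, inner_smul_right, mul_assoc]

theorem exists_heatSum_zero_eq {f : ℝ →ᵇ ℝ} (hf : f ∈ Submodule.span ℝ (range sineMode)) :
    ∃ a, heatSum a 0 = f := by
  simpa [heatSum] using Finsupp.mem_span_range_iff_exists_finsupp.1 hf

/-- The function `cos(πx)`; its polynomials are dense in `C([0,1])` because it is injective
there. -/
def cosPi : ℝ →ᵇ ℝ :=
  .ofNormedAddCommGroup (fun x => Real.cos (Real.pi * x)) (by fun_prop) 1 fun x => by
    simpa using Real.abs_cos_le_one _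

theorem cosPi_mul_sineMode_mem_span (n : ℕ) :
    cosPi * sineMode n ∈ Submodule.span ℝ (range sineMode) := by
  have hmem : ∀ n, sineMode n ∈ Submodule.span ℝ (range sineMode) := fun n =>
    Submodule.subset_span ⟨n, rfl⟩
  rcases n with _ | n
  · have : cosPi * sineMode 0 = (1 / 2 : ℝ) • sineMode 1 := by
      ext x
      have hdouble : freq 1 * x = 2 * (freq 0 * x) := by unfold freq; push_cast; ring
      simp only [BoundedContinuousFunction.mul_apply, BoundedContinuousFunction.smul_apply,
        sineMode_apply, smul_eq_mul, hdouble, Real.sin_two_mul]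
      simp [cosPi, freq]; ring
    exact this ▸ Submodule.smul_mem _ _ (hmem 1)
  · have : cosPi * sineMode (n + 1) =
        (1 / 2 : ℝ) • (sineMode (n + 2) + sineMode n) := by
      ext x
      have hadd : freq (n + 2) * x = freq (n + 1) * x + Real.pi * x := by
        unfold freq; push_cast; ring
      have hsub : freq n * x = freq (n + 1) * x - Real.pi * x := by unfold freq; push_cast; ring
      simp only [BoundedContinuousFunction.mul_apply, BoundedContinuousFunction.smul_apply,
        BoundedContinuousFunction.add_apply, sineMode_apply, smul_eq_mul, hadd, hsub, Real.sin_add,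
        Real.sin_sub]
      simp [cosPi]; ring
    exact this ▸ Submodule.smul_mem _ _ (Submodule.add_mem _ (hmem _) (hmem _))

theorem sineMode_zero_mul_aeval_cosPi_mem_span (p : Polynomial ℝ) :
    sineMode 0 * Polynomial.aeval cosPi p ∈ Submodule.span ℝ (range sineMode) := by
  have hcos : ∀ f ∈ Submodule.span ℝ (range sineMode),
      cosPi * f ∈ Submodule.span ℝ (range sineMode) := by
    intro f hf
    refine (Submodule.span_le (p := (Submodule.span ℝ (range sineMode)).comap
      (LinearMap.mulLeft ℝ cosPi))).2 ?_ hf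
    rintro _ ⟨n, rfl⟩
    exact cosPi_mul_sineMode_mem_span n
  induction p using Polynomial.induction_on with
  | C c =>
    simpa [Algebra.algebraMap_eq_smul_one] using
      Submodule.smul_mem _ c (Submodule.subset_span (mem_range_self 0))
  | add p q hp hq => simpa [mul_add] using Submodule.add_mem _ hp hq
  | monomial n c h =>
    convert hcos _ h using 1
    simp only [map_mul, map_pow, Polynomial.aeval_X, pow_succ]
    ring

theorem aeval_cosPi_apply (p : Polynomial ℝ) (x : ℝ) :
    Polynomial.aeval cosPi p x = p.eval (Real.cos (Real.pi * x)) := by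
  induction p using Polynomial.induction_on' with
  | add p q hp hq => simp [hp, hq]
  | monomial n c => simp [Polynomial.aeval_monomial, Algebra.algebraMap_eq_smul_one, cosPi]

theorem exists_aeval_cosPi_near (g : ℝ →ᵇ ℝ) {ε : ℝ} (hε : 0 < ε) :
    ∃ p : Polynomial ℝ, ∀ x ∈ Icc (0 : ℝ) 1, |Polynomial.aeval cosPi p x - g x| < ε := by
  obtain ⟨p, hp⟩ := exists_polynomial_near_of_continuousOn (-1) 1
    (fun y => g (Real.arccos y / Real.pi)) (by fun_prop) ε hε
  refine ⟨p, fun x hx => ?_⟩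
  have harccos : Real.arccos (Real.cos (Real.pi * x)) / Real.pi = x := by
    rw [Real.arccos_cos (by nlinarith [hx.1, Real.pi_pos]) (by nlinarith [hx.2, Real.pi_pos])]
    field_simp
  simpa only [aeval_cosPi_apply, harccos] using
    hp _ ⟨Real.neg_one_le_cos (Real.pi * x), Real.cos_le_one _⟩

theorem norm_toHsp_le {f : ℝ →ᵇ ℝ} {C : ℝ} (hC : 0 ≤ C) (hf : ∀ x ∈ Icc (0 : ℝ) 1, |f x| ≤ C) :
    ‖toHsp f‖ ≤ C := by
  have hbound : ∀ᵐ x ∂μ01, ‖toHsp f x‖ ≤ C := by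
    filter_upwards [coeFn_toHsp f, ae_μ01_mem_Ioo] with x hfx hx
    rw [hfx]
    exact hf x (Ioo_subset_Icc_self hx)
  calc ‖toHsp f‖ ≤ (measureUnivNNReal μ01 : ℝ) ^ (ENNReal.toReal 2)⁻¹ * C :=
        Lp.norm_le_of_ae_bound hC hbound
    _ = C := by simp [measureUnivNNReal, μ01]

theorem toHsp_mem_closure_nonneg_aeval_cosPi {g : ℝ →ᵇ ℝ} (hg : 0 ≤ g) :
    toHsp g ∈ closure ((fun p => toHsp (Polynomial.aeval cosPi p)) ''
      {p : Polynomial ℝ | ∀ x ∈ Icc (0 : ℝ) 1, 0 ≤ Polynomial.aeval cosPi p x}) := by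
  refine Metric.mem_closure_iff.2 fun ε hε => ?_
  obtain ⟨p, hp⟩ := exists_aeval_cosPi_near (g + .const ℝ (ε / 4)) (by positivity : 0 < ε / 4)
  simp only [BoundedContinuousFunction.add_apply, BoundedContinuousFunction.const_apply,
    abs_lt] at hp
  refine ⟨_, ⟨p, fun x hx => ?_, rfl⟩, ?_⟩
  · have : 0 ≤ g x := hg x
    linarith [(hp x hx).1]
  · rw [dist_eq_norm, ← map_sub]
    refine (norm_toHsp_le (by positivity : 0 ≤ ε / 2) fun x hx => ?_).trans_lt (by linarith)
    rw [BoundedContinuousFunction.sub_apply, abs_le]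
    constructor <;> linarith [(hp x hx).1, (hp x hx).2]

theorem memLp_mul_boundedContinuousFunction (f : Hsp) (g : ℝ →ᵇ ℝ) :
    MemLp (fun x => f x * g x) 2 μ01 :=
  (memLp_top_of_bound g.continuous.aestronglyMeasurable ‖g‖
    (Filter.Eventually.of_forall g.norm_coe_le_norm)).mul (Lp.memLp f)

/-- The functions `sin(πx) p(cos(πx))` with `p(cos(πx)) ≥ 0` are nonnegative finite sine sums, and
the factors `p(cos(πx))` are dense among the nonnegative functions. -/
theorem Hsp_nonneg_of_inner_heatSum_nonneg {f : Hsp}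
    (hf : ∀ a, (∀ x ∈ Icc (0 : ℝ) 1, 0 ≤ heatSum a 0 x) → 0 ≤ ⟪f, toHsp (heatSum a 0)⟫_ℝ) :
    0 ≤ f := by
  have hF := memLp_mul_boundedContinuousFunction f (sineMode 0)
  have hsine : ∀ {x}, x ∈ Ioo (0 : ℝ) 1 → 0 < sineMode 0 x := fun hx => by
    simpa [freq] using sin_pi_mul_pos hx
  have hinner : ∀ g : ℝ →ᵇ ℝ, ⟪hF.toLp, toHsp g⟫_ℝ = ⟪f, toHsp (sineMode 0 * g)⟫_ℝ := fun g => by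
    rw [inner_toLp, inner_toLp]
    refine integral_congr_ae ?_
    filter_upwards [hF.coeFn_toLp] with x hx
    rw [hx, BoundedContinuousFunction.mul_apply, mul_assoc]
  have hFnonneg : 0 ≤ hF.toLp := by
    refine Lp_nonneg_of_inner_toLp_nonneg fun g hg => ?_
    have hclosed : IsClosed {h : Hsp | 0 ≤ ⟪hF.toLp, h⟫_ℝ} :=
      isClosed_le continuous_const (continuous_const.inner continuous_id)
    refine closure_minimal ?_ hclosed (toHsp_mem_closure_nonneg_aeval_cosPi hg)
    rintro _ ⟨p, hp, rfl⟩
    obtain ⟨a, ha⟩ := exists_heatSum_zero_eq (sineMode_zero_mul_aeval_cosPi_mem_span p)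
    rw [mem_ofPred_eq, hinner, ← ha]
    refine hf a fun x hx => ?_
    rw [ha, BoundedContinuousFunction.mul_apply]
    refine mul_nonneg ?_ (hp x hx)
    simpa [freq] using Real.sin_nonneg_of_nonneg_of_le_pi
      (mul_nonneg Real.pi_pos.le hx.1) (by nlinarith [hx.2, Real.pi_pos])
  refine (Lp.coeFn_nonneg f).1 ?_
  filter_upwards [(Lp.coeFn_nonneg _).2 hFnonneg, hF.coeFn_toLp, ae_μ01_mem_Ioo] with x h1 h2 hx
  rw [h2] at h1
  exact nonneg_of_mul_nonneg_left h1 (hsine hx)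

theorem Hsp_eq_zero_of_inner_sineMode_eq_zero {f : Hsp}
    (hf : ∀ n, ⟪f, toHsp (sineMode n)⟫_ℝ = 0) : f = 0 := by
  have hnonneg : ∀ g : Hsp, (∀ n, ⟪g, toHsp (sineMode n)⟫_ℝ = 0) → 0 ≤ g := fun g hg =>
    Hsp_nonneg_of_inner_heatSum_nonneg fun a _ => by simp [inner_toHsp_heatSum, hg]
  have hneg := hnonneg (-f) fun n => by rw [inner_neg_left, hf, neg_zero]
  exact le_antisymm (neg_nonneg.1 hneg) (hnonneg f hf)

theorem Hsp_ext_inner_sineMode {f g : Hsp}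
    (h : ∀ n, ⟪f, toHsp (sineMode n)⟫_ℝ = ⟪g, toHsp (sineMode n)⟫_ℝ) : f = g :=
  sub_eq_zero.1 <| Hsp_eq_zero_of_inner_sineMode_eq_zero fun n => by
    rw [inner_sub_left, h, sub_self]

/-- The sine modes as a Hilbert basis of `H`. -/
def sineBasis : HilbertBasis ℕ ℝ Hsp :=
  .mkOfOrthogonalEqBot orthonormal_sineMode <| (Submodule.eq_bot_iff _).2 fun _ hf =>
    Hsp_eq_zero_of_inner_sineMode_eq_zero fun n =>
      (Submodule.mem_orthogonal' _ _).1 hf _ (Submodule.subset_span ⟨n, rfl⟩)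

theorem sineBasis_apply (n : ℕ) : sineBasis n = toHsp (sineMode n) := by
  rw [sineBasis, HilbertBasis.coe_mkOfOrthogonalEqBot]

/-! ### The minimum principle for the heat equation -/

theorem second_deriv_nonneg_of_isLocalMin {f f' : ℝ → ℝ} {f'' x : ℝ}
    (hf : ∀ᶠ y in nhds x, HasDerivAt f (f' y) y) (hf' : HasDerivAt f' f'' x)
    (hmin : IsLocalMin f x) : 0 ≤ f'' := by
  by_contra! hneg
  have hderiv : deriv f =ᶠ[nhds x] f' := hf.mono fun y hy => hy.deriv
  have hmax : IsLocalMax f x := isLocalMax_of_deriv_deriv_neg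
    (by rwa [hderiv.deriv_eq, hf'.deriv]) hmin.deriv_eq_zero hf.self_of_nhds.continuousAt
  have hconst : f =ᶠ[nhds x] fun _ => f x := by
    filter_upwards [hmin, hmax] with y h1 h2 using le_antisymm h2 h1
  have hf'_zero : f' =ᶠ[nhds x] fun _ => 0 := by
    simpa using hderiv.symm.trans hconst.deriv
  have hf''_zero : f'' = 0 :=
    (hf'.congr_of_eventuallyEq hf'_zero.symm).unique (hasDerivAt_const x (0 : ℝ))
  exact hneg.ne hf''_zero

theorem deriv_nonpos_of_isMinOn_Icc {f : ℝ → ℝ} {f' a t : ℝ} (hat : a < t)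
    (hf : HasDerivAt f f' t) (hmin : IsMinOn f (Icc a t) t) : f' ≤ 0 := by
  have hcone : a - t ∈ posTangentConeAt (Icc a t) t :=
    sub_mem_posTangentConeAt_of_segment_subset <|
      (convex_Icc a t).segment_subset (right_mem_Icc.2 hat.le) (left_mem_Icc.2 hat.le)
  have : 0 ≤ (a - t) * f' := by
    simpa using hmin.localize.hasFDerivWithinAt_nonneg hf.hasDerivWithinAt.hasFDerivWithinAt hcone
  exact nonpos_of_mul_nonneg_right this (sub_neg.2 hat)

/-- If `W` were negative somewhere, a minimum of `W + εt` for small `ε > 0` would be attained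
off the parabolic boundary, and there `W_t + ε ≤ 0 ≤ W_xx`. -/
theorem heat_minimum_principle {W Wx Wxx : ℝ → ℝ → ℝ} {T : ℝ}
    (hcont : ContinuousOn (fun p : ℝ × ℝ => W p.1 p.2) (Icc 0 T ×ˢ Icc 0 1))
    (ht : ∀ t ∈ Ioc 0 T, ∀ x ∈ Ioo (0 : ℝ) 1, HasDerivAt (fun s => W s x) (Wxx t x) t)
    (hx : ∀ t ∈ Ioc 0 T, ∀ x ∈ Ioo (0 : ℝ) 1, HasDerivAt (W t) (Wx t x) x)
    (hxx : ∀ t ∈ Ioc 0 T, ∀ x ∈ Ioo (0 : ℝ) 1, HasDerivAt (Wx t) (Wxx t x) x)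
    (hinit : ∀ x ∈ Icc (0 : ℝ) 1, 0 ≤ W 0 x) (hleft : ∀ t ∈ Icc 0 T, 0 ≤ W t 0)
    (hright : ∀ t ∈ Icc 0 T, 0 ≤ W t 1) {t₁ x₁ : ℝ} (ht₁ : t₁ ∈ Icc 0 T)
    (hx₁ : x₁ ∈ Icc (0 : ℝ) 1) : 0 ≤ W t₁ x₁ := by
  refine le_of_forall_pos_le_add fun δ hδ => ?_
  by_contra! hneg
  set ε := δ / (T + 1)
  have hT : 0 < T + 1 := by linarith [ht₁.1.trans ht₁.2]
  have hε : 0 < ε := div_pos hδ hT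
  have hεT : ε * t₁ ≤ δ := by
    have : ε * (T + 1) = δ := div_mul_cancel₀ δ hT.ne'
    nlinarith [ht₁.2]
  obtain ⟨⟨t, x⟩, ⟨htm, hxm⟩, hmin⟩ := (isCompact_Icc.prod isCompact_Icc).exists_isMinOn
    ⟨(t₁, x₁), ht₁, hx₁⟩ (hcont.add (f := fun p => W p.1 p.2)
      (g := fun p : ℝ × ℝ => ε * p.1) (by fun_prop))
  have hle : ∀ s ∈ Icc 0 T, ∀ y ∈ Icc (0 : ℝ) 1, W t x + ε * t ≤ W s y + ε * s :=
    fun s hs y hy => hmin (a := (s, y)) ⟨hs, hy⟩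
  have hlt : W t x + ε * t < 0 := (hle t₁ ht₁ x₁ hx₁).trans_lt (by linarith)
  have hεt : 0 ≤ ε * t := mul_nonneg hε.le htm.1
  have htpos : t ∈ Ioc 0 T := ⟨htm.1.lt_of_ne fun h => by
    subst h; linarith [hinit x hxm], htm.2⟩
  have hx0 : 0 < x := hxm.1.lt_of_ne fun h => by subst h; linarith [hleft t htm]
  have hx1 : x < 1 := hxm.2.lt_of_ne fun h => by subst h; linarith [hright t htm]
  have hWxx : 0 ≤ Wxx t x := by
    refine second_deriv_nonneg_of_isLocalMin (f := W t)
      (Filter.mem_of_superset (Ioo_mem_nhds hx0 hx1) (hx t htpos)) (hxx t htpos x ⟨hx0, hx1⟩) ?_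
    filter_upwards [Icc_mem_nhds hx0 hx1] with y hy
    linarith [hle t htm y hy]
  have hWt : Wxx t x + ε ≤ 0 := by
    refine deriv_nonpos_of_isMinOn_Icc htpos.1 ((ht t htpos x ⟨hx0, hx1⟩).add
      (((hasDerivAt_id t).const_mul ε).congr_deriv (mul_one ε))) fun s hs => ?_
    exact hle s ⟨hs.1, hs.2.trans htm.2⟩ x hxm
  linarith

theorem sineMode_zero_right (n : ℕ) : sineMode n 0 = 0 := by
  simp

theorem sineMode_one_right (n : ℕ) : sineMode n 1 = 0 := by
  simp [sin_freq]

theorem hasDerivAt_sineMode (n : ℕ) (x : ℝ) :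
    HasDerivAt (sineMode n) (freq n * cosineMode n x) x := by
  refine ((((hasDerivAt_id x).const_mul (freq n)).sin).const_mul √2).congr_deriv ?_
  simp only [id_eq, mul_one, cosineMode_apply]
  ring

theorem hasDerivAt_cosineMode (n : ℕ) (x : ℝ) :
    HasDerivAt (cosineMode n) (-(freq n * sineMode n x)) x := by
  refine ((((hasDerivAt_id x).const_mul (freq n)).cos).const_mul √2).congr_deriv ?_
  simp only [id_eq, mul_one, sineMode_apply]
  ring

theorem heatSum_nonneg (a : ℕ →₀ ℝ) (h0 : ∀ x ∈ Icc (0 : ℝ) 1, 0 ≤ heatSum a 0 x) {t x : ℝ}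
    (ht : 0 ≤ t) (hx : x ∈ Icc (0 : ℝ) 1) : 0 ≤ heatSum a t x := by
  refine heat_minimum_principle (T := t) (W := fun t x => heatSum a t x)
    (Wx := fun t x => ∑ n ∈ a.support, a n * Real.exp (-eigval n * t) * (freq n * cosineMode n x))
    (Wxx := fun t x => ∑ n ∈ a.support, a n * Real.exp (-eigval n * t) * (-eigval n * sineMode n x))
    ?_ ?_ ?_ ?_ h0 ?_ ?_ ⟨ht, le_rfl⟩ hx
  · simp only [heatSum_apply]
    fun_prop
  · intro s _ y _
    simp only [heatSum_apply]
    refine HasDerivAt.fun_sum fun n _ => ?_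
    refine ((((hasDerivAt_id s).const_mul (-eigval n)).exp.const_mul (a n)).mul_const
      (sineMode n y)).congr_deriv ?_
    simp only [id_eq, mul_one]
    ring
  · intro s _ y _
    simp only [heatSum_apply]
    exact HasDerivAt.fun_sum fun n _ => (hasDerivAt_sineMode n y).const_mul _
  · intro s _ y _
    refine HasDerivAt.fun_sum fun n _ => ?_
    refine (((hasDerivAt_cosineMode n y).const_mul (freq n)).const_mul _).congr_deriv ?_
    simp only [eigval]
    ring
  · intro s _
    simp only [heatSum_apply, sineMode_zero_right, mul_zero, Finset.sum_const_zero, le_refl]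
  · intro s _
    simp only [heatSum_apply, sineMode_one_right, mul_zero, Finset.sum_const_zero, le_refl]

/-! ### Sign of a non-negative solution -/

theorem countable_setOf_eq_and_hasDerivAt_ne_zero {E : Type*} [NormedAddCommGroup E]
    [NormedSpace ℝ E] (f f' : ℝ → E) (c : E) :
    {x | f x = c ∧ HasDerivAt f (f' x) x ∧ f' x ≠ 0}.Countable := by
  refine (HereditarilyLindelofSpace.isLindelof _).countable_of_isDiscrete
    (isDiscrete_iff_nhdsNE.2 fun x hx => ?_)
  refine Filter.inf_principal_eq_bot.2 ?_
  filter_upwards [hx.2.1.eventually_ne (c := c) hx.2.2] with y hy hyZ using hy hyZ.1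

theorem InDomainA.exists_isPrimitiveOn {v w : Hsp} (h : InDomainA v w) :
    ∃ f f' : ℝ → ℝ, f 0 = 0 ∧ f 1 = 0 ∧ f =ᵐ[μ01] v ∧
      (∀ x ∈ Ioo (0 : ℝ) 1, HasDerivAt f (f' x) x) ∧
      IsPrimitiveOn f f' (Icc 0 1) ∧ IsPrimitiveOn f' w (Icc 0 1) := by
  obtain ⟨f, hcont, hf0, hf1, hfv, g, hfg, hgw⟩ := h
  have hmid : (1 / 2 : ℝ) ∈ Ioo (0 : ℝ) 1 := by norm_num
  have hw (a) (ha : a ∈ Icc (0 : ℝ) 1) (c) (hc : c ∈ Icc (0 : ℝ) 1) :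
      IntervalIntegrable w volume a c := by
    refine IntervalIntegrable.mono_set (a := 0) (b := 1) ?_ ?_
    · simpa using Hsp_intervalIntegrable_mul w (g := 1) continuousOn_const
    · rw [uIcc_of_le (zero_le_one' ℝ)]
      exact ordConnected_Icc.uIcc_subset ha hc
  set f' : ℝ → ℝ := fun x => g (1 / 2) + ∫ z in (1 / 2)..x, w z with hf'
  have hff' (x) (hx : x ∈ Ioo (0 : ℝ) 1) : HasDerivAt f (f' x) x := by
    have hgf' : g x = f' x := by rw [hf', ← sub_eq_iff_eq_add', hgw x hx _ hmid]
    exact hgf' ▸ hfg x hx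
  have hf'w : IsPrimitiveOn f' w (Icc 0 1) := fun a ha c hc => by
    refine ⟨hw a ha c hc, ?_⟩
    rw [add_sub_add_left_eq_sub]
    exact intervalIntegral.integral_interval_sub_left (hw _ (Ioo_subset_Icc_self hmid) c hc)
      (hw _ (Ioo_subset_Icc_self hmid) a ha)
  refine ⟨f, f', hf0, hf1, hfv, hff', fun a ha c hc => ?_, hf'w⟩
  have hsub := ordConnected_Icc.uIcc_subset ha hc
  have hint : IntervalIntegrable f' volume a c := (hf'w.continuousOn_uIcc ha hc).intervalIntegrable
  refine ⟨hint, (intervalIntegral.integral_eq_sub_of_hasDeriv_right (hcont.mono hsub)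
    (fun x hx => (hff' x ?_).hasDerivWithinAt) hint).symm⟩
  exact ⟨(le_min ha.1 hc.1).trans_lt hx.1, hx.2.trans_le (max_le ha.2 hc.2)⟩

theorem InDomainA.inner_sineMode {v w : Hsp} (h : InDomainA v w) (n : ℕ) :
    ⟪w, toHsp (sineMode n)⟫_ℝ = -eigval n * ⟪v, toHsp (sineMode n)⟫_ℝ := by
  obtain ⟨f, f', hf0, hf1, hfv, -, hf, hf'⟩ := h.exists_isPrimitiveOn
  have h0 := left_mem_Icc.2 (zero_le_one' ℝ)
  have h1 := right_mem_Icc.2 (zero_le_one' ℝ)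
  have hsin : IsPrimitiveOn (sineMode n) (fun x => freq n * cosineMode n x) (Icc 0 1) :=
    .of_hasDerivAt (fun x _ => hasDerivAt_sineMode n x) (by fun_prop)
  have hcos : IsPrimitiveOn (fun x => freq n * cosineMode n x) (fun x => -eigval n * sineMode n x)
      (Icc 0 1) := .of_hasDerivAt (fun x _ =>
    ((hasDerivAt_cosineMode n x).const_mul (freq n)).congr_deriv (by rw [eigval]; ring))
    (by fun_prop)
  have hv : ∫ x in (0 : ℝ)..1, f x * (-eigval n * sineMode n x) =
      -eigval n * ⟪v, toHsp (sineMode n)⟫_ℝ := by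
    rw [inner_toLp, ← integral_μ01, ← integral_const_mul]
    refine integral_congr_ae ?_
    filter_upwards [hfv] with x hx
    rw [hx]
    ring
  have hfcos : IntervalIntegrable (fun x => f x * (-eigval n * sineMode n x)) volume 0 1 :=
    ((hf.continuousOn_uIcc h0 h1).mul (by fun_prop)).intervalIntegrable
  have hf'cos : IntervalIntegrable (fun x => f' x * (freq n * cosineMode n x)) volume 0 1 :=
    ((hf'.continuousOn_uIcc h0 h1).mul (by fun_prop)).intervalIntegrable
  have hcross : 0 = (∫ x in (0 : ℝ)..1, f' x * (freq n * cosineMode n x)) +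
      -eigval n * ⟪v, toHsp (sineMode n)⟫_ℝ := by
    rw [← hv, ← intervalIntegral.integral_add hf'cos hfcos, ← (hf.mul hcos 0 h0 1 h1).2]
    simp only [hf0, hf1, zero_mul, sub_zero]
  have hdiag : 0 = ⟪w, toHsp (sineMode n)⟫_ℝ +
      ∫ x in (0 : ℝ)..1, f' x * (freq n * cosineMode n x) := by
    rw [inner_toLp, integral_μ01, ← intervalIntegral.integral_add
      (Hsp_intervalIntegrable_mul w (by fun_prop)) hf'cos, ← (hf'.mul hsin 0 h0 1 h1).2]
    simp only [sineMode_zero_right, sineMode_one_right, mul_zero, sub_zero]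
  linarith

theorem nonneg_of_ae_nonneg_μ01 {f : ℝ → ℝ} (hf : ContinuousOn f (Ioo 0 1))
    (h : ∀ᵐ x ∂μ01, 0 ≤ f x) {x : ℝ} (hx : x ∈ Ioo (0 : ℝ) 1) : 0 ≤ f x := by
  have heq : EqOn (fun x => max (f x) 0) f (Ioo 0 1) :=
    Measure.eqOn_open_of_ae_eq (μ := volume) (h.mono fun _ => max_eq_left) isOpen_Ioo
      (hf.sup continuousOn_const) hf
  exact max_eq_left_iff.1 (heq hx)

theorem InDomainA.ae_eq_zero_of_eq_zero {v w : Hsp} (h : InDomainA v w)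
    (hv : ∀ᵐ x ∂μ01, 0 ≤ v x) : ∀ᵐ x ∂μ01, v x = 0 → w x = 0 := by
  obtain ⟨f, f', -, -, hfv, hff', hf, hf'⟩ := h.exists_isPrimitiveOn
  have hnonneg {x} (hx : x ∈ Ioo (0 : ℝ) 1) : 0 ≤ f x := by
    refine nonneg_of_ae_nonneg_μ01 (hf.mono Ioo_subset_Icc_self |>.continuousOn isOpen_Ioo) ?_ hx
    filter_upwards [hfv, hv] with x hx hvx
    rwa [hx]
  have hcritical {x} (hx : x ∈ Ioo (0 : ℝ) 1) (hfx : f x = 0) : f' x = 0 := by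
    have hmin : IsLocalMin f x := by
      filter_upwards [Ioo_mem_nhds hx.1 hx.2] with y hy
      rw [hfx]
      exact hnonneg hy
    exact hmin.hasDerivAt_eq_zero (hff' x hx)
  have hderiv := (hf'.mono Ioo_subset_Icc_self).ae_hasDerivAt isOpen_Ioo
  have hnull := (countable_setOf_eq_and_hasDerivAt_ne_zero f' w 0).ae_notMem volume
  filter_upwards [ae_restrict_of_ae hnull, ae_restrict_of_ae hderiv, hfv, ae_μ01_mem_Ioo]
    with x hx hdx hfx hx01 hvx
  by_contra hwx
  exact hx ⟨hcritical hx01 (hfx.trans hvx), hdx hx01, hwx⟩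

theorem ae_nonneg_hasDerivAt_of_eq_zero {u : ℝ → Hsp} {u' : Hsp} {t : ℝ}
    (hu : ∀ᶠ s in nhds t, ∀ᵐ x ∂μ01, 0 ≤ u s x) (hu' : HasDerivAt u u' t) :
    ∀ᵐ x ∂μ01, u t x = 0 → 0 ≤ u' x := by
  have hmeas (v : Hsp) : Measurable v := (Lp.stronglyMeasurable v).measurable
  set A := {x | u t x = 0 ∧ u' x < 0}
  have hA : MeasurableSet A :=
    (hmeas (u t) (measurableSet_singleton 0)).inter (hmeas u' measurableSet_Iio)
  set ψ : Hsp := indicatorConstLp 2 hA (measure_ne_top μ01 A) (1 : ℝ) with hψ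
  have hinner (v : Hsp) : ⟪ψ, v⟫_ℝ = ∫ x in A, v x ∂μ01 := by
    rw [hψ, L2.inner_indicatorConstLp_one]
  have hderiv : HasDerivAt (fun s => ⟪ψ, u s⟫_ℝ) ⟪ψ, u'⟫_ℝ t :=
    (innerSL ℝ ψ).hasFDerivAt.comp_hasDerivAt t hu'
  have hmin : IsLocalMin (fun s => ⟪ψ, u s⟫_ℝ) t := by
    filter_upwards [hu] with s hs
    simp only [hinner]
    rw [setIntegral_eq_zero_of_forall_eq_zero fun x hx => hx.1]
    exact integral_nonneg_of_ae (ae_restrict_of_ae hs)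
  have hzero : ∫ x in A, -u' x ∂μ01 = 0 := by
    rw [integral_neg, ← hinner, hmin.hasDerivAt_eq_zero hderiv, neg_zero]
  have hnonneg : 0 ≤ᵐ[μ01.restrict A] fun x => -u' x := by
    filter_upwards [ae_restrict_mem hA] with x hx using neg_nonneg.2 hx.2.le
  have hvanish := (ae_restrict_iff' hA).1
    ((integral_eq_zero_iff_of_nonneg_ae hnonneg (Hsp_integrable u').neg.integrableOn).1 hzero)
  filter_upwards [hvanish] with x hx hux
  by_contra! hneg
  exact hneg.ne (neg_eq_zero.1 (hx ⟨hux, hneg⟩))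

section StrongSolution

variable {b ω : ℝ → ℝ} {τ : ℝ} {u r u' uxx : ℝ → Hsp}

theorem IsStrongSolutionWith.isPrimitiveOn (h : IsStrongSolutionWith b ω τ u r u' uxx) :
    IsPrimitiveOn u u' (Ioi τ) := by
  intro a ha c hc
  wlog hac : a < c generalizing a c
  · rcases (not_lt.1 hac).eq_or_lt with rfl | hca
    · simp
    obtain ⟨hint, heq⟩ := this c hc a ha hca
    exact ⟨hint.symm, by rw [intervalIntegral.integral_symm, ← heq, neg_sub]⟩
  obtain ⟨hint, heq⟩ := h.fund a c ha hac
  exact ⟨hint, by rw [heq c (right_mem_Icc.2 hac.le), add_sub_cancel_left]⟩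

theorem eq_of_mem_heaviside_of_pos {s η : ℝ} (hs : 0 < s) (hη : η ∈ heaviside s) : η = 1 := by
  simpa only [heaviside, not_lt.2 hs.le, hs.ne', if_false, mem_singleton_iff] using hη

/-- Where `u > 0` the selection is `b + ωu ≥ 0`; where `u = 0`, a minimum, it equals
`u_t - u_xx ≥ 0`. -/
theorem IsStrongSolutionWith.ae_selection_nonneg (h : IsStrongSolutionWith b ω τ u r u' uxx)
    (hb0 : ∀ t, 0 ≤ b t) (hω0 : ∀ t, 0 ≤ ω t) (hu : NonnegOn u τ) :
    ∀ᵐ t, t ∈ Ioi τ → 0 ≤ r t := by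
  rw [← ae_restrict_iff' measurableSet_Ioi]
  filter_upwards [h.sel, h.dom, h.eq, ae_restrict_mem measurableSet_Ioi,
    ae_restrict_of_ae (h.isPrimitiveOn.ae_hasDerivAt isOpen_Ioi)]
    with t hsel hdom heq ht hderiv
  have hut := hu t (le_of_lt ht)
  have hu' := ae_nonneg_hasDerivAt_of_eq_zero
    ((lt_mem_nhds (mem_Ioi.1 ht)).mono fun s hs => hu s hs.le) (hderiv ht)
  rw [heq] at hu'
  refine (Lp.coeFn_nonneg _).1 ?_
  filter_upwards [hsel, hdom.ae_eq_zero_of_eq_zero hut, hu', hut, Lp.coeFn_add (r t) (uxx t)]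
    with x hselx huxx hu'x hux hadd
  rw [Pi.zero_apply]
  rcases hux.eq_or_lt with hzero | hpos
  · simpa only [hadd, Pi.add_apply, huxx hzero.symm, add_zero] using hu'x hzero.symm
  · obtain ⟨η, hη, hr⟩ := hselx
    rw [hr, eq_of_mem_heaviside_of_pos hpos hη, mul_one]
    exact add_nonneg (hb0 t) (mul_nonneg (hω0 t) hux)

theorem IsStrongSolutionWith.isPrimitiveOn_inner_sineMode
    (h : IsStrongSolutionWith b ω τ u r u' uxx) (n : ℕ) :
    IsPrimitiveOn (fun t => ⟪u t, toHsp (sineMode n)⟫_ℝ)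
      (fun t => ⟪r t, toHsp (sineMode n)⟫_ℝ - eigval n * ⟪u t, toHsp (sineMode n)⟫_ℝ)
      (Ioi τ) := by
  have hinner : IsPrimitiveOn (fun t => ⟪u t, toHsp (sineMode n)⟫_ℝ)
      (fun t => ⟪u' t, toHsp (sineMode n)⟫_ℝ) (Ioi τ) := by
    simpa only [innerSL_apply_apply, real_inner_comm] using
      h.isPrimitiveOn.continuousLinearMap_comp (innerSL ℝ (toHsp (sineMode n)))
  refine hinner.congr_ae ?_
  filter_upwards [(ae_restrict_iff' measurableSet_Ioi).1 h.eq,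
    (ae_restrict_iff' measurableSet_Ioi).1 h.dom] with t heq hdom ht
  rw [heq ht, inner_add_left, (hdom ht).inner_sineMode]
  ring

end StrongSolution

/-! ### Series of modes -/

theorem summable_smul_of_norm_le {E : Type*} [NormedAddCommGroup E] [NormedSpace ℝ E]
    [CompleteSpace E] {d : ℕ → ℝ} {e : ℕ → E} {C : ℝ} (hd : Summable d) (he : ∀ n, ‖e n‖ ≤ C) :
    Summable fun n => d n • e n :=
  .of_norm_bounded (hd.abs.mul_right C) fun n => by
    rw [norm_smul, Real.norm_eq_abs]
    exact mul_le_mul_of_nonneg_left (he n) (abs_nonneg _)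

theorem hasSum_eval {X : Type*} [TopologicalSpace X] {f : ℕ → X →ᵇ ℝ} (hf : Summable f) (x : X) :
    HasSum (fun n => f n x) ((∑' n, f n) x) :=
  hf.hasSum.mapL (BoundedContinuousFunction.evalCLM ℝ x)

theorem hasSum_smul_toHsp {d : ℕ → ℝ} {e : ℕ → ℝ →ᵇ ℝ} (h : Summable fun n => d n • e n) :
    HasSum (fun n => d n • toHsp (e n)) (toHsp (∑' n, d n • e n)) := by
  simpa only [map_smul] using h.hasSum.mapL toHsp

theorem inner_right_of_hasSum_smul {E : Type*} [NormedAddCommGroup E] [InnerProductSpace ℝ E]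
    {v : ℕ → E} (hv : Orthonormal ℝ v) {d : ℕ → ℝ} {U : E} (h : HasSum (fun n => d n • v n) U)
    (m : ℕ) : ⟪U, v m⟫_ℝ = d m := by
  have hinner := h.mapL (innerSL ℝ (v m))
  simp only [innerSL_apply_apply, inner_smul_right, orthonormal_iff_ite.1 hv, mul_ite, mul_one,
    mul_zero] at hinner
  rw [real_inner_comm]
  exact hinner.unique (by simpa using hasSum_single m fun n hn => if_neg (Ne.symm hn))

theorem sq_succ_le_eigval (n : ℕ) : ((n : ℝ) + 1) ^ 2 ≤ eigval n :=
  pow_le_pow_left₀ (by positivity) (succ_le_freq n) 2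

theorem natCast_le_eigval (n : ℕ) : (n : ℝ) ≤ eigval n := by
  nlinarith [sq_succ_le_eigval n, n.cast_nonneg (α := ℝ)]

theorem summable_exp_neg_eigval_mul {s : ℝ} (hs : 0 < s) :
    Summable fun n => Real.exp (-eigval n * s) := by
  refine .of_nonneg_of_le (fun _ => (Real.exp_pos _).le) (fun n => Real.exp_le_exp.2 ?_)
    (Real.summable_exp_nat_mul_iff.2 (neg_neg_iff_pos.2 hs))
  nlinarith [mul_le_mul_of_nonneg_right (natCast_le_eigval n) hs.le]

theorem abs_inner_sineMode_le (f : Hsp) (n : ℕ) : |⟪f, toHsp (sineMode n)⟫_ℝ| ≤ ‖f‖ := by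
  simpa only [orthonormal_sineMode.1 n, mul_one] using
    abs_real_inner_le_norm f (toHsp (sineMode n))

/-! ### Analyticity of the heat flow -/

theorem norm_sin_le_exp_abs_im (z : ℂ) : ‖Complex.sin z‖ ≤ Real.exp |z.im| := by
  have hneg : ‖Complex.exp (-z * Complex.I)‖ ≤ Real.exp |z.im| := by
    rw [Complex.norm_exp, Real.exp_le_exp]
    simpa using le_abs_self z.im
  have hpos : ‖Complex.exp (z * Complex.I)‖ ≤ Real.exp |z.im| := by
    rw [Complex.norm_exp, Real.exp_le_exp]
    simpa using neg_le_abs z.im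
  rw [Complex.sin, norm_div, norm_mul, Complex.norm_I, mul_one, Complex.norm_ofNat]
  linarith [norm_sub_le (Complex.exp (-z * Complex.I)) (Complex.exp (z * Complex.I))]

theorem norm_mul_sin_freq_le {d C s R : ℝ} {n : ℕ} (hs : 0 < s)
    (hd : |d| ≤ C * Real.exp (-eigval n * s)) {z : ℂ} (hz : ‖z‖ ≤ R) :
    ‖(d : ℂ) * Complex.sin (freq n * z)‖ ≤
      C * Real.exp (R ^ 2 / (2 * s)) * Real.exp (-eigval n * (s / 2)) := by
  have hC : 0 ≤ C := nonneg_of_mul_nonneg_left ((abs_nonneg d).trans hd) (Real.exp_pos _)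
  have hsin : ‖Complex.sin (freq n * z)‖ ≤ Real.exp (freq n * R) := by
    refine (norm_sin_le_exp_abs_im _).trans (Real.exp_le_exp.2 ?_)
    rw [Complex.im_ofReal_mul, abs_mul, abs_of_pos (freq_pos n)]
    exact mul_le_mul_of_nonneg_left ((Complex.abs_im_le_norm z).trans hz) (freq_pos n).le
  have hexponent : -eigval n * s + freq n * R ≤ R ^ 2 / (2 * s) + -eigval n * (s / 2) := by
    have hsq : 0 ≤ (R - freq n * s) ^ 2 / (2 * s) := by positivity
    have hexpand : (R - freq n * s) ^ 2 / (2 * s) =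
        R ^ 2 / (2 * s) - freq n * R + eigval n * (s / 2) := by
      unfold eigval
      field_simp
      ring
    linarith
  calc ‖(d : ℂ) * Complex.sin (freq n * z)‖
      ≤ C * Real.exp (-eigval n * s) * Real.exp (freq n * R) := by
        rw [norm_mul, Complex.norm_real, Real.norm_eq_abs]
        gcongr
    _ = C * Real.exp (-eigval n * s + freq n * R) := by rw [Real.exp_add, mul_assoc]
    _ ≤ C * Real.exp (R ^ 2 / (2 * s) + -eigval n * (s / 2)) := by gcongr
    _ = _ := by rw [Real.exp_add, mul_assoc]

theorem analyticOnNhd_tsum_mul_sin {d : ℕ → ℝ} {C s : ℝ} (hs : 0 < s)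
    (hd : ∀ n, |d n| ≤ C * Real.exp (-eigval n * s)) :
    AnalyticOnNhd ℝ (fun x : ℝ => ∑' n, d n * Real.sin (freq n * x)) univ := by
  set F : ℂ → ℂ := fun z => ∑' n, (d n : ℂ) * Complex.sin (freq n * z)
  have hdiff : Differentiable ℂ F := fun z => by
    have hball : DifferentiableOn ℂ F (Metric.ball 0 (‖z‖ + 1)) :=
      Complex.differentiableOn_tsum_of_summable_norm
        ((summable_exp_neg_eigval_mul (half_pos hs)).mul_left _) (fun n => by fun_prop)
        Metric.isOpen_ball fun n w hw =>
          norm_mul_sin_freq_le hs (hd n) (mem_ball_zero_iff.1 hw).le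
    exact hball.differentiableAt (Metric.isOpen_ball.mem_nhds (by simp))
  have hreal : (fun x : ℝ => ∑' n, d n * Real.sin (freq n * x)) = fun x : ℝ => (F x).re := by
    ext x
    have hcast : F x = ((∑' n, d n * Real.sin (freq n * x) : ℝ) : ℂ) := by
      simp only [F, Complex.ofReal_tsum, Complex.ofReal_mul, Complex.ofReal_sin]
    rw [hcast, Complex.ofReal_re]
  rw [hreal]
  intro x _
  have hF : AnalyticAt ℝ F (Complex.ofRealCLM x) := (hdiff.analyticAt _).restrictScalars
  exact (Complex.reCLM.analyticAt _).comp (hF.comp (Complex.ofRealCLM.analyticAt x))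

theorem ae_ne_zero_of_analyticOnNhd {F : ℝ → ℝ} (hF : AnalyticOnNhd ℝ F univ) {x₀ : ℝ}
    (hx₀ : F x₀ ≠ 0) : ∀ᵐ x, F x ≠ 0 := by
  have hcodiscrete :=
    (hF.eqOn_zero_or_eventually_ne_zero_of_preconnected isPreconnected_univ).resolve_left
      fun h => hx₀ (h (mem_univ x₀))
  rw [← Measure.restrict_univ (μ := volume)]
  exact ae_restrict_le_codiscreteWithin MeasurableSet.univ hcodiscrete

/-- The Dirichlet heat semigroup `e^{sΔ}`, for `s > 0`. -/
def heatFlow (f : Hsp) (s : ℝ) : ℝ →ᵇ ℝ :=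
  ∑' n, (Real.exp (-eigval n * s) * ⟪f, toHsp (sineMode n)⟫_ℝ) • sineMode n

section HeatFlow

variable {f : Hsp} {s : ℝ}

theorem abs_heatFlow_coeff_le (f : Hsp) (s : ℝ) (n : ℕ) :
    |Real.exp (-eigval n * s) * ⟪f, toHsp (sineMode n)⟫_ℝ| ≤
      ‖f‖ * Real.exp (-eigval n * s) := by
  rw [abs_mul, Real.abs_exp, mul_comm]
  exact mul_le_mul_of_nonneg_right (abs_inner_sineMode_le f n) (Real.exp_pos _).le

theorem summable_heatFlow (f : Hsp) (hs : 0 < s) :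
    Summable fun n => (Real.exp (-eigval n * s) * ⟪f, toHsp (sineMode n)⟫_ℝ) • sineMode n :=
  summable_smul_of_norm_le
    (.of_norm_bounded ((summable_exp_neg_eigval_mul hs).mul_left ‖f‖) (abs_heatFlow_coeff_le f s))
    norm_sineMode_le

theorem inner_heatFlow_sineMode (f : Hsp) (hs : 0 < s) (n : ℕ) :
    ⟪toHsp (heatFlow f s), toHsp (sineMode n)⟫_ℝ =
      Real.exp (-eigval n * s) * ⟪f, toHsp (sineMode n)⟫_ℝ :=
  inner_right_of_hasSum_smul orthonormal_sineMode (hasSum_smul_toHsp (summable_heatFlow f hs)) n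

theorem inner_heatFlow_heatSum (f : Hsp) (hs : 0 < s) (a : ℕ →₀ ℝ) :
    ⟪toHsp (heatFlow f s), toHsp (heatSum a 0)⟫_ℝ = ⟪f, toHsp (heatSum a s)⟫_ℝ := by
  simp only [inner_toHsp_heatSum, inner_heatFlow_sineMode f hs, mul_zero, Real.exp_zero, one_mul]

theorem inner_toHsp_nonneg {f : Hsp} {g : ℝ →ᵇ ℝ} (hf : 0 ≤ f)
    (hg : ∀ x ∈ Icc (0 : ℝ) 1, 0 ≤ g x) : 0 ≤ ⟪f, toHsp g⟫_ℝ := by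
  rw [L2.inner_def]
  refine integral_nonneg_of_ae ?_
  filter_upwards [(Lp.coeFn_nonneg f).2 hf, coeFn_toHsp g, ae_μ01_mem_Ioo] with x hfx hgx hx
  simpa only [hgx, RCLike.inner_apply, conj_trivial, Pi.zero_apply] using
    mul_nonneg (hg x (Ioo_subset_Icc_self hx)) hfx

theorem toHsp_heatFlow_nonneg (hf : 0 ≤ f) (hs : 0 < s) : 0 ≤ toHsp (heatFlow f s) :=
  Hsp_nonneg_of_inner_heatSum_nonneg fun a ha => by
    rw [inner_heatFlow_heatSum f hs]
    exact inner_toHsp_nonneg hf fun x hx => heatSum_nonneg a ha hs.le hx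

theorem ae_heatFlow_ne_zero (hf : f ≠ 0) (hs : 0 < s) : ∀ᵐ x, heatFlow f s x ≠ 0 := by
  have happly : ⇑(heatFlow f s) = fun x => ∑' n,
      √2 * (Real.exp (-eigval n * s) * ⟪f, toHsp (sineMode n)⟫_ℝ) * Real.sin (freq n * x) := by
    ext x
    rw [heatFlow, ← (hasSum_eval (summable_heatFlow f hs) x).tsum_eq]
    refine tsum_congr fun n => ?_
    simp only [BoundedContinuousFunction.coe_smul, smul_eq_mul, sineMode_apply]
    ring
  have hanalytic : AnalyticOnNhd ℝ (heatFlow f s) univ := by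
    rw [happly]
    refine analyticOnNhd_tsum_mul_sin (C := √2 * ‖f‖) hs fun n => ?_
    rw [abs_mul, abs_of_pos (by positivity), mul_assoc]
    exact mul_le_mul_of_nonneg_left (abs_heatFlow_coeff_le f s n) (by positivity)
  have hne : heatFlow f s ≠ 0 := fun hzero => by
    refine hf (Hsp_eq_zero_of_inner_sineMode_eq_zero fun n => ?_)
    have hn := inner_heatFlow_sineMode f hs n
    rw [hzero, map_zero, inner_zero_left, zero_eq_mul] at hn
    exact hn.resolve_left (Real.exp_ne_zero _)
  obtain ⟨x₀, hx₀⟩ := DFunLike.ne_iff.1 hne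
  exact ae_ne_zero_of_analyticOnNhd hanalytic hx₀

end HeatFlow

theorem IsPrimitiveOn.exp_neg_mul_sub_mul {f r : ℝ → ℝ} {S : Set ℝ} [S.OrdConnected] {l : ℝ}
    (h : IsPrimitiveOn f (fun t => r t - l * f t) S) (T : ℝ) :
    IsPrimitiveOn (fun t => Real.exp (-l * (T - t)) * f t)
      (fun t => Real.exp (-l * (T - t)) * r t) S := by
  have hexp : IsPrimitiveOn (fun t => Real.exp (-l * (T - t)))
      (fun t => l * Real.exp (-l * (T - t))) S :=
    .of_hasDerivAt (fun t _ =>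
      ((((hasDerivAt_id t).const_sub T).const_mul (-l)).exp).congr_deriv (by simp; ring))
      (by fun_prop)
  convert hexp.mul h using 1
  ext t
  ring

section Positivity

variable {b ω : ℝ → ℝ} {τ : ℝ} {u r u' uxx : ℝ → Hsp}

theorem IsStrongSolutionWith.heatFlow_le (h : IsStrongSolutionWith b ω τ u r u' uxx)
    (hb0 : ∀ t, 0 ≤ b t) (hω0 : ∀ t, 0 ≤ ω t) (hu : NonnegOn u τ) {t₀ T : ℝ}
    (ht₀ : τ < t₀) (hT : t₀ < T) :
    toHsp (heatFlow (u t₀) (T - t₀)) ≤ u T := by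
  rw [← sub_nonneg]
  refine Hsp_nonneg_of_inner_heatSum_nonneg fun a ha => ?_
  have hduhamel (n : ℕ) :=
    (h.isPrimitiveOn_inner_sineMode n).exp_neg_mul_sub_mul T t₀ ht₀ T (ht₀.trans hT)
  have hprim : ⟪u T, toHsp (heatSum a 0)⟫_ℝ - ⟪u t₀, toHsp (heatSum a (T - t₀))⟫_ℝ =
      ∫ t in t₀..T, ⟪r t, toHsp (heatSum a (T - t))⟫_ℝ := by
    simp only [inner_toHsp_heatSum]
    rw [intervalIntegral.integral_finsetSum fun n _ => (hduhamel n).1.const_mul _,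
      ← Finset.sum_sub_distrib]
    refine Finset.sum_congr rfl fun n _ => ?_
    rw [intervalIntegral.integral_const_mul, ← (hduhamel n).2, ← mul_sub]
    simp only [sub_self, mul_zero]
  rw [inner_sub_left, inner_heatFlow_heatSum _ (sub_pos.2 hT), hprim]
  refine intervalIntegral.integral_nonneg_of_ae_restrict hT.le ?_
  filter_upwards [ae_restrict_of_ae (h.ae_selection_nonneg hb0 hω0 hu),
    ae_restrict_mem measurableSet_Icc] with t hr ht
  exact inner_toHsp_nonneg (hr (ht₀.trans_le ht.1)) fun x hx =>
    heatSum_nonneg a ha (sub_nonneg.2 ht.2) hx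

theorem IsStrongSolutionWith.ae_pos (h : IsStrongSolutionWith b ω τ u r u' uxx)
    (hb0 : ∀ t, 0 ≤ b t) (hω0 : ∀ t, 0 ≤ ω t) (hu : NonnegOn u τ) (h0 : 0 < ‖u τ‖)
    {T : ℝ} (hT : τ < T) :
    ∀ᵐ x ∂μ01, 0 < u T x := by
  obtain ⟨t₀, hne, ht₀, ht₀T⟩ : ∃ t, u t ≠ 0 ∧ t ∈ Ioo τ T :=
    ((((h.cont τ self_mem_Ici).mono Ioi_subset_Ici_self).eventually_ne (norm_pos_iff.1 h0)).and
      (Ioo_mem_nhdsGT hT)).exists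
  have hs : 0 < T - t₀ := sub_pos.2 ht₀T
  have hflow := toHsp_heatFlow_nonneg ((Lp.coeFn_nonneg (u t₀)).1 (hu t₀ ht₀.le)) hs
  filter_upwards [(Lp.coeFn_nonneg _).2 hflow,
    (Lp.coeFn_le _ _).2 (h.heatFlow_le hb0 hω0 hu ht₀ ht₀T),
    coeFn_toHsp (heatFlow (u t₀) (T - t₀)), ae_restrict_of_ae (ae_heatFlow_ne_zero hne hs)]
    with x hnonneg hle hx hne
  rw [hx] at hnonneg hle
  exact (lt_of_le_of_ne hnonneg hne.symm).trans_le hle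

/-- The constant function `1` in `H`. -/
def oneHsp : Hsp :=
  toHsp (BoundedContinuousFunction.const ℝ 1)

theorem IsStrongSolutionWith.ae_selection_eq (h : IsStrongSolutionWith b ω τ u r u' uxx)
    (hb0 : ∀ t, 0 ≤ b t) (hω0 : ∀ t, 0 ≤ ω t) (hu : NonnegOn u τ) (h0 : 0 < ‖u τ‖) :
    ∀ᵐ t, t ∈ Ioi τ → r t = b t • oneHsp + ω t • u t := by
  filter_upwards [(ae_restrict_iff' measurableSet_Ioi).1 h.sel] with t hsel ht
  refine Lp.ext ?_
  filter_upwards [hsel ht, h.ae_pos hb0 hω0 hu h0 ht,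
    coeFn_toHsp (BoundedContinuousFunction.const ℝ 1), Lp.coeFn_add (b t • oneHsp) (ω t • u t),
    Lp.coeFn_smul (b t) oneHsp, Lp.coeFn_smul (ω t) (u t)] with x hselx hpos hone hadd hb hω
  obtain ⟨η, hη, hr⟩ := hselx
  rw [hr, eq_of_mem_heaviside_of_pos hpos hη, hadd, Pi.add_apply, hb, hω, Pi.smul_apply,
    Pi.smul_apply, oneHsp, hone, BoundedContinuousFunction.const_apply, smul_eq_mul, smul_eq_mul]

/-- The sine coefficients of the constant function `1`. -/
def oneCoeff (n : ℕ) : ℝ :=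
  ⟪oneHsp, toHsp (sineMode n)⟫_ℝ

theorem IsStrongSolutionWith.hasDerivAt_inner_sineMode
    (h : IsStrongSolutionWith b ω τ u r u' uxx) (hbc : Continuous b)
    (hωc : Continuous ω) (hb0 : ∀ t, 0 ≤ b t) (hω0 : ∀ t, 0 ≤ ω t) (hu : NonnegOn u τ)
    (h0 : 0 < ‖u τ‖) (n : ℕ) {t : ℝ} (ht : τ < t) :
    HasDerivAt (fun t => ⟪u t, toHsp (sineMode n)⟫_ℝ)
      (-eigval n * ⟪u t, toHsp (sineMode n)⟫_ℝ + ω t * ⟪u t, toHsp (sineMode n)⟫_ℝ +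
        b t * oneCoeff n) t := by
  have hprim : IsPrimitiveOn (fun t => ⟪u t, toHsp (sineMode n)⟫_ℝ)
      (fun t => -eigval n * ⟪u t, toHsp (sineMode n)⟫_ℝ + ω t * ⟪u t, toHsp (sineMode n)⟫_ℝ +
        b t * oneCoeff n) (Ioi τ) := by
    refine (h.isPrimitiveOn_inner_sineMode n).congr_ae ?_
    filter_upwards [h.ae_selection_eq hb0 hω0 hu h0] with t hr ht
    rw [hr ht, inner_add_left, real_inner_smul_left, real_inner_smul_left, oneCoeff]
    ring
  refine hprim.hasDerivAt isOpen_Ioi ?_ ht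
  have := hprim.continuousOn isOpen_Ioi
  have := hbc.continuousOn (s := Ioi τ)
  have := hωc.continuousOn (s := Ioi τ)
  fun_prop

end Positivity

/-! ### Decay of the sine coefficients -/

theorem one_le_freq (n : ℕ) : 1 ≤ freq n := by
  linarith [succ_le_freq n, n.cast_nonneg (α := ℝ)]

theorem one_le_eigval (n : ℕ) : 1 ≤ eigval n :=
  one_le_pow₀ (one_le_freq n)

theorem abs_oneCoeff_le (n : ℕ) : |oneCoeff n| ≤ 4 / freq n := by
  have hfreq := freq_pos n
  have hcoeff : oneCoeff n = √2 * (1 - Real.cos (freq n)) / freq n := by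
    rw [oneCoeff, oneHsp, inner_toLp_toLp, integral_μ01]
    simp only [BoundedContinuousFunction.const_apply, sineMode_apply, one_mul]
    rw [intervalIntegral.integral_const_mul,
      intervalIntegral.integral_comp_mul_left _ hfreq.ne', integral_sin]
    simp only [mul_zero, mul_one, Real.cos_zero, smul_eq_mul]
    ring
  have hcos : |1 - Real.cos (freq n)| ≤ 2 :=
    abs_le.2 ⟨by linarith [Real.cos_le_one (freq n)], by linarith [Real.neg_one_le_cos (freq n)]⟩
  have hsqrt : √2 ≤ 2 := Real.sqrt_le_left (by norm_num) |>.2 (by norm_num)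
  rw [hcoeff, abs_div, abs_mul, abs_of_pos hfreq, abs_of_nonneg (Real.sqrt_nonneg 2)]
  gcongr
  calc √2 * |1 - Real.cos (freq n)| ≤ 2 * 2 := by gcongr
    _ = 4 := by norm_num

theorem exp_neg_eigval_mul_mul_pow_le (m n : ℕ) {s : ℝ} (hs : 0 < s) :
    Real.exp (-eigval n * s) * eigval n ^ m ≤ m.factorial / s ^ m := by
  have hpow := Real.pow_div_factorial_le_exp (eigval n * s) (mul_pos (eigval_pos n) hs).le m
  rw [div_le_iff₀ (by positivity), mul_pow] at hpow
  rw [neg_mul, Real.exp_neg, inv_mul_le_iff₀ (Real.exp_pos _), mul_div_assoc',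
    le_div_iff₀ (by positivity)]
  exact hpow

theorem exp_neg_eigval_mul_mul_sq_le {n p : ℕ} {s M y : ℝ} (hs : 0 < s)
    (hy : |y| ≤ M * eigval n ^ p) :
    Real.exp (-eigval n * s) * y ^ 2 ≤
      M ^ 2 * ((p + p + 2).factorial / s ^ (p + p + 2)) / eigval n ^ 2 := by
  have := eigval_pos n
  calc Real.exp (-eigval n * s) * y ^ 2
      ≤ Real.exp (-eigval n * s) * (M * eigval n ^ p) ^ 2 := by
        rw [← sq_abs y]
        gcongr
    _ = M ^ 2 * (Real.exp (-eigval n * s) * eigval n ^ (p + p + 2)) / eigval n ^ 2 := by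
        field_simp
        ring
    _ ≤ _ := by
        gcongr
        exact exp_neg_eigval_mul_mul_pow_le _ n hs

section Relaxation

variable {S : Set ℝ} {l c : ℝ} {y g : ℝ → ℝ} {t₀ t : ℝ}

theorem MemL2LocOn.intervalIntegrable_sq (hg : MemL2LocOn g S) (ht₀ : t₀ ∈ S) (ht : t ∈ S)
    (hle : t₀ ≤ t) : IntervalIntegrable (fun s => g s ^ 2) volume t₀ t :=
  (intervalIntegrable_iff_integrableOn_Icc_of_le hle).2 (hg t₀ ht₀ t ht).integrable_sq

variable [S.OrdConnected]

theorem sq_le_exp_mul_sq_add_of_isPrimitiveOn (hl : 0 < l)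
    (hy : IsPrimitiveOn y (fun s => -l * y s + c * g s) S) (hg : MemL2LocOn g S)
    (ht₀ : t₀ ∈ S) (ht : t ∈ S) (hle : t₀ ≤ t) :
    y t ^ 2 ≤ Real.exp (-l * (t - t₀)) * y t₀ ^ 2 + c ^ 2 / l * ∫ s in t₀..t, g s ^ 2 := by
  have hsq : IsPrimitiveOn (fun s => y s ^ 2)
      (fun s => (2 * c * g s * y s - l * y s ^ 2) - l * y s ^ 2) S := by
    convert hy.mul hy using 1 <;> ext s <;> ring
  obtain ⟨hint, heq⟩ := hsq.exp_neg_mul_sub_mul t t₀ ht₀ t ht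
  simp only [sub_self, mul_zero, Real.exp_zero, one_mul] at heq
  have hmono : ∫ s in t₀..t, Real.exp (-l * (t - s)) * (2 * c * g s * y s - l * y s ^ 2) ≤
      ∫ s in t₀..t, c ^ 2 / l * g s ^ 2 := by
    refine intervalIntegral.integral_mono_on hle hint
      ((hg.intervalIntegrable_sq ht₀ ht hle).const_mul _) fun s hs => ?_
    have hyoung : 2 * c * g s * y s - l * y s ^ 2 ≤ c ^ 2 / l * g s ^ 2 := by
      have hdiv : 0 ≤ (l * y s - c * g s) ^ 2 / l := by positivity
      have hexpand : (l * y s - c * g s) ^ 2 / l =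
          l * y s ^ 2 - 2 * c * g s * y s + c ^ 2 / l * g s ^ 2 := by
        field_simp
        ring
      linarith
    calc Real.exp (-l * (t - s)) * (2 * c * g s * y s - l * y s ^ 2)
        ≤ Real.exp (-l * (t - s)) * (c ^ 2 / l * g s ^ 2) := by gcongr
      _ ≤ c ^ 2 / l * g s ^ 2 := mul_le_of_le_one_left (by positivity)
          (Real.exp_le_one_iff.2 (by nlinarith [hs.2]))
  rw [intervalIntegral.integral_const_mul] at hmono
  linarith

theorem integral_sq_le_of_isPrimitiveOn (hl : 0 ≤ l)
    (hy : IsPrimitiveOn y (fun s => -l * y s + c * g s) S) (hg : MemL2LocOn g S)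
    (ht₀ : t₀ ∈ S) (ht : t ∈ S) (hle : t₀ ≤ t) :
    ∫ s in t₀..t, (-l * y s + c * g s) ^ 2 ≤ l * y t₀ ^ 2 + c ^ 2 * ∫ s in t₀..t, g s ^ 2 := by
  have hsq : IsPrimitiveOn (fun s => y s ^ 2) (fun s => 2 * y s * (-l * y s + c * g s)) S := by
    convert hy.mul hy using 1 <;> ext s <;> ring
  obtain ⟨hint, heq⟩ := hsq t₀ ht₀ t ht
  have hgint := (hg.intervalIntegrable_sq ht₀ ht hle).const_mul (c ^ 2)
  calc ∫ s in t₀..t, (-l * y s + c * g s) ^ 2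
      ≤ ∫ s in t₀..t, (c ^ 2 * g s ^ 2 - l * (2 * y s * (-l * y s + c * g s))) := by
        simp only [intervalIntegral.integral_of_le hle]
        refine integral_mono_of_nonneg (ae_of_all _ fun s => sq_nonneg _)
          (hgint.sub (hint.const_mul l)).1 (ae_of_all _ fun s => ?_)
        nlinarith [sq_nonneg (l * y s)]
    _ = c ^ 2 * (∫ s in t₀..t, g s ^ 2) - l * (y t ^ 2 - y t₀ ^ 2) := by
        rw [intervalIntegral.integral_sub hgint (hint.const_mul l),
          intervalIntegral.integral_const_mul, intervalIntegral.integral_const_mul, heq]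
    _ ≤ l * y t₀ ^ 2 + c ^ 2 * ∫ s in t₀..t, g s ^ 2 := by
        nlinarith [mul_nonneg hl (sq_nonneg (y t))]

end Relaxation

/-- The functions `a n` on `(τ,∞)` are the sine coefficients of a solution of the heat equation
`D_t = D_xx + β 0` whose source is constant in space, and `β 0, …, β (k + 1)` are the successive
time derivatives of the source, the last one in `L²_loc`. -/
structure IsHeatCoeff (τ : ℝ) (k : ℕ) (β : ℕ → ℝ → ℝ) (a : ℕ → ℝ → ℝ) : Prop where
  hasDerivAt : ∀ n, ∀ t ∈ Ioi τ, HasDerivAt (a n) (-eigval n * a n t + oneCoeff n * β 0 t) t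
  bounded : ∀ t ∈ Ioi τ, ∃ M, ∀ n, |a n t| ≤ M
  isPrimitiveOn : ∀ j ≤ k, IsPrimitiveOn (β j) (β (j + 1)) (Ioi τ)
  memL2LocOn : MemL2LocOn (β (k + 1)) (Ioi τ)

/-- The `n`-th sine coefficient of the `j`-th time derivative of the solution with sine
coefficients `a`. It is read off the equation, so that it makes sense before any time
regularity is known. -/
def derivCoeff (β : ℕ → ℝ → ℝ) (a : ℕ → ℝ → ℝ) : ℕ → ℕ → ℝ → ℝ
  | 0, n, t => a n t
  | j + 1, n, t => -eigval n * derivCoeff β a j n t + oneCoeff n * β j t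

/-- The decay `A n t = O(freq n ^ -p)`, uniformly for `t` in compact intervals with endpoints
in `S`. -/
def HasDecayOn (p : ℕ) (A : ℕ → ℝ → ℝ) (S : Set ℝ) : Prop :=
  ∀ a ∈ S, ∀ c ∈ S, ∃ C, 0 ≤ C ∧ ∀ n, ∀ t ∈ Icc a c, |A n t| ≤ C / freq n ^ p

theorem HasDecayOn.of_le {p q : ℕ} {A : ℕ → ℝ → ℝ} {S : Set ℝ} (h : HasDecayOn q A S)
    (hpq : p ≤ q) : HasDecayOn p A S := by
  intro a ha c hc
  obtain ⟨C, hC, hA⟩ := h a ha c hc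
  refine ⟨C, hC, fun n t ht => (hA n t ht).trans ?_⟩
  have := freq_pos n
  gcongr
  exact one_le_freq n

namespace IsHeatCoeff

variable {τ : ℝ} {k : ℕ} {β : ℕ → ℝ → ℝ} {a : ℕ → ℝ → ℝ}

theorem continuousOn_source (h : IsHeatCoeff τ k β a) {j : ℕ} (hj : j ≤ k) :
    ContinuousOn (β j) (Ioi τ) :=
  (h.isPrimitiveOn j hj).continuousOn isOpen_Ioi

theorem isPrimitiveOn_derivCoeff (h : IsHeatCoeff τ k β a) (n : ℕ) {j : ℕ} (hj : j ≤ k + 1) :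
    IsPrimitiveOn (derivCoeff β a j n) (derivCoeff β a (j + 1) n) (Ioi τ) := by
  induction j with
  | zero =>
    refine .of_hasDerivAt (h.hasDerivAt n) ?_
    have ha : ContinuousOn (a n) (Ioi τ) := HasDerivAt.continuousOn (h.hasDerivAt n)
    exact (ha.const_mul _).add ((h.continuousOn_source k.zero_le).const_mul _)
  | succ j ih =>
    exact ((ih (by lia)).const_mul (-eigval n)).add
      ((h.isPrimitiveOn j (by lia)).const_mul (oneCoeff n))

theorem continuousOn_derivCoeff (h : IsHeatCoeff τ k β a) (n : ℕ) {j : ℕ} (hj : j ≤ k + 1) :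
    ContinuousOn (derivCoeff β a j n) (Ioi τ) :=
  (h.isPrimitiveOn_derivCoeff n hj).continuousOn isOpen_Ioi

theorem hasDerivAt_derivCoeff (h : IsHeatCoeff τ k β a) (n : ℕ) {j : ℕ} (hj : j ≤ k) {t : ℝ}
    (ht : t ∈ Ioi τ) : HasDerivAt (derivCoeff β a j n) (derivCoeff β a (j + 1) n t) t :=
  (h.isPrimitiveOn_derivCoeff n (by lia)).hasDerivAt isOpen_Ioi
    (h.continuousOn_derivCoeff n (by lia)) ht

theorem exists_abs_derivCoeff_le (h : IsHeatCoeff τ k β a) {t : ℝ} (ht : t ∈ Ioi τ) (j : ℕ) :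
    ∃ M, 0 ≤ M ∧ ∀ n, |derivCoeff β a j n t| ≤ M * eigval n ^ j := by
  induction j with
  | zero =>
    obtain ⟨M, hM⟩ := h.bounded t ht
    exact ⟨M, (abs_nonneg _).trans (hM 0), fun n => by simpa [derivCoeff] using hM n⟩
  | succ j ih =>
    obtain ⟨M, hM0, hM⟩ := ih
    refine ⟨M + 4 * |β j t|, by positivity, fun n => ?_⟩
    have hone : |oneCoeff n| ≤ 4 * eigval n ^ (j + 1) :=
      calc |oneCoeff n| ≤ 4 / freq n := abs_oneCoeff_le n
        _ ≤ 4 * 1 := by rw [mul_one]; exact div_le_self (by norm_num) (one_le_freq n)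
        _ ≤ 4 * eigval n ^ (j + 1) := by gcongr; exact one_le_pow₀ (one_le_eigval n)
    calc |derivCoeff β a (j + 1) n t|
        ≤ eigval n * |derivCoeff β a j n t| + |oneCoeff n| * |β j t| := by
          refine (abs_add_le _ _).trans_eq ?_
          rw [abs_mul, abs_mul, abs_neg, abs_of_pos (eigval_pos n)]
      _ ≤ eigval n * (M * eigval n ^ j) + 4 * eigval n ^ (j + 1) * |β j t| := by
          have := eigval_pos n
          gcongr
          exact hM n
      _ = (M + 4 * |β j t|) * eigval n ^ (j + 1) := by ring

theorem hasDecayOn_derivCoeff_succ (h : IsHeatCoeff τ k β a) :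
    HasDecayOn 2 (derivCoeff β a (k + 1)) (Ioi τ) := by
  intro t₁ (ht₁ : τ < t₁) T hT
  obtain ⟨t₀, ht₀, ht₀₁⟩ := exists_between ht₁
  obtain ⟨M, -, hM⟩ := h.exists_abs_derivCoeff_le ht₀ (k + 1)
  set B := M ^ 2 * ((k + 1 + (k + 1) + 2).factorial / (t₁ - t₀) ^ (k + 1 + (k + 1) + 2))
  set G := ∫ s in Icc t₀ T, β (k + 1) s ^ 2
  have hs : 0 < t₁ - t₀ := sub_pos.2 ht₀₁
  have : 0 ≤ G := integral_nonneg fun _ => sq_nonneg _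
  refine ⟨√(B + 16 * G), Real.sqrt_nonneg _, fun n t ht => ?_⟩
  have hlam := eigval_pos n
  have hfreq := freq_pos n
  have henergy := sq_le_exp_mul_sq_add_of_isPrimitiveOn hlam
    (h.isPrimitiveOn_derivCoeff n le_rfl) h.memL2LocOn ht₀ (ht₁.trans_le ht.1)
    (ht₀₁.le.trans ht.1)
  have hinitial : Real.exp (-eigval n * (t - t₀)) * derivCoeff β a (k + 1) n t₀ ^ 2 ≤
      B / eigval n ^ 2 := by
    refine le_trans ?_ (exp_neg_eigval_mul_mul_sq_le hs (hM n))
    gcongr ?_ * _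
    exact Real.exp_le_exp.2 (by nlinarith [ht.1])
  have hsource : oneCoeff n ^ 2 / eigval n * ∫ s in t₀..t, β (k + 1) s ^ 2 ≤
      16 * G / eigval n ^ 2 :=
    calc oneCoeff n ^ 2 / eigval n * ∫ s in t₀..t, β (k + 1) s ^ 2
        ≤ (4 / freq n) ^ 2 / eigval n * G := by
          rw [← sq_abs (oneCoeff n), intervalIntegral.integral_of_le (ht₀₁.le.trans ht.1)]
          gcongr ?_ ^ 2 / _ * ?_
          · exact abs_oneCoeff_le n
          · exact setIntegral_mono_set
              (h.memL2LocOn t₀ ht₀ T hT).integrable_sq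
              (ae_of_all _ fun _ => sq_nonneg _)
              (Ioc_subset_Icc_self.trans (Icc_subset_Icc_right ht.2)).eventuallyLE
      _ = 16 * G / eigval n ^ 2 := by
          unfold eigval
          field_simp
          ring
  refine abs_le_of_sq_le_sq ?_ (by positivity)
  calc derivCoeff β a (k + 1) n t ^ 2 ≤ B / eigval n ^ 2 + 16 * G / eigval n ^ 2 := by linarith
    _ = (√(B + 16 * G) / freq n ^ 2) ^ 2 := by
        rw [div_pow, Real.sq_sqrt (by positivity), ← add_div, eigval]

theorem hasDecayOn_derivCoeff_of_succ (h : IsHeatCoeff τ k β a) {j : ℕ} (hj : j ≤ k)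
    (hdecay : HasDecayOn 2 (derivCoeff β a (j + 1)) (Ioi τ)) :
    HasDecayOn 3 (derivCoeff β a j) (Ioi τ) := by
  intro t₁ ht₁ T hT
  obtain ⟨C, hC0, hC⟩ := hdecay.of_le one_le_two t₁ ht₁ T hT
  obtain ⟨B, hB⟩ := isCompact_Icc.exists_bound_of_continuousOn
    ((h.continuousOn_source hj).mono (ordConnected_Ioi.out ht₁ hT))
  refine ⟨4 * |B| + C, by positivity, fun n t ht => ?_⟩
  have hfreq := freq_pos n
  have hsolve : derivCoeff β a j n t =
      (oneCoeff n * β j t - derivCoeff β a (j + 1) n t) / eigval n := by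
    rw [derivCoeff, eq_div_iff (eigval_pos n).ne']
    ring
  rw [hsolve, abs_div, abs_of_pos (eigval_pos n), eigval, div_le_iff₀ (by positivity)]
  calc |oneCoeff n * β j t - derivCoeff β a (j + 1) n t|
      ≤ 4 / freq n * |B| + C / freq n ^ 1 := by
        refine (abs_sub _ _).trans ?_
        rw [abs_mul]
        refine add_le_add (mul_le_mul (abs_oneCoeff_le n) ?_ (abs_nonneg _) (by positivity))
          (hC n t ht)
        exact (hB t ht).trans (le_abs_self B)
    _ = (4 * |B| + C) / freq n ^ 3 * freq n ^ 2 := by field_simp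

theorem hasDecayOn_two (h : IsHeatCoeff τ k β a) {j : ℕ} (hj : j ≤ k + 1) :
    HasDecayOn 2 (derivCoeff β a j) (Ioi τ) := by
  induction hj using Nat.decreasingInduction with
  | self => exact h.hasDecayOn_derivCoeff_succ
  | of_succ j hj ih =>
    exact (h.hasDecayOn_derivCoeff_of_succ (by lia) ih).of_le (by norm_num)

theorem hasDecayOn_three (h : IsHeatCoeff τ k β a) {j : ℕ} (hj : j ≤ k) :
    HasDecayOn 3 (derivCoeff β a j) (Ioi τ) :=
  h.hasDecayOn_derivCoeff_of_succ hj (h.hasDecayOn_two (by lia))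

theorem exists_integral_sq_derivCoeff_le (h : IsHeatCoeff τ k β a) {t₁ T : ℝ}
    (ht₁ : t₁ ∈ Ioi τ) (hT : t₁ ≤ T) :
    ∃ C, 0 ≤ C ∧ ∀ n, ∫ t in t₁..T, derivCoeff β a (k + 2) n t ^ 2 ≤ C / freq n ^ 2 := by
  obtain ⟨C, _, hC⟩ := h.hasDecayOn_two le_rfl t₁ ht₁ T (ht₁.trans_le hT)
  set G := ∫ s in t₁..T, β (k + 1) s ^ 2
  have : 0 ≤ G := intervalIntegral.integral_nonneg hT fun _ _ => sq_nonneg _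
  refine ⟨C ^ 2 + 16 * G, by positivity, fun n => ?_⟩
  have hlam := eigval_pos n
  have hfreq := freq_pos n
  calc ∫ t in t₁..T, derivCoeff β a (k + 2) n t ^ 2
      ≤ eigval n * derivCoeff β a (k + 1) n t₁ ^ 2 + oneCoeff n ^ 2 * G :=
        integral_sq_le_of_isPrimitiveOn hlam.le (h.isPrimitiveOn_derivCoeff n le_rfl)
          h.memL2LocOn ht₁ (ht₁.trans_le hT) hT
    _ ≤ eigval n * (C / freq n ^ 2) ^ 2 + (4 / freq n) ^ 2 * G := by
        rw [← sq_abs (derivCoeff _ _ _ _ _), ← sq_abs (oneCoeff n)]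
        gcongr
        exacts [hC n t₁ (left_mem_Icc.2 hT), abs_oneCoeff_le n]
    _ = (C ^ 2 + 16 * G) / freq n ^ 2 := by
        unfold eigval
        field_simp
        ring

end IsHeatCoeff

/-! ### Orthonormal series depending on time -/

theorem summable_one_div_freq_sq : Summable fun n => 1 / freq n ^ 2 := by
  refine .of_nonneg_of_le (fun n => by positivity) (fun n => ?_)
    ((summable_nat_add_iff 1).2 (Real.summable_one_div_nat_pow.2 one_lt_two))
  push_cast
  gcongr
  exact succ_le_freq n

theorem HasDecayOn.summable {A : ℕ → ℝ → ℝ} {S : Set ℝ} {t : ℝ} (h : HasDecayOn 2 A S)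
    (ht : t ∈ S) : Summable fun n => A n t := by
  obtain ⟨C, -, hC⟩ := h t ht t ht
  refine .of_norm_bounded (summable_one_div_freq_sq.mul_left C) fun n => ?_
  rw [Real.norm_eq_abs, mul_one_div]
  exact hC n t (left_mem_Icc.2 le_rfl)

theorem HasDecayOn.summable_sq {A : ℕ → ℝ → ℝ} {S : Set ℝ} {t : ℝ} (h : HasDecayOn 1 A S)
    (ht : t ∈ S) : Summable fun n => A n t ^ 2 := by
  obtain ⟨C, -, hC⟩ := h t ht t ht
  refine .of_nonneg_of_le (fun n => sq_nonneg _) (fun n => ?_)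
    (summable_one_div_freq_sq.mul_left (C ^ 2))
  calc A n t ^ 2 ≤ (C / freq n ^ 1) ^ 2 := sq_le_sq' (neg_le_of_abs_le (hC n t ⟨le_rfl, le_rfl⟩))
        (le_of_abs_le (hC n t ⟨le_rfl, le_rfl⟩))
    _ = C ^ 2 * (1 / freq n ^ 2) := by ring

theorem HasDecayOn.freq_mul {p : ℕ} {A : ℕ → ℝ → ℝ} {S : Set ℝ} (h : HasDecayOn (p + 1) A S) :
    HasDecayOn p (fun n t => freq n * A n t) S := by
  intro a ha c hc
  obtain ⟨C, hC0, hC⟩ := h a ha c hc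
  refine ⟨C, hC0, fun n t ht => ?_⟩
  have hfreq := freq_pos n
  calc |freq n * A n t| = freq n * |A n t| := by rw [abs_mul, abs_of_pos hfreq]
    _ ≤ freq n * (C / freq n ^ (p + 1)) := by gcongr; exact hC n t ht
    _ = C / freq n ^ p := by field_simp; ring

theorem ae_summable_and_integrable_tsum {α : Type*} [MeasurableSpace α] {μ : Measure α}
    {g : ℕ → α → ℝ} (hg : ∀ n, Integrable (g n) μ) (hg0 : ∀ n x, 0 ≤ g n x)
    (hsum : Summable fun n => ∫ x, g n x ∂μ) :
    (∀ᵐ x ∂μ, Summable fun n => g n x) ∧ Integrable (fun x => ∑' n, g n x) μ := by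
  have hmeas : ∀ n, AEMeasurable (fun x => ENNReal.ofReal (g n x)) μ := fun n =>
    (hg n).aemeasurable.ennreal_ofReal
  have hfin : ∫⁻ x, ∑' n, ENNReal.ofReal (g n x) ∂μ ≠ ⊤ := by
    rw [lintegral_tsum hmeas]
    simp_rw [← fun n => ofReal_integral_eq_lintegral_ofReal (hg n) (ae_of_all _ (hg0 n))]
    exact hsum.tsum_ofReal_ne_top
  constructor
  · filter_upwards [ae_lt_top' (.tsum hmeas) hfin] with x hx
    simpa only [ENNReal.toReal_ofReal (hg0 _ x)] using ENNReal.summable_toReal hx.ne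
  · refine (integrable_toReal_of_lintegral_ne_top (.tsum hmeas) hfin).congr
      (ae_of_all _ fun x => ?_)
    dsimp only
    rw [ENNReal.tsum_toReal_eq fun n => ENNReal.ofReal_ne_top]
    simp only [ENNReal.toReal_ofReal (hg0 _ x)]

section OrthonormalSeries

variable {H : Type*} [NormedAddCommGroup H] [InnerProductSpace ℝ H] [CompleteSpace H]
  {v : ℕ → H} {A A' : ℕ → ℝ → ℝ} {S : Set ℝ}

theorem summable_smul_of_summable_sq (hv : Orthonormal ℝ v) {d : ℕ → ℝ}
    (hd : Summable fun n => d n ^ 2) : Summable fun n => d n • v n := by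
  refine (hv.orthogonalFamily.summable_iff_norm_sq_summable d).2 ?_
  simpa only [Real.norm_eq_abs, sq_abs] using hd

theorem norm_sq_tsum_smul (hv : Orthonormal ℝ v) {d : ℕ → ℝ} (hd : Summable fun n => d n ^ 2) :
    ‖∑' n, d n • v n‖ ^ 2 = ∑' n, d n ^ 2 := by
  have hU := (summable_smul_of_summable_sq hv hd).hasSum
  have hinner := hU.mapL (innerSL ℝ (∑' n, d n • v n))
  simp only [innerSL_apply_apply, inner_smul_right, inner_right_of_hasSum_smul hv hU, ← sq,
    real_inner_self_eq_norm_sq] at hinner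
  exact hinner.tsum_eq.symm

theorem norm_sum_smul_le (hv : Orthonormal ℝ v) {d : ℕ → ℝ} (hd : Summable fun n => d n ^ 2)
    (s : Finset ℕ) : ‖∑ n ∈ s, d n • v n‖ ≤ ‖∑' n, d n • v n‖ := by
  refine le_of_sq_le_sq ?_ (norm_nonneg _)
  rw [norm_sq_tsum_smul hv hd, ← real_inner_self_eq_norm_sq, hv.inner_sum]
  simpa only [conj_trivial, ← sq] using hd.sum_le_tsum s fun n _ => sq_nonneg (d n)

theorem continuousOn_tsum_smul_of_orthonormal (hv : Orthonormal ℝ v) (hO : IsOpen S)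
    (hA : ∀ n, ContinuousOn (A n) S) (hdecay : HasDecayOn 1 A S) :
    ContinuousOn (fun t => ∑' n, A n t • v n) S := by
  intro t₀ ht₀
  obtain ⟨a, ha, c, hc, hat₀, ht₀c⟩ := exists_lt_lt_of_isOpen hO ht₀
  obtain ⟨C, -, hC⟩ := hdecay a ha c hc
  have hdiff : Filter.Tendsto (fun t => ∑' n, (A n t - A n t₀) ^ 2) (nhds t₀)
      (nhds (∑' _ : ℕ, 0)) := by
    refine tendsto_tsum_of_dominated_convergence
      (summable_one_div_freq_sq.mul_left ((2 * C) ^ 2)) (fun n => by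
        simpa using (((hA n).continuousAt (hO.mem_nhds ht₀)).tendsto.sub_const (A n t₀)).pow 2) ?_
    · filter_upwards [Icc_mem_nhds hat₀ ht₀c] with t ht n
      rw [norm_pow, Real.norm_eq_abs]
      calc |A n t - A n t₀| ^ 2 ≤ (C / freq n ^ 1 + C / freq n ^ 1) ^ 2 := by
            gcongr
            exact (abs_sub _ _).trans (add_le_add (hC n t ht) (hC n t₀ ⟨hat₀.le, ht₀c.le⟩))
        _ = (2 * C) ^ 2 * (1 / freq n ^ 2) := by ring
  have hsqrt := (Real.continuous_sqrt.tendsto _).comp hdiff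
  rw [tsum_zero, Real.sqrt_zero] at hsqrt
  refine ContinuousAt.continuousWithinAt (tendsto_iff_norm_sub_tendsto_zero.2 (hsqrt.congr' ?_))
  filter_upwards [hO.mem_nhds ht₀] with t ht
  have hsum := summable_smul_of_summable_sq hv (hdecay.summable_sq ht)
  have hsum₀ := summable_smul_of_summable_sq hv (hdecay.summable_sq ht₀)
  have hsq : Summable fun n => (A n t - A n t₀) ^ 2 := by
    have hdecay₂ := (hdecay.summable_sq ht).add (hdecay.summable_sq ht₀)
    refine .of_nonneg_of_le (fun n => sq_nonneg _) (fun n => ?_) (hdecay₂.mul_left 2)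
    nlinarith [sq_nonneg (A n t + A n t₀)]
  rw [Function.comp_apply, ← norm_sq_tsum_smul hv hsq, Real.sqrt_sq (norm_nonneg _)]
  simp_rw [sub_smul]
  rw [hsum.tsum_sub hsum₀]

theorem isPrimitiveOn_tsum_smul_of_orthonormal (hv : Orthonormal ℝ v)
    (hA : ∀ n, IsPrimitiveOn (A n) (A' n) S) (hsum : ∀ t ∈ S, Summable fun n => A n t ^ 2)
    (hsum' : ∀ a ∈ S, ∀ c ∈ S, ∀ᵐ t ∂volume.restrict (Icc a c), Summable fun n => A' n t ^ 2)
    (hA' : MemL2LocOn (fun t => ∑' n, A' n t • v n) S) :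
    IsPrimitiveOn (fun t => ∑' n, A n t • v n) (fun t => ∑' n, A' n t • v n) S := by
  intro a ha c hc
  have hint := hA'.intervalIntegrable ha hc
  refine ⟨hint, ?_⟩
  have hae : ∀ᵐ t, t ∈ uIoc a c → Summable fun n => A' n t ^ 2 :=
    (ae_restrict_iff' measurableSet_uIoc).1 (ae_restrict_uIoc_iff.2
      ⟨ae_restrict_of_ae_restrict_of_subset Ioc_subset_Icc_self (hsum' a ha c hc),
        ae_restrict_of_ae_restrict_of_subset Ioc_subset_Icc_self (hsum' c hc a ha)⟩)
  have hterm : ∀ n, IsPrimitiveOn (fun t => A n t • v n) (fun t => A' n t • v n) S := fun n =>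
    (hA n).continuousLinearMap_comp (.toSpanSingleton ℝ (v n))
  have hpartial : ∀ N, ∫ s in a..c, ∑ n ∈ Finset.range N, A' n s • v n =
      ∑ n ∈ Finset.range N, A n c • v n - ∑ n ∈ Finset.range N, A n a • v n := fun N => by
    rw [intervalIntegral.integral_finsetSum fun n _ => (hterm n a ha c hc).1,
      ← Finset.sum_sub_distrib]
    exact Finset.sum_congr rfl fun n _ => (hterm n a ha c hc).2.symm
  have hlim : Filter.Tendsto (fun N => ∫ s in a..c, ∑ n ∈ Finset.range N, A' n s • v n)
      Filter.atTop (nhds (∫ s in a..c, ∑' n, A' n s • v n)) := by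
    refine intervalIntegral.tendsto_integral_filter_of_dominated_convergence _
      (.of_forall fun N => ?_) (.of_forall fun N => ?_) hint.norm ?_
    · exact Finset.aestronglyMeasurable_fun_sum _ fun n _ =>
        (intervalIntegrable_iff.1 (hterm n a ha c hc).1).aestronglyMeasurable
    · filter_upwards [hae] with t ht htac using norm_sum_smul_le hv (ht htac) _
    · filter_upwards [hae] with t ht htac
      exact (summable_smul_of_summable_sq hv (ht htac)).hasSum.tendsto_sum_nat
  simp_rw [hpartial] at hlim
  have htendsto : ∀ t ∈ S, Filter.Tendsto (fun N => ∑ n ∈ Finset.range N, A n t • v n)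
      Filter.atTop (nhds (∑' n, A n t • v n)) := fun t ht =>
    (summable_smul_of_summable_sq hv (hsum t ht)).hasSum.tendsto_sum_nat
  exact tendsto_nhds_unique ((htendsto c hc).sub (htendsto a ha)) hlim

theorem memLp_tsum_smul_of_orthonormal {μ : Measure ℝ} (hv : Orthonormal ℝ v)
    (hA : ∀ n, MemLp (A n) 2 μ) (hsum : Summable fun n => ∫ t, A n t ^ 2 ∂μ) :
    (∀ᵐ t ∂μ, Summable fun n => A n t ^ 2) ∧ MemLp (fun t => ∑' n, A n t • v n) 2 μ := by
  obtain ⟨hae, hint⟩ := ae_summable_and_integrable_tsum (fun n => (hA n).integrable_sq)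
    (fun n t => sq_nonneg (A n t)) hsum
  have hmeas : AEStronglyMeasurable (fun t => ∑' n, A n t • v n) μ := by
    refine aestronglyMeasurable_of_tendsto_ae Filter.atTop
      (f := fun N t => ∑ n ∈ Finset.range N, A n t • v n)
      (fun N => Finset.aestronglyMeasurable_fun_sum _ fun n _ => (hA n).1.smul_const (v n)) ?_
    filter_upwards [hae] with t ht
    exact (summable_smul_of_summable_sq hv ht).hasSum.tendsto_sum_nat
  refine ⟨hae, (memLp_two_iff_integrable_sq_norm hmeas).2 (hint.congr ?_)⟩
  filter_upwards [hae] with t ht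
  exact (norm_sq_tsum_smul hv ht).symm

end OrthonormalSeries

/-! ### Weak derivatives in space -/

theorem isSpatialWeakDeriv_iff_inner {v w : Hsp} :
    IsSpatialWeakDeriv v w ↔ ∀ φ φ' : ℝ →ᵇ ℝ, ContDiff ℝ (⊤ : ℕ∞) φ → HasCompactSupport φ →
      tsupport φ ⊆ Ioo (0 : ℝ) 1 → ⇑φ' = deriv φ → ⟪v, toHsp φ'⟫_ℝ = -⟪w, toHsp φ⟫_ℝ := by
  constructor
  · intro h φ φ' hφ hcompact hsub hφ'
    simpa only [inner_toLp, hφ', mul_comm, μ01] using h φ hφ hcompact hsub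
  · intro h φ hφ hcompact hsub
    have hφ' : Continuous (deriv φ) := hφ.continuous_deriv (by simp)
    obtain ⟨C, hC⟩ := hcompact.exists_bound_of_continuous hφ.continuous
    obtain ⟨C', hC'⟩ := hcompact.deriv.exists_bound_of_continuous hφ'
    simpa only [inner_toLp, BoundedContinuousFunction.coe_ofNormedAddCommGroup, mul_comm, μ01]
      using h (.ofNormedAddCommGroup φ hφ.continuous C hC)
      (.ofNormedAddCommGroup (deriv φ) hφ' C' hC') hφ hcompact hsub rfl

theorem IsSpatialWeakDeriv.add {v₁ v₂ w₁ w₂ : Hsp} (h₁ : IsSpatialWeakDeriv v₁ w₁)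
    (h₂ : IsSpatialWeakDeriv v₂ w₂) : IsSpatialWeakDeriv (v₁ + v₂) (w₁ + w₂) := by
  rw [isSpatialWeakDeriv_iff_inner] at *
  intro φ φ' hφ hcompact hsub hφ'
  rw [inner_add_left, inner_add_left, h₁ φ φ' hφ hcompact hsub hφ',
    h₂ φ φ' hφ hcompact hsub hφ', neg_add]

theorem IsSpatialWeakDeriv.smul {v w : Hsp} (h : IsSpatialWeakDeriv v w) (c : ℝ) :
    IsSpatialWeakDeriv (c • v) (c • w) := by
  rw [isSpatialWeakDeriv_iff_inner] at *
  intro φ φ' hφ hcompact hsub hφ'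
  rw [real_inner_smul_left, real_inner_smul_left, h φ φ' hφ hcompact hsub hφ', mul_neg]

theorem IsSpatialWeakDeriv.hasSum {V W : ℕ → Hsp} {v w : Hsp}
    (h : ∀ n, IsSpatialWeakDeriv (V n) (W n)) (hV : HasSum V v) (hW : HasSum W w) :
    IsSpatialWeakDeriv v w := by
  simp only [isSpatialWeakDeriv_iff_inner] at *
  intro φ φ' hφ hcompact hsub hφ'
  have hv := hV.mapL ((innerSL ℝ).flip (toHsp φ'))
  have hw := (hW.mapL ((innerSL ℝ).flip (toHsp φ))).neg
  simp only [ContinuousLinearMap.flip_apply, innerSL_apply_apply,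
    h _ φ φ' hφ hcompact hsub hφ'] at hv hw
  exact hv.unique hw

theorem isSpatialWeakDeriv_toHsp_of_hasDerivAt {f f' : ℝ →ᵇ ℝ}
    (h : ∀ x, HasDerivAt f (f' x) x) : IsSpatialWeakDeriv (toHsp f) (toHsp f') := by
  rw [isSpatialWeakDeriv_iff_inner]
  intro φ φ' hφ _ hsub hφ'
  have hzero : ∀ x ∉ Ioo (0 : ℝ) 1, φ x = 0 := fun x hx =>
    image_eq_zero_of_notMem_tsupport fun hx' => hx (hsub hx')
  have hderiv : ∀ x, HasDerivAt φ (φ' x) x := fun x => by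
    simpa only [hφ'] using (hφ.differentiable (by simp) x).hasDerivAt
  have hparts := intervalIntegral.integral_mul_deriv_eq_deriv_mul (a := 0) (b := 1)
    (fun x _ => h x) (fun x _ => hderiv x) (f'.continuous.intervalIntegrable _ _)
    (φ'.continuous.intervalIntegrable _ _)
  rw [inner_toLp_toLp, inner_toLp_toLp, integral_μ01, integral_μ01, hparts,
    hzero 0 (by simp), hzero 1 (by simp)]
  ring

theorem isSpatialWeakDeriv_sineMode (n : ℕ) :
    IsSpatialWeakDeriv (toHsp (sineMode n)) (freq n • toHsp (cosineMode n)) := by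
  rw [← map_smul]
  exact isSpatialWeakDeriv_toHsp_of_hasDerivAt (hasDerivAt_sineMode n)

theorem isSpatialWeakDeriv_cosineMode (n : ℕ) :
    IsSpatialWeakDeriv (toHsp (cosineMode n)) (-freq n • toHsp (sineMode n)) := by
  rw [← map_smul]
  refine isSpatialWeakDeriv_toHsp_of_hasDerivAt fun x => ?_
  simpa using hasDerivAt_cosineMode n x

theorem isSpatialWeakDeriv_oneHsp : IsSpatialWeakDeriv oneHsp 0 := by
  rw [← map_zero toHsp]
  exact isSpatialWeakDeriv_toHsp_of_hasDerivAt fun x => hasDerivAt_const x 1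

theorem IsSpatialWeakDeriv.hasDerivWithinAt {f g : ℝ →ᵇ ℝ}
    (h : IsSpatialWeakDeriv (toHsp f) (toHsp g)) {x : ℝ} (hx : x ∈ Icc (0 : ℝ) 1) :
    HasDerivWithinAt f (g x) (Icc 0 1) x := by
  have hweak : HasWeakDerivOn f g (Ioo 0 1) := by
    intro φ hφ hcompact hsub
    have hint : ∀ (ψ : ℝ → ℝ) (e : ℝ →ᵇ ℝ),
        ∫ y in Ioo 0 1, ψ y * toHsp e y = ∫ y in Ioo 0 1, ψ y • e y := fun ψ e => by
      refine integral_congr_ae ?_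
      filter_upwards [coeFn_toHsp e] with y hy
      rw [hy, smul_eq_mul]
    rw [← hint, ← hint, h φ hφ hcompact hsub]
  obtain ⟨F, hF, hae⟩ := hweak.exists_isPrimitiveOn isOpen_Ioo (nonempty_Ioo.2 one_pos)
    (f.continuous.locallyIntegrable.locallyIntegrableOn _)
    (g.continuous.locallyIntegrable.locallyIntegrableOn _)
  have hfF : EqOn f F (Ioo 0 1) := Measure.eqOn_open_of_ae_eq
    ((ae_restrict_iff' measurableSet_Ioo).2 hae) isOpen_Ioo f.continuous.continuousOn
    (hF.continuousOn isOpen_Ioo)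
  have hhalf : (1 / 2 : ℝ) ∈ Ioo (0 : ℝ) 1 := by norm_num
  have hprim : ∀ y, HasDerivAt (fun y => f (1 / 2) + ∫ s in 1 / 2..y, g s) (g y) y := fun y =>
    (intervalIntegral.integral_hasDerivAt_right (g.continuous.intervalIntegrable _ _)
      (g.continuous.stronglyMeasurableAtFilter _ _) g.continuous.continuousAt).const_add _
  have hrepr : EqOn f (fun y => f (1 / 2) + ∫ s in 1 / 2..y, g s) (Icc 0 1) := by
    rw [← closure_Ioo zero_ne_one]
    refine EqOn.closure (fun y hy => ?_) f.continuous
      (continuous_iff_continuousAt.2 fun y => (hprim y).continuousAt)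
    rw [hfF hy, hfF hhalf, ← (hF _ hhalf y hy).2]
    ring
  exact (hprim x).hasDerivWithinAt.congr hrepr (hrepr hx)

theorem hasSum_oneCoeff : HasSum (fun n => oneCoeff n • toHsp (sineMode n)) oneHsp := by
  have hsum := sineBasis.hasSum_repr oneHsp
  simp only [HilbertBasis.repr_apply_apply, sineBasis_apply] at hsum
  exact hsum.congr_fun fun n => by rw [oneCoeff, real_inner_comm]

/-! ### The solution series -/

/-- The `j`-th time derivative, as a curve in `H`, of the solution with sine coefficients `a`. -/
def timeDeriv (β : ℕ → ℝ → ℝ) (a : ℕ → ℝ → ℝ) (j : ℕ) (t : ℝ) : Hsp :=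
  ∑' n, derivCoeff β a j n t • toHsp (sineMode n)

/-- The spatial derivative of `timeDeriv β a j t`. -/
def timeDerivDx (β : ℕ → ℝ → ℝ) (a : ℕ → ℝ → ℝ) (j : ℕ) (t : ℝ) : Hsp :=
  ∑' n, (freq n * derivCoeff β a j n t) • toHsp (cosineMode n)

namespace IsHeatCoeff

variable {τ : ℝ} {k : ℕ} {β : ℕ → ℝ → ℝ} {a : ℕ → ℝ → ℝ} {j m : ℕ} {t : ℝ}

theorem hasDecayOn_freq_mul_derivCoeff (h : IsHeatCoeff τ k β a) (hj : j ≤ k + 1) :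
    HasDecayOn 1 (fun n t => freq n * derivCoeff β a j n t) (Ioi τ) :=
  (h.hasDecayOn_two hj).freq_mul

theorem hasSum_timeDeriv (h : IsHeatCoeff τ k β a) (hj : j ≤ k + 1) (ht : t ∈ Ioi τ) :
    HasSum (fun n => derivCoeff β a j n t • toHsp (sineMode n)) (timeDeriv β a j t) :=
  (summable_smul_of_summable_sq orthonormal_sineMode
    (((h.hasDecayOn_two hj).of_le one_le_two).summable_sq ht)).hasSum

theorem hasSum_timeDerivDx (h : IsHeatCoeff τ k β a) (hj : j ≤ k + 1) (ht : t ∈ Ioi τ) :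
    HasSum (fun n => (freq n * derivCoeff β a j n t) • toHsp (cosineMode n))
      (timeDerivDx β a j t) :=
  (summable_smul_of_summable_sq orthonormal_cosineMode
    ((h.hasDecayOn_freq_mul_derivCoeff hj).summable_sq ht)).hasSum

theorem isSpatialWeakDeriv_timeDeriv (h : IsHeatCoeff τ k β a) (hj : j ≤ k + 1)
    (ht : t ∈ Ioi τ) : IsSpatialWeakDeriv (timeDeriv β a j t) (timeDerivDx β a j t) := by
  refine .hasSum (fun n => ?_) (h.hasSum_timeDeriv hj ht) (h.hasSum_timeDerivDx hj ht)
  rw [mul_comm, mul_smul]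
  exact (isSpatialWeakDeriv_sineMode n).smul _

theorem isSpatialWeakDeriv_timeDerivDx (h : IsHeatCoeff τ k β a) (hj : j ≤ k) (ht : t ∈ Ioi τ) :
    IsSpatialWeakDeriv (timeDerivDx β a j t) (timeDeriv β a (j + 1) t - β j t • oneHsp) := by
  refine .hasSum (fun n => (isSpatialWeakDeriv_cosineMode n).smul (freq n * derivCoeff β a j n t))
    (h.hasSum_timeDerivDx (by lia) ht) ?_
  refine ((h.hasSum_timeDeriv (by lia) ht).sub
    (hasSum_oneCoeff.const_smul (β j t))).congr_fun fun n => ?_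
  rw [smul_smul, smul_smul, ← sub_smul, derivCoeff, eigval]
  congr 1
  ring

theorem continuousOn_timeDeriv (h : IsHeatCoeff τ k β a) (hj : j ≤ k + 1) :
    ContinuousOn (timeDeriv β a j) (Ioi τ) :=
  continuousOn_tsum_smul_of_orthonormal orthonormal_sineMode isOpen_Ioi
    (fun n => h.continuousOn_derivCoeff n hj) ((h.hasDecayOn_two hj).of_le one_le_two)

theorem continuousOn_timeDerivDx (h : IsHeatCoeff τ k β a) (hj : j ≤ k + 1) :
    ContinuousOn (timeDerivDx β a j) (Ioi τ) :=
  continuousOn_tsum_smul_of_orthonormal orthonormal_cosineMode isOpen_Ioi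
    (fun n => (h.continuousOn_derivCoeff n hj).const_mul _) (h.hasDecayOn_freq_mul_derivCoeff hj)

theorem memL2LocOn_derivCoeff (h : IsHeatCoeff τ k β a) (n : ℕ) :
    MemL2LocOn (derivCoeff β a (k + 2) n) (Ioi τ) := fun c hc d hd =>
  (MemL2LocOn.of_continuousOn ((h.continuousOn_derivCoeff n le_rfl).const_mul _) c hc d hd).add
    ((h.memL2LocOn c hc d hd).const_mul _)

theorem ae_summable_and_memLp_timeDeriv (h : IsHeatCoeff τ k β a) {c d : ℝ} (hc : c ∈ Ioi τ)
    (hd : d ∈ Ioi τ) :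
    (∀ᵐ t ∂volume.restrict (Icc c d), Summable fun n => derivCoeff β a (k + 2) n t ^ 2) ∧
      MemLp (timeDeriv β a (k + 2)) 2 (volume.restrict (Icc c d)) := by
  rcases lt_or_ge d c with hdc | hcd
  · simp [Icc_eq_empty_of_lt hdc]
  obtain ⟨C, -, hC⟩ := h.exists_integral_sq_derivCoeff_le hc hcd
  refine memLp_tsum_smul_of_orthonormal orthonormal_sineMode
    (fun n => h.memL2LocOn_derivCoeff n c hc d hd) ?_
  refine .of_nonneg_of_le (fun n => integral_nonneg fun t => sq_nonneg _) (fun n => ?_)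
    (summable_one_div_freq_sq.mul_left C)
  rw [integral_Icc_eq_integral_Ioc, ← intervalIntegral.integral_of_le hcd, mul_one_div]
  exact hC n

theorem memL2LocOn_timeDeriv (h : IsHeatCoeff τ k β a) :
    MemL2LocOn (timeDeriv β a (k + 2)) (Ioi τ) :=
  fun _ hc _ hd => (h.ae_summable_and_memLp_timeDeriv hc hd).2

theorem isPrimitiveOn_timeDeriv (h : IsHeatCoeff τ k β a) (hj : j ≤ k + 1) :
    IsPrimitiveOn (timeDeriv β a j) (timeDeriv β a (j + 1)) (Ioi τ) := by
  have hsum {i : ℕ} (hi : i ≤ k + 1) : ∀ t ∈ Ioi τ, Summable fun n => derivCoeff β a i n t ^ 2 :=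
    fun t ht => ((h.hasDecayOn_two hi).of_le one_le_two).summable_sq ht
  refine isPrimitiveOn_tsum_smul_of_orthonormal orthonormal_sineMode
    (fun n => h.isPrimitiveOn_derivCoeff n hj) (hsum hj) ?_ ?_
  all_goals rcases hj.eq_or_lt with rfl | hj
  · exact fun c hc d hd => (h.ae_summable_and_memLp_timeDeriv hc hd).1
  · exact fun c hc d hd => ae_restrict_of_forall_mem measurableSet_Icc fun t ht =>
      hsum hj t (ordConnected_Ioi.out hc hd ht)
  · exact h.memL2LocOn_timeDeriv
  · exact .of_continuousOn (h.continuousOn_timeDeriv hj)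

theorem isPrimitiveOn_timeDerivDx (h : IsHeatCoeff τ k β a) (hj : j ≤ k) :
    IsPrimitiveOn (timeDerivDx β a j) (timeDerivDx β a (j + 1)) (Ioi τ) :=
  isPrimitiveOn_tsum_smul_of_orthonormal orthonormal_cosineMode
    (fun n => (h.isPrimitiveOn_derivCoeff n (by lia)).const_mul _)
    (fun _ ht => (h.hasDecayOn_freq_mul_derivCoeff (by lia)).summable_sq ht)
    (fun _ hc _ hd => ae_restrict_of_forall_mem measurableSet_Icc fun _ ht =>
      (h.hasDecayOn_freq_mul_derivCoeff (by lia)).summable_sq (ordConnected_Ioi.out hc hd ht))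
    (.of_continuousOn (h.continuousOn_timeDerivDx (by lia)))

theorem memSobolevLocOn_timeDeriv_zero (h : IsHeatCoeff τ k β a) :
    MemSobolevLocOn (k + 2) (timeDeriv β a 0) (Ioi τ) :=
  .of_chain (fun _ hj => h.isPrimitiveOn_timeDeriv (by lia))
    h.memL2LocOn_timeDeriv

theorem contDiffOn_timeDeriv (h : IsHeatCoeff τ k β a) (hjm : j + m ≤ k + 1) :
    ContDiffOn ℝ m (timeDeriv β a j) (Ioi τ) :=
  contDiffOn_of_hasDerivAt_chain (D := fun i => timeDeriv β a (j + i)) isOpen_Ioi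
    (fun i hi _ ht => (h.isPrimitiveOn_timeDeriv (j := j + i) (by lia)).hasDerivAt isOpen_Ioi
      (h.continuousOn_timeDeriv (by lia)) ht)
    (h.continuousOn_timeDeriv hjm)

theorem contDiffOn_timeDerivDx (h : IsHeatCoeff τ k β a) (hjm : j + m ≤ k + 1) :
    ContDiffOn ℝ m (timeDerivDx β a j) (Ioi τ) :=
  contDiffOn_of_hasDerivAt_chain (D := fun i => timeDerivDx β a (j + i)) isOpen_Ioi
    (fun i hi _ ht => (h.isPrimitiveOn_timeDerivDx (j := j + i) (by lia)).hasDerivAt isOpen_Ioi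
      (h.continuousOn_timeDerivDx (by lia)) ht)
    (h.continuousOn_timeDerivDx hjm)

theorem contDiffOn_source (h : IsHeatCoeff τ k β a) (hjm : j + m ≤ k) :
    ContDiffOn ℝ m (β j) (Ioi τ) :=
  contDiffOn_of_hasDerivAt_chain (D := fun i => β (j + i)) isOpen_Ioi
    (fun i hi _ ht => (h.isPrimitiveOn (j + i) (by lia)).hasDerivAt isOpen_Ioi
      (h.continuousOn_source (by lia)) ht)
    (h.continuousOn_source hjm)

end IsHeatCoeff

/-! ### Continuous representatives -/

section BoundedSeries

variable {X : Type*} [NormedAddCommGroup X] [NormedSpace ℝ X] {e : ℕ → X}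
  {C : ℝ} {A A' : ℕ → ℝ → ℝ} {S : Set ℝ}

theorem HasDecayOn.exists_norm_smul_le (hA : HasDecayOn 2 A S) (he : ∀ n, ‖e n‖ ≤ C)
    {c d : ℝ} (hc : c ∈ S) (hd : d ∈ S) :
    ∃ B : ℕ → ℝ, Summable B ∧ ∀ n, ∀ t ∈ Icc c d, ‖A n t • e n‖ ≤ B n := by
  obtain ⟨M, hM, hAM⟩ := hA c hc d hd
  refine ⟨_, (summable_one_div_freq_sq.mul_left M).mul_right C, fun n t ht => ?_⟩
  have := freq_pos n
  rw [norm_smul, mul_one_div]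
  exact mul_le_mul (hAM n t ht) (he n) (norm_nonneg _) (by positivity)

variable [CompleteSpace X]

theorem HasDecayOn.summable_smul (hA : HasDecayOn 2 A S) (he : ∀ n, ‖e n‖ ≤ C) {t : ℝ}
    (ht : t ∈ S) : Summable fun n => A n t • e n :=
  summable_smul_of_norm_le (hA.summable ht) he

variable [S.OrdConnected]

theorem continuousOn_tsum_smul_of_norm_le (he : ∀ n, ‖e n‖ ≤ C) (hO : IsOpen S)
    (hA : ∀ n, ContinuousOn (A n) S) (hdecay : HasDecayOn 2 A S) :
    ContinuousOn (fun t => ∑' n, A n t • e n) S := by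
  intro t ht
  obtain ⟨c, hc, d, hd, hct, htd⟩ := exists_lt_lt_of_isOpen hO ht
  obtain ⟨B, hB, hAB⟩ := hdecay.exists_norm_smul_le he hc hd
  exact ((continuousOn_tsum
    (fun n => ((hA n).mono (OrdConnected.out ‹_› hc hd)).smul continuousOn_const) hB
    hAB).continuousAt (Icc_mem_nhds hct htd)).continuousWithinAt

theorem hasDerivAt_tsum_smul_of_norm_le (he : ∀ n, ‖e n‖ ≤ C) (hO : IsOpen S)
    (hA : ∀ n, ∀ t ∈ S, HasDerivAt (A n) (A' n t) t) (hdecay : HasDecayOn 2 A S)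
    (hdecay' : HasDecayOn 2 A' S) {t : ℝ} (ht : t ∈ S) :
    HasDerivAt (fun t => ∑' n, A n t • e n) (∑' n, A' n t • e n) t := by
  obtain ⟨c, hc, d, hd, hct, htd⟩ := exists_lt_lt_of_isOpen hO ht
  obtain ⟨B, hB, hAB⟩ := hdecay'.exists_norm_smul_le he hc hd
  have hsub : Ioo c d ⊆ S := Ioo_subset_Icc_self.trans (OrdConnected.out ‹_› hc hd)
  exact hasDerivAt_tsum_of_isPreconnected hB isOpen_Ioo isPreconnected_Ioo
    (fun n s hs => (hA n s (hsub hs)).smul_const (e n))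
    (fun n s hs => hAB n s (Ioo_subset_Icc_self hs)) ⟨hct, htd⟩ (hdecay.summable_smul he ht)
    ⟨hct, htd⟩

end BoundedSeries

theorem continuousOn_eval {X : Type*} [TopologicalSpace X] {G : ℝ → X →ᵇ ℝ} {S : Set ℝ}
    (hG : ContinuousOn G S) (s : Set X) :
    ContinuousOn (fun p : ℝ × X => G p.1 p.2) (S ×ˢ s) :=
  continuous_eval.comp_continuousOn
    ((hG.comp continuousOn_fst fun _ hp => hp.1).prodMk continuousOn_snd)

theorem hasFDerivWithinAt_eval {G : ℝ → ℝ →ᵇ ℝ} {G' : ℝ →ᵇ ℝ} {t x d : ℝ} {S s : Set ℝ}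
    (hG : HasDerivAt G G' t) (hd : HasDerivWithinAt (G t) d s x) :
    HasFDerivWithinAt (fun p : ℝ × ℝ => G p.1 p.2)
      (G' x • ContinuousLinearMap.fst ℝ ℝ ℝ + d • ContinuousLinearMap.snd ℝ ℝ ℝ) (S ×ˢ s)
      (t, x) := by
  rw [hasFDerivWithinAt_iff_isLittleO]
  set l := nhdsWithin (t, x) (S ×ˢ s)
  have hfst : Filter.Tendsto Prod.fst l (nhds t) := continuousWithinAt_fst
  have hsnd : Filter.Tendsto Prod.snd l (nhdsWithin x s) :=
    continuousWithinAt_snd.tendsto_nhdsWithin fun _ hp => hp.2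
  have hfst_sub : (fun p : ℝ × ℝ => p.1 - t) =O[l] fun p => p - (t, x) :=
    Asymptotics.isBigO_of_le l fun p => norm_fst_le (p - (t, x))
  have hsnd_sub : (fun p : ℝ × ℝ => p.2 - x) =O[l] fun p => p - (t, x) :=
    Asymptotics.isBigO_of_le l fun p => norm_snd_le (p - (t, x))
  have htime : (fun p : ℝ × ℝ => (G p.1 - G t - (p.1 - t) • G') p.2) =o[l]
      fun p => p - (t, x) :=
    (Asymptotics.isBigO_of_le l fun p =>
        (G p.1 - G t - (p.1 - t) • G').norm_coe_le_norm p.2).trans_isLittleO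
      (((hasDerivAt_iff_isLittleO.1 hG).comp_tendsto hfst).trans_isBigO hfst_sub)
  have hmixed : (fun p : ℝ × ℝ => (p.1 - t) * (G' p.2 - G' x)) =o[l] fun p => p - (t, x) := by
    have hG' : Filter.Tendsto (fun p : ℝ × ℝ => G' p.2 - G' x) l (nhds 0) :=
      tendsto_sub_nhds_zero_iff.2
        (G'.continuous.continuousAt.tendsto.comp (hsnd.mono_right nhdsWithin_le_nhds))
    simpa using hfst_sub.norm_right.mul_isLittleO ((Asymptotics.isLittleO_one_iff ℝ).2 hG')
  have hspace : (fun p : ℝ × ℝ => G t p.2 - G t x - (p.2 - x) • d) =o[l] fun p => p - (t, x) :=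
    ((hasDerivWithinAt_iff_isLittleO.1 hd).comp_tendsto hsnd).trans_isBigO hsnd_sub
  refine ((htime.add hmixed).add hspace).congr_left fun p => ?_
  simp only [BoundedContinuousFunction.coe_sub, BoundedContinuousFunction.coe_smul, smul_eq_mul,
    Pi.sub_apply, add_apply, smul_apply, ContinuousLinearMap.coe_fst', Prod.fst_sub,
    ContinuousLinearMap.coe_snd', Prod.snd_sub]
  ring

theorem contDiffOn_eval_succ {G G' : ℝ → ℝ →ᵇ ℝ} {d : ℝ × ℝ → ℝ} {S s : Set ℝ} {m : ℕ}
    (hS : UniqueDiffOn ℝ S) (hs : UniqueDiffOn ℝ s) (hG : ∀ t ∈ S, HasDerivAt G (G' t) t)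
    (hd : ∀ t ∈ S, ∀ x ∈ s, HasDerivWithinAt (G t) (d (t, x)) s x)
    (hG' : ContDiffOn ℝ m (fun p : ℝ × ℝ => G' p.1 p.2) (S ×ˢ s))
    (hd' : ContDiffOn ℝ m d (S ×ˢ s)) :
    ContDiffOn ℝ (m + 1) (fun p : ℝ × ℝ => G p.1 p.2) (S ×ˢ s) := by
  rw [contDiffOn_succ_iff_hasFDerivWithinAt_of_uniqueDiffOn (hS.prod hs)]
  exact ⟨fun h => by simp at h, _, (hG'.smul contDiffOn_const).add (hd'.smul contDiffOn_const),
    fun p hp => hasFDerivWithinAt_eval (hG p.1 hp.1) (hd p.1 hp.1 p.2 hp.2)⟩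

/-- The continuous representative of `timeDeriv β a j t`. -/
def timeDerivFun (β : ℕ → ℝ → ℝ) (a : ℕ → ℝ → ℝ) (j : ℕ) (t : ℝ) : ℝ →ᵇ ℝ :=
  ∑' n, derivCoeff β a j n t • sineMode n

/-- The continuous representative of `timeDerivDx β a j t`. -/
def timeDerivDxFun (β : ℕ → ℝ → ℝ) (a : ℕ → ℝ → ℝ) (j : ℕ) (t : ℝ) : ℝ →ᵇ ℝ :=
  ∑' n, (freq n * derivCoeff β a j n t) • cosineMode n

namespace IsHeatCoeff

variable {τ : ℝ} {k : ℕ} {β : ℕ → ℝ → ℝ} {a : ℕ → ℝ → ℝ} {j m : ℕ} {t x : ℝ}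

theorem toHsp_timeDerivFun (h : IsHeatCoeff τ k β a) (hj : j ≤ k + 1) (ht : t ∈ Ioi τ) :
    toHsp (timeDerivFun β a j t) = timeDeriv β a j t :=
  (hasSum_smul_toHsp ((h.hasDecayOn_two hj).summable_smul norm_sineMode_le ht)).tsum_eq.symm

theorem toHsp_timeDerivDxFun (h : IsHeatCoeff τ k β a) (hj : j ≤ k) (ht : t ∈ Ioi τ) :
    toHsp (timeDerivDxFun β a j t) = timeDerivDx β a j t :=
  (hasSum_smul_toHsp
    ((h.hasDecayOn_three hj).freq_mul.summable_smul norm_cosineMode_le ht)).tsum_eq.symm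

theorem continuousOn_timeDerivFun (h : IsHeatCoeff τ k β a) (hj : j ≤ k + 1) :
    ContinuousOn (timeDerivFun β a j) (Ioi τ) :=
  continuousOn_tsum_smul_of_norm_le norm_sineMode_le isOpen_Ioi
    (fun n => h.continuousOn_derivCoeff n hj) (h.hasDecayOn_two hj)

theorem continuousOn_timeDerivDxFun (h : IsHeatCoeff τ k β a) (hj : j ≤ k) :
    ContinuousOn (timeDerivDxFun β a j) (Ioi τ) :=
  continuousOn_tsum_smul_of_norm_le norm_cosineMode_le isOpen_Ioi
    (fun n => (h.continuousOn_derivCoeff n (by lia)).const_mul _) (h.hasDecayOn_three hj).freq_mul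

theorem hasDerivAt_timeDerivFun (h : IsHeatCoeff τ k β a) (hj : j ≤ k) (ht : t ∈ Ioi τ) :
    HasDerivAt (timeDerivFun β a j) (timeDerivFun β a (j + 1) t) t :=
  hasDerivAt_tsum_smul_of_norm_le norm_sineMode_le isOpen_Ioi
    (fun n _ hs => h.hasDerivAt_derivCoeff n hj hs) (h.hasDecayOn_two (by lia))
    (h.hasDecayOn_two (by lia)) ht

theorem hasDerivAt_timeDerivDxFun (h : IsHeatCoeff τ k β a) (hj : j + 1 ≤ k) (ht : t ∈ Ioi τ) :
    HasDerivAt (timeDerivDxFun β a j) (timeDerivDxFun β a (j + 1) t) t :=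
  hasDerivAt_tsum_smul_of_norm_le norm_cosineMode_le isOpen_Ioi
    (fun n _ hs => (h.hasDerivAt_derivCoeff n (by lia) hs).const_mul _)
    (h.hasDecayOn_three (by lia)).freq_mul (h.hasDecayOn_three hj).freq_mul ht

theorem hasDerivWithinAt_timeDerivFun (h : IsHeatCoeff τ k β a) (hj : j ≤ k) (ht : t ∈ Ioi τ)
    (hx : x ∈ Icc (0 : ℝ) 1) :
    HasDerivWithinAt (timeDerivFun β a j t) (timeDerivDxFun β a j t x) (Icc 0 1) x := by
  refine IsSpatialWeakDeriv.hasDerivWithinAt ?_ hx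
  rw [h.toHsp_timeDerivFun (by lia) ht, h.toHsp_timeDerivDxFun hj ht]
  exact h.isSpatialWeakDeriv_timeDeriv (by lia) ht

theorem hasDerivWithinAt_timeDerivDxFun (h : IsHeatCoeff τ k β a) (hj : j ≤ k) (ht : t ∈ Ioi τ)
    (hx : x ∈ Icc (0 : ℝ) 1) :
    HasDerivWithinAt (timeDerivDxFun β a j t) (timeDerivFun β a (j + 1) t x - β j t)
      (Icc 0 1) x := by
  have hweak : IsSpatialWeakDeriv (toHsp (timeDerivDxFun β a j t))
      (toHsp (timeDerivFun β a (j + 1) t - β j t • BoundedContinuousFunction.const ℝ 1)) := by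
    rw [map_sub, map_smul, h.toHsp_timeDerivDxFun hj ht, h.toHsp_timeDerivFun (by lia) ht]
    exact h.isSpatialWeakDeriv_timeDerivDx hj ht
  simpa using hweak.hasDerivWithinAt hx

/-- The two claims are proved together because the spatial derivative of `timeDerivDxFun β a j`
involves `timeDerivFun β a (j + 1)`. -/
theorem contDiffOn_timeDerivFun_and_timeDerivDxFun (h : IsHeatCoeff τ k β a) (m : ℕ) :
    (∀ j, j + m ≤ k + 1 →
      ContDiffOn ℝ m (fun p : ℝ × ℝ => timeDerivFun β a j p.1 p.2) (Ioi τ ×ˢ Icc 0 1)) ∧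
    ∀ j, j + m ≤ k →
      ContDiffOn ℝ m (fun p : ℝ × ℝ => timeDerivDxFun β a j p.1 p.2) (Ioi τ ×ˢ Icc 0 1) := by
  have hIoi := uniqueDiffOn_Ioi τ
  have hIcc := uniqueDiffOn_Icc (zero_lt_one' ℝ)
  induction m with
  | zero =>
    simp only [Nat.cast_zero, contDiffOn_zero, add_zero]
    exact ⟨fun j hj => continuousOn_eval (h.continuousOn_timeDerivFun hj) _,
      fun j hj => continuousOn_eval (h.continuousOn_timeDerivDxFun hj) _⟩
  | succ m ih =>
    push_cast
    refine ⟨fun j hj => ?_, fun j hj => ?_⟩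
    · exact contDiffOn_eval_succ hIoi hIcc (fun t ht => h.hasDerivAt_timeDerivFun (by lia) ht)
        (fun t ht x hx => h.hasDerivWithinAt_timeDerivFun (by lia) ht hx)
        (ih.1 (j + 1) (by lia)) (ih.2 j (by lia))
    · have hsource : ContDiffOn ℝ m (fun p : ℝ × ℝ => β j p.1) (Ioi τ ×ˢ Icc 0 1) :=
        (h.contDiffOn_source (by lia)).comp contDiffOn_fst fun p hp => hp.1
      exact contDiffOn_eval_succ hIoi hIcc (fun t ht => h.hasDerivAt_timeDerivDxFun (by lia) ht)
        (fun t ht x hx => h.hasDerivWithinAt_timeDerivDxFun (by lia) ht hx)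
        (ih.2 (j + 1) (by lia)) ((ih.1 (j + 1) (by lia)).sub hsource)

end IsHeatCoeff

/-! ### Regularity of the solution -/

/-- The `i`-th spatial derivative of the solution `timeDeriv β a 0` of the heat equation. From the
second on, these are read off the equation. -/
def spatialDeriv (β : ℕ → ℝ → ℝ) (a : ℕ → ℝ → ℝ) : ℕ → ℝ → Hsp
  | 0, t => timeDeriv β a 0 t
  | i + 1, t =>
    if Even i then timeDerivDx β a (i / 2) t
    else timeDeriv β a (i / 2 + 1) t - β (i / 2) t • oneHsp

namespace IsHeatCoeff

variable {τ : ℝ} {k : ℕ} {β : ℕ → ℝ → ℝ} {a : ℕ → ℝ → ℝ} {i j : ℕ} {t : ℝ}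

theorem isSpatialWeakDeriv_spatialDeriv (h : IsHeatCoeff τ k β a) (hi : i ≤ 2 * k + 2)
    (ht : t ∈ Ioi τ) : IsSpatialWeakDeriv (spatialDeriv β a i t) (spatialDeriv β a (i + 1) t) := by
  rcases i with - | i
  · simpa [spatialDeriv] using h.isSpatialWeakDeriv_timeDeriv (Nat.zero_le _) ht
  rcases Nat.even_or_odd' i with ⟨m, rfl | rfl⟩
  · have hm : (2 * m + 1) / 2 = m := by lia
    simpa [spatialDeriv, hm, Nat.even_add_one] using
      h.isSpatialWeakDeriv_timeDerivDx (j := m) (by lia) ht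
  · have hm : (2 * m + 1) / 2 = m := by lia
    have hm' : (2 * m + 1 + 1) / 2 = m + 1 := by lia
    simpa [spatialDeriv, hm, hm', Nat.even_add_one, sub_eq_add_neg] using
      (h.isSpatialWeakDeriv_timeDeriv (j := m + 1) (by lia) ht).add
        (isSpatialWeakDeriv_oneHsp.smul (-β m t))

theorem contDiffOn_spatialDeriv (h : IsHeatCoeff τ k β a) (hj : j ≤ k)
    (hi : i ≤ 2 * (k - j) + 3) : ContDiffOn ℝ j (spatialDeriv β a i) (Ioi τ) := by
  rcases i with - | i
  · exact h.contDiffOn_timeDeriv (by lia)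
  by_cases hi' : Even i
  · exact (h.contDiffOn_timeDerivDx (j := i / 2) (m := j) (by lia)).congr
      fun t _ => if_pos hi'
  · have hodd : i % 2 = 1 := Nat.not_even_iff.1 hi'
    exact ((h.contDiffOn_timeDeriv (j := i / 2 + 1) (m := j) (by lia)).sub
      ((h.contDiffOn_source (j := i / 2) (m := j) (by lia)).smul contDiffOn_const)).congr
        fun t _ => if_neg hi'

end IsHeatCoeff

/-- The factorization `u = e • D` of a solution of `u_t = u_xx + b + ω u`, where `e` is a primitive
of `ω` exponentiated and `D` solves the heat equation with sine coefficients `a` and source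
`e⁻¹ b = β 0`. -/
structure IsHeatFactorization (τ : ℝ) (k : ℕ) (u : ℝ → Hsp) (e : ℝ → ℝ) (β a : ℕ → ℝ → ℝ) :
    Prop where
  isHeatCoeff : IsHeatCoeff τ k β a
  memSobolevLocOn_factor : MemSobolevLocOn (k + 2) e (Ioi τ)
  eq_smul : ∀ t ∈ Ioi τ, u t = e t • timeDeriv β a 0 t

/-- Multiplying by `exp (-∫ ω)` removes the term `ω u` from the equation. -/
theorem IsStrongSolution.exists_isHeatFactorization {b ω : ℝ → ℝ} {τ : ℝ} {u : ℝ → Hsp}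
    {k : ℕ} (hsol : IsStrongSolution b ω τ u) (hbc : Continuous b) (hωc : Continuous ω)
    (hb0 : ∀ t, 0 ≤ b t) (hω0 : ∀ t, 0 ≤ ω t) (hb : Wkloc (k + 1) b) (hω : Wkloc (k + 1) ω)
    (hu : NonnegOn u τ) (h0 : 0 < ‖u τ‖) :
    ∃ e β a, IsHeatFactorization τ k u e β a := by
  obtain ⟨r, u', uxx, hsol⟩ := hsol
  set Ω : ℝ → ℝ := fun t => ∫ s in τ..t, ω s
  have hΩ (t : ℝ) : HasDerivAt Ω (ω t) t := hωc.integral_hasStrictDerivAt τ t |>.hasDerivAt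
  set e : ℝ → ℝ := fun t => Real.exp (Ω t)
  set f : ℝ → ℝ := fun t => Real.exp (-Ω t)
  have he (t : ℝ) : HasDerivAt e (ω t * e t) t := by simpa only [mul_comm] using (hΩ t).exp
  have hf (t : ℝ) : HasDerivAt f (-ω t * f t) t := by
    rw [mul_comm]
    exact (hΩ t).neg.exp
  have hef (t : ℝ) : e t * f t = 1 := by rw [← Real.exp_add, add_neg_cancel, Real.exp_zero]
  have hb' := (hb.memSobolevLocOn hbc).mono (subset_univ (Ioi τ))
  have hω' := (hω.memSobolevLocOn hωc).mono (subset_univ (Ioi τ))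
  have hf' : MemSobolevLocOn (k + 2) f (Ioi τ) :=
    .of_hasDerivAt_mul_self isOpen_Ioi
      (hω'.continuousLinearMap_comp (-ContinuousLinearMap.id ℝ ℝ)) fun t _ => hf t
  obtain ⟨β, hβ0, hβ, hβmem⟩ := ((hf'.of_succ isOpen_Ioi).smul isOpen_Ioi hb').exists_chain
  set a : ℕ → ℝ → ℝ := fun n t => f t * ⟪u t, toHsp (sineMode n)⟫_ℝ
  have ha : IsHeatCoeff τ k β a :=
    { hasDerivAt := fun n t ht => by
        refine ((hf t).mul
          (hsol.hasDerivAt_inner_sineMode hbc hωc hb0 hω0 hu h0 n ht)).congr_deriv ?_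
        simp only [hβ0, smul_eq_mul, a]
        ring
      bounded := fun t _ => ⟨|f t| * ‖u t‖, fun n => by
        rw [abs_mul]
        gcongr
        exact abs_inner_sineMode_le _ n⟩
      isPrimitiveOn := fun j hj => hβ j (by lia)
      memL2LocOn := hβmem }
  refine ⟨e, β, a, ha, .of_hasDerivAt_mul_self isOpen_Ioi hω' fun t _ => he t, fun t ht => ?_⟩
  refine Hsp_ext_inner_sineMode fun n => ?_
  rw [real_inner_smul_left, inner_right_of_hasSum_smul orthonormal_sineMode
    (ha.hasSum_timeDeriv (Nat.zero_le _) ht), derivCoeff, ← mul_assoc, hef, one_mul]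

namespace IsHeatFactorization

variable {τ : ℝ} {k : ℕ} {u : ℝ → Hsp} {e : ℝ → ℝ} {β a : ℕ → ℝ → ℝ} {j : ℕ} {t : ℝ}

theorem memSobolevLocOn (h : IsHeatFactorization τ k u e β a) :
    MemSobolevLocOn (k + 2) u (Ioi τ) :=
  (h.memSobolevLocOn_factor.smul isOpen_Ioi h.isHeatCoeff.memSobolevLocOn_timeDeriv_zero).congr
    fun t ht => (h.eq_smul t ht).symm

theorem contDiffOn_factor (h : IsHeatFactorization τ k u e β a) :
    ContDiffOn ℝ (k + 1) e (Ioi τ) :=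
  mod_cast h.memSobolevLocOn_factor.contDiffOn isOpen_Ioi

theorem ckIntoV (h : IsHeatFactorization τ k u e β a) : CkIntoV (k + 1) u (Ioi τ) := by
  refine ⟨timeCk_of_contDiffOn isOpen_Ioi (h.memSobolevLocOn.contDiffOn isOpen_Ioi),
    fun t => e t • timeDerivDx β a 0 t, fun t ht => ?_, timeCk_of_contDiffOn isOpen_Ioi ?_⟩
  · rw [h.eq_smul t ht]
    exact (h.isHeatCoeff.isSpatialWeakDeriv_timeDeriv (Nat.zero_le _) ht).smul _
  · exact mod_cast h.contDiffOn_factor.smul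
      (h.isHeatCoeff.contDiffOn_timeDerivDx (m := k + 1) (by lia))

theorem cjIntoHm (h : IsHeatFactorization τ k u e β a) (hj : j ≤ k) :
    CjIntoHm j (2 * (k - j) + 3) u (Ioi τ) := by
  have he : ContDiffOn ℝ j e (Ioi τ) := h.contDiffOn_factor.of_le (by norm_cast; lia)
  set Dx : ℕ → ℝ → Hsp := Function.update (fun i t => e t • spatialDeriv β a i t) 0 u
  have hDx (i : ℕ) (t : ℝ) (ht : t ∈ Ioi τ) : Dx i t = e t • spatialDeriv β a i t := by
    rcases i with - | i
    · exact h.eq_smul t ht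
    · rfl
  refine ⟨Dx, rfl, fun i hi t ht => ?_, fun i hi => timeCk_of_contDiffOn isOpen_Ioi ?_⟩
  · rw [hDx i t ht, hDx (i + 1) t ht]
    exact (h.isHeatCoeff.isSpatialWeakDeriv_spatialDeriv (by lia) ht).smul _
  · exact (he.smul (h.isHeatCoeff.contDiffOn_spatialDeriv hj hi)).congr (hDx i)

theorem eq_toHsp (h : IsHeatFactorization τ k u e β a) (ht : t ∈ Ioi τ) :
    u t = toHsp (e t • timeDerivFun β a 0 t) := by
  rw [map_smul, h.isHeatCoeff.toHsp_timeDerivFun (Nat.zero_le _) ht, h.eq_smul t ht]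

theorem ae_eq_mul_timeDerivFun (h : IsHeatFactorization τ k u e β a) (ht : t ∈ Ioi τ) :
    ∀ᵐ x ∂μ01, e t * timeDerivFun β a 0 t x = u t x := by
  rw [h.eq_toHsp ht]
  filter_upwards [coeFn_toHsp (e t • timeDerivFun β a 0 t)] with x hx
  rw [hx, BoundedContinuousFunction.coe_smul]
  rfl

theorem exists_contDiffOn (h : IsHeatFactorization τ k u e β a) :
    ∃ F : ℝ × ℝ → ℝ, ContDiffOn ℝ (k + 1) F (Ioi τ ×ˢ Icc (0 : ℝ) 1) ∧
      ∀ t ∈ Ioi τ, ∀ᵐ x ∂μ01, F (t, x) = u t x := by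
  refine ⟨fun p => e p.1 * timeDerivFun β a 0 p.1 p.2, ?_, fun t ht => h.ae_eq_mul_timeDerivFun ht⟩
  exact (h.contDiffOn_factor.comp contDiffOn_fst fun p hp => hp.1).mul
    (mod_cast (h.isHeatCoeff.contDiffOn_timeDerivFun_and_timeDerivDxFun (k + 1)).1 0 (by lia))

theorem classicalUtUxx (h : IsHeatFactorization τ k u e β a) : ClassicalUtUxx τ u := by
  have hD := h.isHeatCoeff
  have hcont {g : ℝ → ℝ} (hg : ContinuousOn g (Ioi τ)) :
      ContinuousOn (fun p : ℝ × ℝ => g p.1) (Ioi τ ×ˢ Icc (0 : ℝ) 1) :=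
    hg.comp continuousOn_fst fun p hp => hp.1
  have he := hcont h.contDiffOn_factor.continuousOn
  have hD0 := continuousOn_eval (hD.continuousOn_timeDerivFun (j := 0) (by lia)) (Icc (0 : ℝ) 1)
  have hD1 := continuousOn_eval (hD.continuousOn_timeDerivFun (j := 1) (by lia)) (Icc (0 : ℝ) 1)
  have hederiv : DifferentiableOn ℝ e (Ioi τ) := h.contDiffOn_factor.differentiableOn (by simp)
  refine ⟨fun t x => e t * timeDerivFun β a 0 t x, fun t x => e t * timeDerivDxFun β a 0 t x,
    fun t x => deriv e t * timeDerivFun β a 0 t x + e t * timeDerivFun β a 1 t x,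
    fun t x => e t * (timeDerivFun β a 1 t x - β 0 t), fun t ht => h.ae_eq_mul_timeDerivFun ht,
    fun t ht x _ => ?_, fun t ht x hx => ?_, fun t ht x hx => ?_, ?_, ?_⟩
  · have heval : HasDerivAt (fun s => timeDerivFun β a 0 s x) (timeDerivFun β a 1 t x) t :=
      (BoundedContinuousFunction.evalCLM ℝ x : (ℝ →ᵇ ℝ) →L[ℝ] ℝ).hasFDerivAt.comp_hasDerivAt t
        (hD.hasDerivAt_timeDerivFun (Nat.zero_le _) ht)
    exact (hederiv.differentiableAt (Ioi_mem_nhds ht)).hasDerivAt.mul heval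
  · exact (hD.hasDerivWithinAt_timeDerivFun (Nat.zero_le _) ht hx).const_mul _
  · exact (hD.hasDerivWithinAt_timeDerivDxFun (Nat.zero_le _) ht hx).const_mul _
  · exact ((hcont (h.contDiffOn_factor.continuousOn_deriv_of_isOpen isOpen_Ioi (by simp))).mul
      hD0).add (he.mul hD1)
  · exact he.mul (hD1.sub (hcont (hD.continuousOn_source (Nat.zero_le _))))

end IsHeatFactorization

theorem statement6_general {b ω : ℝ → ℝ} {τ : ℝ} {u : ℝ → Hsp} {k : ℕ}
    (hsol : IsStrongSolution b ω τ u) (hbc : Continuous b) (hωc : Continuous ω)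
    (hb0 : ∀ t, 0 ≤ b t) (hω0 : ∀ t, 0 ≤ ω t) (hb : Wkloc (k + 1) b) (hω : Wkloc (k + 1) ω)
    (hu : NonnegOn u τ) (h0 : 0 < ‖u τ‖) :
    CkIntoV (k + 1) u (Ioi τ) ∧
    (∀ j ≤ k, CjIntoHm j (2 * (k - j) + 3) u (Ioi τ)) ∧
    HasL2locTimeDerivChain (k + 2) u τ ∧
    ClassicalUtUxx τ u ∧
    ∃ F : ℝ × ℝ → ℝ, ContDiffOn ℝ (k + 1) F (Ioi τ ×ˢ Icc (0 : ℝ) 1) ∧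
      ∀ t ∈ Ioi τ, ∀ᵐ x ∂μ01, F (t, x) = u t x := by
  obtain ⟨e, β, a, h⟩ := hsol.exists_isHeatFactorization hbc hωc hb0 hω0 hb hω hu h0
  exact ⟨h.ckIntoV, fun j hj => h.cjIntoHm hj, h.memSobolevLocOn.hasL2locTimeDerivChain,
    h.classicalUtUxx, h.exists_contDiffOn⟩

/-- regularity of the unique non-negative solution when
`b, ω ∈ W^{1,2}_loc(ℝ)` (resp. `W^{k+1,2}_loc(ℝ)`). -/
theorem statement6
    (b ω : ℝ → ℝ) (b0 b1 ω0 ω1 τ : ℝ) (hC : Cond1 b ω b0 b1 ω0 ω1)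
    (hb : Wkloc 1 b) (hω : Wkloc 1 ω)
    (uτ : Hsp) (huτ0 : ∀ᵐ x ∂μ01, 0 ≤ uτ x) (huτpos : 0 < ‖uτ‖)
    (u : ℝ → Hsp)
    (hsol : IsStrongSolution b ω τ u) (hinit : u τ = uτ) (hnneg : NonnegOn u τ) :
    (CjIntoHm 0 3 u (Ioi τ) ∧
     CkIntoV 1 u (Ioi τ) ∧
     HasL2locTimeDerivChain 2 u τ ∧
     ClassicalUtUxx τ u) ∧
    ∀ k : ℕ, 1 ≤ k → Wkloc (k + 1) b → Wkloc (k + 1) ω →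
      CkIntoV (k + 1) u (Ioi τ) ∧
      (∀ j ≤ k, CjIntoHm j (2 * (k - j) + 3) u (Ioi τ)) ∧
      HasL2locTimeDerivChain (k + 2) u τ ∧
      ∃ F : ℝ × ℝ → ℝ, ContDiffOn ℝ (k + 1) F (Ioi τ ×ˢ Icc (0:ℝ) 1) ∧
        ∀ t ∈ Ioi τ, ∀ᵐ x ∂μ01, F (t, x) = u t x := by
  have regularity {k : ℕ} := statement6_general (k := k) hsol hC.contb hC.contω
    (fun t => hC.b0pos.le.trans (hC.blb t)) (fun t => hC.ω0nonneg.trans (hC.ωlb t))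
  have h0 : 0 < ‖u τ‖ := hinit ▸ huτpos
  obtain ⟨hV, hH, hL2, hclassical, -⟩ := regularity hb hω hnneg h0
  refine ⟨⟨hH 0 le_rfl, hV, hL2, hclassical⟩, fun k _ hbk hωk => ?_⟩
  obtain ⟨hV, hH, hL2, -, hF⟩ := regularity hbk hωk hnneg h0
  exact ⟨hV, hH, hL2, hF⟩

end
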